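/- arXiv:2203.10572 — 2 statements merged into one kernel-verified Lean document; each statement's English description precedes it below -/
import Mathlib

section
/- Let G be a discrete subgroup of U(2,1) and suppose that its limit set L(G) equals the image of a C² regular knot γ in ∂H²_ℂ. Then the image of γ is a chain or an ℝ-circle. -/
/-!
Write `⟨·,·⟩` for the form and identify the knot with its cone of null vectors, which is invariant
under `G` because limit sets are.

*Loxodromic elements.* Near a limit point `[x]` suitable elements of `G`, rescaled by `r n → 0`,
converge to a rank one map `y ↦ ⟨y, b⟩ x` with `b` null (`exists_contracts`). Since the knot has two
distinct points, some `g ∈ G` has `|tr g| > 3` (`exists_large_trace`), hence null eigenvectors `a`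
(attracting) and `b` (repelling) and a unit eigenvector `c` orthogonal to both (`exists_frame`). In
the chart `[a + z c + w b]`, where null vectors satisfy `2 Re w + |z|² = 0`, the element `g` acts
by `(z, w) ↦ ((m / l) z, |l|⁻² w)` with `|m / l| = |l|⁻¹ < 1`: the orbit of every point of the knot
other than `[b]` runs into `[a]`, where the knot is differentiable.

*Transversal case.* If the knot is not tangent to the contact distribution at `[a]` for some such
`g`, then `z = O(w)` along the knot near `[a]`, while `z` decays like `|l|⁻ⁿ` and `w` like `|l|⁻²ⁿ`
along orbits. Hence `z = 0` on the whole knot, which lies in the chain polar to `c`. It fills the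
chain, since `w` takes all small imaginary values and the knot is `g`-invariant
(`transversal_chain`).

*Legendrian case.* Otherwise the knot is tangent to the contact distribution at the attracting
fixed points of all conjugates of `g`. These are dense by the contraction property, so the knot is
Legendrian (`legendrian_of_nontransversal`). After rephasing `c` the derivative of `z` at `[a]` is
real, so `Im z = o(z)` along the knot; comparing with orbits, `z` is real on the whole knot
(`legendrian_z_real`). The Legendrian equation `w' = -z' conj z` then makes `Im w` vanish near `[a]`,
hence everywhere (`legendrian_w_real`), and `w = -z² / 2`. Again all real `z` occur, so the knot is
the ℝ-circle of real combinations of `c`, `(a + b) / √2`, `(a - b) / √2` (`legendrian_rcircle`).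
-/

open Complex Matrix ComplexConjugate

noncomputable section

/-- ℂ³, modeled as functions `Fin 3 → ℂ`. -/
abbrev C3 := Fin 3 → ℂ

/-- The ball-model Hermitian form of signature (2,1):
`⟨z,w⟩₁ = z₁ conj w₁ + z₂ conj w₂ − z₃ conj w₃`. -/
def herm1 (z w : C3) : ℂ :=
  z 0 * conj (w 0) + z 1 * conj (w 1) - z 2 * conj (w 2)

/-- The complex projective plane `ℙ²_ℂ`. -/
abbrev PC2 := Projectivization ℂ C3

instance : TopologicalSpace PC2 :=
  inferInstanceAs (TopologicalSpace (Quotient _))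

/-- The projective point `[z]` of a vector `z` (junk value when `z = 0`). -/
def projOf (z : C3) : PC2 :=
  if h : z = 0 then Projectivization.mk ℂ (fun _ => 1)
    (by intro h0; simpa using congrFun h0 0)
  else Projectivization.mk ℂ z h

/-- The boundary `∂H²_ℂ` of the complex hyperbolic plane:
classes of nonzero null vectors. -/
def boundaryH : Set PC2 :=
  { p | ∃ z : C3, z ≠ 0 ∧ herm1 z z = 0 ∧ p = projOf z }

/-- The group `U(2,1)` of invertible matrices preserving the Hermitian form. -/
def U21 : Set (Matrix (Fin 3) (Fin 3) ℂ) :=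
  { g | IsUnit g.det ∧ ∀ z w : C3, herm1 (g.mulVec z) (g.mulVec w) = herm1 z w }

/-- The chain polar to `w`: `{[z] ∈ ∂H²_ℂ : ⟨z,w⟩₁ = 0}`. -/
def chainOf (w : C3) : Set PC2 :=
  { p | ∃ z : C3, z ≠ 0 ∧ herm1 z z = 0 ∧ herm1 z w = 0 ∧ p = projOf z }

/-- A chain is the polar chain of some positive vector `w`. -/
def IsChainSet (C : Set PC2) : Prop :=
  ∃ w : C3, 0 < (herm1 w w).re ∧ (herm1 w w).im = 0 ∧ C = chainOf w

/-- The canonical ℝ-circle `ℙ²_ℝ ∩ ∂H²_ℂ`. -/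
def canonicalRCircle : Set PC2 :=
  { p | ∃ x : Fin 3 → ℝ, (fun i => (x i : ℂ)) ≠ 0 ∧
      herm1 (fun i => (x i : ℂ)) (fun i => (x i : ℂ)) = 0 ∧
      p = projOf (fun i => (x i : ℂ)) }

/-- The image of a set of projective points under the projective action of a matrix. -/
def mapSet (g : Matrix (Fin 3) (Fin 3) ℂ) (S : Set PC2) : Set PC2 :=
  { p | ∃ z : C3, z ≠ 0 ∧ projOf z ∈ S ∧ p = projOf (g.mulVec z) }

/-- An ℝ-circle: the image of the canonical ℝ-circle under some element of `U(2,1)`. -/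
def IsRCircleSet (C : Set PC2) : Prop :=
  ∃ g ∈ U21, C = mapSet g canonicalRCircle

/-- `γ : ℝ → ℙ²_ℂ` is a `C^k` regular knot in `∂H²_ℂ` with lift `v`:
`γ` is 1-periodic, injective on `[0,1)`, and `v` is a nowhere-vanishing `C^k`
lift consisting of null vectors with `v t`, `v' t` linearly independent. -/
structure IsRegularKnot (k : ℕ) (γ : ℝ → PC2) (v : ℝ → C3) : Prop where
  periodic : ∀ t, γ (t + 1) = γ t
  injOn : ∀ s t : ℝ, 0 ≤ s → s < 1 → 0 ≤ t → t < 1 → γ s = γ t → s = t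
  smooth : ContDiff ℝ k v
  nonzero : ∀ t, v t ≠ 0
  liftEq : ∀ t, γ t = projOf (v t)
  isNull : ∀ t, herm1 (v t) (v t) = 0
  regular : ∀ t, LinearIndependent ℂ ![v t, deriv v t]

/-- `G` is a discrete subgroup of `U(2,1)`: a subgroup of `U(2,1)` that is a
discrete subset of the space of 3×3 complex matrices. -/
structure IsDiscreteSubgroup (G : Set (Matrix (Fin 3) (Fin 3) ℂ)) : Prop where
  subset : G ⊆ U21
  one_mem : (1 : Matrix (Fin 3) (Fin 3) ℂ) ∈ G
  mul_mem : ∀ g ∈ G, ∀ h ∈ G, g * h ∈ G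
  inv_mem : ∀ g ∈ G, g⁻¹ ∈ G
  discrete : ∀ g ∈ G, ∃ U : Set (Matrix (Fin 3) (Fin 3) ℂ), IsOpen U ∧ U ∩ G = {g}

/-- The orbit of `[v₀]` under the projective action of `G`. -/
def projOrbit (G : Set (Matrix (Fin 3) (Fin 3) ℂ)) (v₀ : C3) : Set PC2 :=
  { p | ∃ g ∈ G, p = projOf (g.mulVec v₀) }

/-- The limit set of `G` relative to the base point `[v₀]`: the set of
cluster (accumulation) points of the orbit of `[v₀]` in `ℙ²_ℂ`. -/
def limitSet (G : Set (Matrix (Fin 3) (Fin 3) ℂ)) (v₀ : C3) : Set PC2 :=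
  { p | AccPt p (Filter.principal (projOrbit G v₀)) }

namespace KnotLimit

lemma herm1_add_left (x y z : C3) : herm1 (x + y) z = herm1 x z + herm1 y z := by
  simp [herm1]; ring

lemma herm1_sub_left (x y z : C3) : herm1 (x - y) z = herm1 x z - herm1 y z := by
  simp [herm1]; ring

lemma herm1_smul_left (k : ℂ) (x z : C3) : herm1 (k • x) z = k * herm1 x z := by
  simp [herm1]; ring

lemma herm1_add_right (x y z : C3) : herm1 x (y + z) = herm1 x y + herm1 x z := by
  simp [herm1]; ring

lemma herm1_sub_right (x y z : C3) : herm1 x (y - z) = herm1 x y - herm1 x z := by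
  simp [herm1]; ring

lemma herm1_smul_right (k : ℂ) (x z : C3) : herm1 x (k • z) = conj k * herm1 x z := by
  simp [herm1]; ring

lemma herm1_conj (x y : C3) : conj (herm1 x y) = herm1 y x := by
  simp [herm1]; ring

lemma herm1_zero_left (x : C3) : herm1 0 x = 0 := by simp [herm1]

lemma herm1_zero_right (x : C3) : herm1 x 0 = 0 := by simp [herm1]

lemma herm1_symm_zero {x y : C3} (h : herm1 x y = 0) : herm1 y x = 0 := by
  rw [← herm1_conj, h, map_zero]

lemma continuous_herm1 : Continuous fun p : C3 × C3 => herm1 p.1 p.2 := by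
  unfold herm1
  fun_prop

lemma herm1_nondeg {x : C3} (h : ∀ y, herm1 x y = 0) : x = 0 := by
  have h0 := h (Pi.single 0 1)
  have h1 := h (Pi.single 1 1)
  have h2 := h (Pi.single 2 1)
  simp [herm1] at h0 h1 h2
  ext i; fin_cases i <;> simp [h0, h1, h2]

/-- The last coordinate of a nonzero null vector does not vanish. -/
lemma null_two_ne {x : C3} (hx : x ≠ 0) (h : herm1 x x = 0) : x 2 ≠ 0 := by
  intro h2
  apply hx
  have := congrArg Complex.re h
  simp [herm1, h2] at this
  have e0 : normSq (x 0) = 0 := by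
    have := normSq_nonneg (x 0); have := normSq_nonneg (x 1)
    simp only [normSq_apply] at *; linarith
  have e1 : normSq (x 1) = 0 := by
    have := normSq_nonneg (x 0); have := normSq_nonneg (x 1)
    simp only [normSq_apply] at *; linarith
  rw [normSq_eq_zero] at e0 e1
  ext i; fin_cases i <;> simp [e0, e1, h2]

/-- Subtracting the right multiple of a null vector `x` from a vector orthogonal to `x` kills the
last coordinate without changing the norm. -/
lemma orth_null_aux {x y : C3} (hx : x ≠ 0) (hn : herm1 x x = 0) (ho : herm1 y x = 0) :
    herm1 y y = (normSq ((y - (y 2 / x 2) • x) 0) : ℂ) + normSq ((y - (y 2 / x 2) • x) 1) := by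
  have h2 := null_two_ne hx hn
  set k := y 2 / x 2
  have e : herm1 y y = herm1 (y - k • x) (y - k • x) := by
    simp [herm1_sub_left, herm1_sub_right, herm1_smul_left, herm1_smul_right, hn, ho,
      herm1_symm_zero ho]
  have z2 : (y - k • x) 2 = 0 := by
    simp [k, h2]
  rw [e, herm1, z2, ← mul_conj, ← mul_conj]
  simp

/-- The orthogonal complement of a null vector is positive semidefinite. -/
lemma orth_null_nonneg {x y : C3} (hx : x ≠ 0) (hn : herm1 x x = 0) (ho : herm1 y x = 0) :
    0 ≤ (herm1 y y).re := by
  rw [orth_null_aux hx hn ho]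
  simp only [add_re, ofReal_re]
  exact add_nonneg (normSq_nonneg _) (normSq_nonneg _)

/-- Orthogonal null vectors are proportional: the form has Witt index one. -/
lemma null_orth_parallel {x y : C3} (hx : x ≠ 0) (hn : herm1 x x = 0) (hy : herm1 y y = 0)
    (ho : herm1 y x = 0) : ∃ k : ℂ, y = k • x := by
  have h2 := null_two_ne hx hn
  have := orth_null_aux hx hn ho
  rw [hy] at this
  refine ⟨y 2 / x 2, ?_⟩
  have z2 : (y - (y 2 / x 2) • x) 2 = 0 := by simp [h2]
  rw [← sub_eq_zero]
  set d := y - (y 2 / x 2) • x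
  have h3 : normSq (d 0) + normSq (d 1) = 0 := by exact_mod_cast this.symm
  have e0 : normSq (d 0) = 0 := by linarith [normSq_nonneg (d 0), normSq_nonneg (d 1)]
  have e1 : normSq (d 1) = 0 := by linarith [normSq_nonneg (d 0), normSq_nonneg (d 1)]
  rw [normSq_eq_zero] at e0 e1
  ext i; fin_cases i <;> simp [e0, e1, z2]

lemma neg_not_orth {v₀ b : C3} (hv : (herm1 v₀ v₀).re < 0) (hb : b ≠ 0) (hn : herm1 b b = 0) :
    herm1 v₀ b ≠ 0 := fun h => absurd (orth_null_nonneg hb hn h) (not_le.2 hv)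

/-! ### Unitary matrices of signature (2,1) -/

lemma U21.inv_mulVec {g : Matrix (Fin 3) (Fin 3) ℂ} (hg : g ∈ U21) (x : C3) :
    g⁻¹ *ᵥ (g *ᵥ x) = x := by
  rw [mulVec_mulVec, nonsing_inv_mul _ hg.1, one_mulVec]

lemma U21.mulVec_inv {g : Matrix (Fin 3) (Fin 3) ℂ} (hg : g ∈ U21) (x : C3) :
    g *ᵥ (g⁻¹ *ᵥ x) = x := by
  rw [mulVec_mulVec, mul_nonsing_inv _ hg.1, one_mulVec]

lemma U21.inv_mem {g : Matrix (Fin 3) (Fin 3) ℂ} (hg : g ∈ U21) : g⁻¹ ∈ U21 := by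
  refine ⟨isUnit_nonsing_inv_det _ hg.1, fun z w => ?_⟩
  rw [← hg.2, U21.mulVec_inv hg, U21.mulVec_inv hg]

lemma U21.adj {g : Matrix (Fin 3) (Fin 3) ℂ} (hg : g ∈ U21) (x y : C3) :
    herm1 (g *ᵥ x) y = herm1 x (g⁻¹ *ᵥ y) := by
  conv_lhs => rw [← U21.mulVec_inv hg y]
  exact hg.2 _ _

lemma U21.ne_zero {g : Matrix (Fin 3) (Fin 3) ℂ} (hg : g ∈ U21) {x : C3} (hx : x ≠ 0) :
    g *ᵥ x ≠ 0 := by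
  intro h
  apply hx
  rw [← U21.inv_mulVec hg x, h, mulVec_zero]

/-- A matrix preserving the form is automatically invertible. -/
lemma mem_U21_of_herm {g : Matrix (Fin 3) (Fin 3) ℂ}
    (h : ∀ z w : C3, herm1 (g *ᵥ z) (g *ᵥ w) = herm1 z w) : g ∈ U21 := by
  refine ⟨?_, h⟩
  rw [isUnit_iff_ne_zero]
  intro h0
  obtain ⟨x, hx, hx0⟩ := Matrix.exists_mulVec_eq_zero_iff.2 h0
  exact hx (herm1_nondeg fun y => by rw [← h, hx0, herm1_zero_left])

lemma U21.trace_inv {g : Matrix (Fin 3) (Fin 3) ℂ} (hg : g ∈ U21) :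
    g⁻¹.trace = conj g.trace := by
  have key : ∀ i, g⁻¹ i i = conj (g i i) := by
    intro i
    have := U21.adj hg (Pi.single i 1) (Pi.single i 1)
    rw [← herm1_conj (g⁻¹ *ᵥ _)] at this
    fin_cases i <;> simp [herm1] at this <;> simp [this]
  simp [Matrix.trace, key]

/-- Otherwise all three eigenvalues would lie in the closed unit disc. -/
lemma exists_expanding {g : Matrix (Fin 3) (Fin 3) ℂ} (ht : 3 < ‖g.trace‖) :
    ∃ (l : ℂ) (a : C3), 1 < ‖l‖ ∧ a ≠ 0 ∧ g *ᵥ a = l • a := by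
  by_contra! hcon
  have hroot : ∀ l ∈ g.charpoly.roots, ‖l‖ ≤ 1 := by
    intro l hl
    by_contra! h1
    have hev : Module.End.HasEigenvalue (Matrix.toLin' g) l := by
      rw [Module.End.hasEigenvalue_iff_isRoot_charpoly]
      have := (Polynomial.mem_roots'.1 hl).2
      simpa using this
    obtain ⟨a, ha⟩ := hev.exists_hasEigenvector
    exact hcon l a h1 ha.2 (by simpa using ha.apply_eq_smul)
  have hc : g.charpoly.roots.card ≤ 3 := by
    simpa using Polynomial.card_roots' g.charpoly
  have : ‖g.trace‖ ≤ 3 := by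
    rw [Matrix.trace_eq_sum_roots_charpoly]
    calc ‖g.charpoly.roots.sum‖ ≤ (g.charpoly.roots.map norm).sum := by
          exact norm_multiset_sum_le _
      _ ≤ Multiset.card (g.charpoly.roots.map norm) • (1 : ℝ) := by
          apply Multiset.sum_le_card_nsmul
          intro x hx
          obtain ⟨l, hl, rfl⟩ := Multiset.mem_map.1 hx
          exact hroot l hl
      _ ≤ 3 := by
          simp only [Multiset.card_map, nsmul_eq_mul, mul_one]
          exact_mod_cast hc
  linarith

/-! ### Projective topology and invariance of the limit set -/

lemma projOf_of_ne {x : C3} (hx : x ≠ 0) : projOf x = Projectivization.mk ℂ x hx := by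
  simp [projOf, hx]

lemma projOf_eq_iff {x y : C3} (hx : x ≠ 0) (hy : y ≠ 0) :
    projOf x = projOf y ↔ ∃ k : ℂ, x = k • y := by
  rw [projOf_of_ne hx, projOf_of_ne hy, Projectivization.mk_eq_mk_iff']
  constructor <;> rintro ⟨k, hk⟩ <;> exact ⟨k, hk.symm⟩

lemma projOf_smul {x : C3} (hx : x ≠ 0) {k : ℂ} (hk : k ≠ 0) : projOf (k • x) = projOf x :=
  (projOf_eq_iff (smul_ne_zero hk hx) hx).2 ⟨k, rfl⟩

lemma continuous_mk : Continuous (fun y : {y : C3 // y ≠ 0} => (Projectivization.mk ℂ y.1 y.2 : PC2)) :=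
  continuous_quotient_mk'

/-- The orbit of `[v₀]` contains points that are almost orthogonal to any of its limit points. -/
lemma limit_approx {G : Set (Matrix (Fin 3) (Fin 3) ℂ)} (hG : G ⊆ U21) {v₀ : C3} (hv : v₀ ≠ 0)
    {x : C3} (hx : x ≠ 0) (hn : herm1 x x = 0) (hl : projOf x ∈ limitSet G v₀)
    {ε : ℝ} (hε : 0 < ε) : ∃ g ∈ G, ‖herm1 (g *ᵥ v₀) x‖ < ε * ‖g *ᵥ v₀‖ := by
  let W : Set {y : C3 // y ≠ 0} := {y | ‖herm1 y.1 x‖ < ε * ‖y.1‖}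
  let U : Set PC2 := (fun y : {y : C3 // y ≠ 0} => (Projectivization.mk ℂ y.1 y.2 : PC2)) '' W
  have hpre : (fun y : {y : C3 // y ≠ 0} => (Projectivization.mk ℂ y.1 y.2 : PC2)) ⁻¹' U = W := by
    ext y
    constructor
    · rintro ⟨z, hz, hzy⟩
      obtain ⟨k, hk⟩ := (Projectivization.mk_eq_mk_iff' ℂ _ _ _ _).1 hzy
      have hk0 : k ≠ 0 := by
        rintro rfl
        exact z.2 (by rw [← hk, zero_smul])
      simp only [W, Set.mem_ofPred_eq, ← hk, herm1_smul_left, norm_mul, norm_smul] at hz ⊢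
      have := norm_pos_iff.2 hk0
      have h2 : ‖k‖ * ‖herm1 y.1 x‖ < ‖k‖ * (ε * ‖y.1‖) := by linarith
      exact lt_of_mul_lt_mul_left h2 this.le
    · intro hy
      exact ⟨y, hy, rfl⟩
  have hWo : IsOpen W := by
    apply isOpen_lt
    · have : Continuous fun y : {y : C3 // y ≠ 0} => herm1 y.1 x :=
        continuous_herm1.comp (continuous_subtype_val.prodMk continuous_const)
      exact this.norm
    · exact continuous_const.mul continuous_subtype_val.norm
  have hUo : IsOpen U := isOpen_coinduced.2 (by exact hpre ▸ hWo)
  have hxU : projOf x ∈ U := by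
    refine ⟨⟨x, hx⟩, ?_, (projOf_of_ne hx).symm⟩
    simp only [W, Set.mem_ofPred_eq, hn, norm_zero]
    exact mul_pos hε (norm_pos_iff.2 hx)
  obtain ⟨p, ⟨hpU, g, hg, rfl⟩, -⟩ := accPt_iff_nhds.1 hl U (hUo.mem_nhds hxU)
  refine ⟨g, hg, ?_⟩
  have hne := U21.ne_zero (hG hg) hv
  rw [projOf_of_ne hne] at hpU
  have : (⟨g *ᵥ v₀, hne⟩ : {y : C3 // y ≠ 0}) ∈ W := by
    rw [← hpre]; exact hpU
  exact this

lemma limitSet_invariant {G : Set (Matrix (Fin 3) (Fin 3) ℂ)} (hG : IsDiscreteSubgroup G)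
    {v₀ : C3} (hv : v₀ ≠ 0) {h : Matrix (Fin 3) (Fin 3) ℂ} (hh : h ∈ G)
    {x : C3} (hx : x ≠ 0) (hl : projOf x ∈ limitSet G v₀) : projOf (h *ᵥ x) ∈ limitSet G v₀ := by
  have hU := hG.subset hh
  have hinj : Function.Injective (Matrix.toLin' h) := by
    intro y z hyz
    rw [← U21.inv_mulVec hU y, ← U21.inv_mulVec hU z]
    simp only [Matrix.toLin'_apply] at hyz
    rw [hyz]
  let F : PC2 → PC2 := Projectivization.map (Matrix.toLin' h) hinj
  have hF : ∀ y : C3, y ≠ 0 → F (projOf y) = projOf (h *ᵥ y) := by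
    intro y hy
    rw [projOf_of_ne hy, projOf_of_ne (U21.ne_zero hU hy)]
    rfl
  have hFinj : Function.Injective F := Projectivization.map_injective _ _
  have hFc : Continuous F := by
    refine continuous_coinduced_dom.2 ?_
    have : Continuous fun y : {y : C3 // y ≠ 0} =>
        (⟨h *ᵥ y.1, U21.ne_zero hU y.2⟩ : {y : C3 // y ≠ 0}) := by
      refine Continuous.subtype_mk ?_ _
      exact Continuous.matrix_mulVec continuous_const continuous_subtype_val
    exact continuous_mk.comp this
  rw [limitSet, Set.mem_ofPred_eq, accPt_iff_nhds] at hl ⊢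
  intro U hUn
  rw [← hF x hx] at hUn ⊢
  obtain ⟨y, ⟨hyU, g, hg, rfl⟩, hne⟩ := hl _ (hFc.continuousAt hUn)
  refine ⟨F (projOf (g *ᵥ v₀)), ⟨hyU, h * g, hG.mul_mem h hh g hg, ?_⟩, hFinj.ne hne⟩
  rw [hF _ (U21.ne_zero (hG.subset hg) hv), mulVec_mulVec]

/-- The cone over a subset of the projective plane. -/
def cone (S : Set PC2) : Set C3 := {x | x ≠ 0 ∧ projOf x ∈ S}

lemma cone_smul {S : Set PC2} {x : C3} (hx : x ∈ cone S) {k : ℂ} (hk : k ≠ 0) :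
    k • x ∈ cone S :=
  ⟨smul_ne_zero hk hx.1, by rw [projOf_smul hx.1 hk]; exact hx.2⟩

section Knot

variable {k : ℕ} {γ : ℝ → PC2} {v : ℝ → C3}

lemma mem_cone_iff (hγ : IsRegularKnot k γ v) {x : C3} :
    x ∈ cone (Set.range γ) ↔ x ≠ 0 ∧ herm1 x x = 0 ∧ ∃ t, herm1 x (v t) = 0 := by
  constructor
  · rintro ⟨hx, t, ht⟩
    rw [hγ.liftEq, eq_comm, projOf_eq_iff hx (hγ.nonzero t)] at ht
    obtain ⟨c, rfl⟩ := ht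
    refine ⟨hx, ?_, t, ?_⟩ <;> simp [herm1_smul_left, herm1_smul_right, hγ.isNull]
  · rintro ⟨hx, hn, t, ht⟩
    refine ⟨hx, t, ?_⟩
    rw [hγ.liftEq, eq_comm, projOf_eq_iff hx (hγ.nonzero t)]
    exact null_orth_parallel (hγ.nonzero t) (hγ.isNull t) hn ht

lemma knot_int_periodic (hγ : IsRegularKnot k γ v) (t : ℝ) (n : ℤ) : γ (t + n) = γ t := by
  have : Function.Periodic γ 1 := hγ.periodic
  simpa using this.int_mul n t

lemma orth_v_iff (hγ : IsRegularKnot k γ v) (s t : ℝ) :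
    herm1 (v s) (v t) = 0 ↔ γ s = γ t := by
  rw [hγ.liftEq, hγ.liftEq, projOf_eq_iff (hγ.nonzero s) (hγ.nonzero t)]
  constructor
  · exact null_orth_parallel (hγ.nonzero t) (hγ.isNull t) (hγ.isNull s)
  · rintro ⟨c, hc⟩
    rw [hc, herm1_smul_left, hγ.isNull, mul_zero]

lemma knot_inj (hγ : IsRegularKnot k γ v) {s t : ℝ} (h : γ s = γ t) (hst : |s - t| < 1) :
    s = t := by
  have e : ∀ s, γ s = γ (Int.fract s) := fun s => by
    have := knot_int_periodic hγ (Int.fract s) ⌊s⌋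
    rw [Int.fract_add_floor] at this
    exact this
  rw [e s, e t] at h
  have h2 := hγ.injOn _ _ (Int.fract_nonneg s) (Int.fract_lt_one s) (Int.fract_nonneg t)
    (Int.fract_lt_one t) h
  obtain ⟨n, hn⟩ := Int.fract_eq_fract.1 h2
  rw [hn] at hst
  have : n = 0 := by
    have : |n| < 1 := by exact_mod_cast hst
    exact Int.abs_lt_one_iff.1 this
  rw [this] at hn
  push_cast at hn
  linarith

lemma exists_param (hγ : IsRegularKnot k γ v) {x : C3} (hx : x ∈ cone (Set.range γ)) (t₀ : ℝ) :
    ∃ s ∈ Set.Icc (t₀ - 1 / 2) (t₀ + 1 / 2), herm1 x (v s) = 0 := by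
  obtain ⟨-, -, t, ht⟩ := (mem_cone_iff hγ).1 hx
  obtain ⟨y, hy, hyt⟩ := (show Function.Periodic γ 1 from hγ.periodic).exists_mem_Ico one_pos t
    (t₀ - 1 / 2)
  refine ⟨y, ⟨hy.1, by linarith [hy.2]⟩, ?_⟩
  have h1 : herm1 (v t) (v y) = 0 := (orth_v_iff hγ t y).2 hyt
  obtain ⟨c, hc⟩ := null_orth_parallel (hγ.nonzero t) (hγ.isNull t)
    ((mem_cone_iff hγ).1 hx).2.1 ht
  rw [hc, herm1_smul_left, h1, mul_zero]

lemma continuous_v (hγ : IsRegularKnot k γ v) : Continuous v := hγ.smooth.continuous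

open Filter Topology in
lemma cone_closed (hγ : IsRegularKnot k γ v) {x : ℕ → C3} {y : C3}
    (hx : ∀ n, x n ∈ cone (Set.range γ)) (hy : y ≠ 0) (hlim : Tendsto x atTop (𝓝 y)) :
    y ∈ cone (Set.range γ) := by
  choose s hs hs0 using fun n => exists_param hγ (hx n) 0
  obtain ⟨t, -, φ, hφ, ht⟩ := isCompact_Icc.tendsto_subseq hs
  have hl := hlim.comp hφ.tendsto_atTop
  refine (mem_cone_iff hγ).2 ⟨hy, ?_, t, ?_⟩
  · have := (continuous_herm1.tendsto (y, y)).comp (hlim.prodMk_nhds hlim)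
    refine tendsto_nhds_unique this ?_
    refine tendsto_const_nhds.congr fun n => ?_
    exact ((mem_cone_iff hγ).1 (hx n)).2.1.symm
  · have h1 := ((continuous_v hγ).tendsto t).comp ht
    have := (continuous_herm1.tendsto (y, v t)).comp (hl.prodMk_nhds h1)
    refine tendsto_nhds_unique this ?_
    refine tendsto_const_nhds.congr fun n => ?_
    exact (hs0 (φ n)).symm

open Filter Topology in
/-- The knot is homeomorphic to its image: points of its cone converging to a multiple of `v t₀`
are multiples of `v (s n)` with `s n → t₀`. -/
lemma exists_param_tendsto (hγ : IsRegularKnot k γ v) {x : ℕ → C3} {y : C3} {t₀ : ℝ}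
    (hx : ∀ n, x n ∈ cone (Set.range γ)) (hy : y ≠ 0) (hlim : Tendsto x atTop (𝓝 y))
    (ht₀ : herm1 y (v t₀) = 0) :
    ∃ (s : ℕ → ℝ) (c : ℕ → ℂ), Tendsto s atTop (𝓝 t₀) ∧ (∀ n, c n ≠ 0) ∧
      ∀ n, x n = c n • v (s n) := by
  have hyc := cone_closed hγ hx hy hlim
  choose s hs hs0 using fun n => exists_param hγ (hx n) t₀
  choose c hc using fun n => null_orth_parallel (hγ.nonzero (s n)) (hγ.isNull (s n))
    ((mem_cone_iff hγ).1 (hx n)).2.1 (hs0 n)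
  refine ⟨s, c, ?_, fun n h => (hx n).1 (by rw [hc n, h, zero_smul]), hc⟩
  refine tendsto_of_subseq_tendsto fun ns hns => ?_
  obtain ⟨t, htI, φ, hφ, ht⟩ := isCompact_Icc.tendsto_subseq (fun n => hs (ns n))
  have hl := (hlim.comp hns).comp hφ.tendsto_atTop
  have h1 := ((continuous_v hγ).tendsto t).comp ht
  have h2 := (continuous_herm1.tendsto (y, v t)).comp (hl.prodMk_nhds h1)
  have h3 : herm1 y (v t) = 0 := by
    refine tendsto_nhds_unique h2 ?_
    refine tendsto_const_nhds.congr fun n => ?_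
    exact (hs0 (ns (φ n))).symm
  obtain ⟨d, hd⟩ := null_orth_parallel (hγ.nonzero t₀) (hγ.isNull t₀)
    ((mem_cone_iff hγ).1 hyc).2.1 ht₀
  have hd0 : d ≠ 0 := by
    rintro rfl
    exact hy (by rw [hd, zero_smul])
  rw [hd, herm1_smul_left, mul_eq_zero, or_iff_right hd0, orth_v_iff hγ] at h3
  have : t₀ = t := knot_inj hγ h3 (by
    rw [abs_lt]; constructor <;> linarith [htI.1, htI.2])
  subst this
  exact ⟨φ, ht⟩

end Knot

/-! ### Contracting sequences -/

open Filter Topology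

/-- The matrices `g n` contract, after rescaling by `r n → 0`, to the rank one map
`y ↦ ⟨y, b⟩ x`. -/
def Contracts (g : ℕ → Matrix (Fin 3) (Fin 3) ℂ) (r : ℕ → ℝ) (b x : C3) : Prop :=
  (∀ n, 0 < r n) ∧ Tendsto r atTop (𝓝 0) ∧
    ∀ y, Tendsto (fun n => (r n : ℂ) • (g n *ᵥ y)) atTop (𝓝 (herm1 y b • x))

lemma tendsto_herm1 {x y : ℕ → C3} {a b : C3} (hx : Tendsto x atTop (𝓝 a))
    (hy : Tendsto y atTop (𝓝 b)) : Tendsto (fun n => herm1 (x n) (y n)) atTop (𝓝 (herm1 a b)) := by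
  have := (continuous_herm1.tendsto (a, b)).comp (hx.prodMk_nhds hy)
  exact this

/-- The vector representing a linear functional with respect to the Hermitian form. -/
lemma exists_repr (φ : C3 →ₗ[ℂ] ℂ) : ∃ b : C3, ∀ y, φ y = herm1 y b := by
  refine ⟨![conj (φ (Pi.single 0 1)), conj (φ (Pi.single 1 1)), -conj (φ (Pi.single 2 1))], ?_⟩
  intro y
  have : y = y 0 • Pi.single 0 1 + y 1 • Pi.single 1 1 + y 2 • Pi.single 2 1 := by
    ext i; fin_cases i <;> simp
  conv_lhs => rw [this]
  simp only [map_add, map_smul, smul_eq_mul]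
  simp [herm1]

/-- Every limit point `[x]` is the attracting point of a contracting sequence in `G`. The limit
`A` of the rescaled matrices satisfies `⟨Ay, Az⟩ = ρ² ⟨y, z⟩`, and `A v₀` is orthogonal to the null
vector `x`. As `v₀` is negative, this forces `ρ = 0`, so that the image of `A` is isotropic, hence
a line. -/
lemma exists_contracts {G : Set (Matrix (Fin 3) (Fin 3) ℂ)} (hG : G ⊆ U21) {v₀ : C3}
    (hv₀ : (herm1 v₀ v₀).re < 0) {x : C3} (hx : x ≠ 0) (hn : herm1 x x = 0)
    (hl : projOf x ∈ limitSet G v₀) :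
    ∃ (g : ℕ → Matrix (Fin 3) (Fin 3) ℂ) (r : ℕ → ℝ) (b : C3), (∀ n, g n ∈ G) ∧ b ≠ 0 ∧
      herm1 b b = 0 ∧ Contracts g r b x := by
  have hv : v₀ ≠ 0 := by
    rintro rfl; simp [herm1] at hv₀
  choose g hg hgx using fun n : ℕ => limit_approx hG hv hx hn hl (Nat.one_div_pos_of_nat (n := n))
  let f : ℕ → Fin 3 → Fin 3 → ℂ := fun n i j => g n i j
  let r : ℕ → ℝ := fun n => (1 + ‖f n‖)⁻¹
  have hr0 : ∀ n, 0 < r n := fun n => by positivity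
  have hr1 : ∀ n, ‖(r n : ℂ) • f n‖ + r n = 1 := by
    intro n
    rw [norm_smul, Complex.norm_real, Real.norm_of_nonneg (hr0 n).le]
    have : (1 + ‖f n‖) ≠ 0 := by positivity
    simp only [r]
    field_simp
    ring
  have hmem : ∀ n, ((r n : ℂ) • f n, r n) ∈
      Metric.closedBall (0 : (Fin 3 → Fin 3 → ℂ) × ℝ) 1 := by
    intro n
    rw [mem_closedBall_zero_iff, Prod.norm_mk, Real.norm_of_nonneg (hr0 n).le]
    exact max_le (by linarith [hr1 n, hr0 n]) (by linarith [hr1 n, norm_nonneg ((r n : ℂ) • f n)])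
  obtain ⟨⟨A, ρ⟩, -, φ, hφ, hlim⟩ := (isCompact_closedBall _ _).tendsto_subseq hmem
  rw [nhds_prod_eq] at hlim
  have hA : Tendsto (fun n => (r (φ n) : ℂ) • f (φ n)) atTop (𝓝 A) := hlim.fst
  have hρ : Tendsto (fun n => r (φ n)) atTop (𝓝 ρ) := hlim.snd
  have hAρ : ‖A‖ + ρ = 1 := by
    refine tendsto_nhds_unique (hA.norm.add hρ) ?_
    exact tendsto_const_nhds.congr fun n => (hr1 (φ n)).symm
  -- the limit as a linear map
  let T : C3 →ₗ[ℂ] C3 := Matrix.toLin' (Matrix.of A)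
  have hT : ∀ y, Tendsto (fun n => (r (φ n) : ℂ) • (g (φ n) *ᵥ y)) atTop (𝓝 (T y)) := by
    intro y
    have hc : Continuous fun M : Fin 3 → Fin 3 → ℂ => Matrix.of M *ᵥ y :=
      Continuous.matrix_mulVec continuous_id continuous_const
    refine ((hc.tendsto A).comp hA).congr fun n => ?_
    rw [← Matrix.smul_mulVec]
    rfl
  have hTT : ∀ y z, herm1 (T y) (T z) = (ρ : ℂ) * ρ * herm1 y z := by
    intro y z
    have h2 : Tendsto (fun n => (r (φ n) : ℂ)) atTop (𝓝 (ρ : ℂ)) :=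
      (Complex.continuous_ofReal.tendsto _).comp hρ
    refine tendsto_nhds_unique (tendsto_herm1 (hT y) (hT z)) ?_
    refine ((h2.mul h2).mul_const (herm1 y z)).congr fun n => ?_
    rw [herm1_smul_left, herm1_smul_right, (hG (hg _)).2, Complex.conj_ofReal]
    ring
  have hTx : herm1 (T v₀) x = 0 := by
    have h1 := tendsto_herm1 (hT v₀) (tendsto_const_nhds (x := x))
    have h2 : Tendsto (fun n : ℕ => (1 / ((φ n : ℝ) + 1)) * ‖(r (φ n) : ℂ) • (g (φ n) *ᵥ v₀)‖)
        atTop (𝓝 (0 * ‖T v₀‖)) :=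
      ((tendsto_one_div_add_atTop_nhds_zero_nat).comp hφ.tendsto_atTop).mul (hT v₀).norm
    rw [zero_mul] at h2
    refine tendsto_nhds_unique h1 (squeeze_zero_norm (fun n => ?_) h2)
    rw [herm1_smul_left, norm_mul, norm_smul]
    have := mul_le_mul_of_nonneg_left (hgx (φ n)).le (norm_nonneg (r (φ n) : ℂ))
    linarith
  have hρ0 : ρ = 0 := by
    have h1 := orth_null_nonneg hx hn hTx
    rw [hTT] at h1
    have h2 : ((ρ : ℂ) * ρ * herm1 v₀ v₀).re = ρ ^ 2 * (herm1 v₀ v₀).re := by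
      rw [← Complex.ofReal_mul, Complex.re_ofReal_mul]; ring
    rw [h2] at h1
    by_contra h0
    have : 0 < ρ ^ 2 := by positivity
    nlinarith
  subst hρ0
  have hTT0 : ∀ y z, herm1 (T y) (T z) = 0 := fun y z => by rw [hTT]; simp
  obtain ⟨y₀, hy₀⟩ : ∃ y, T y ≠ 0 := by
    by_contra! h0
    have hA0 : A = 0 := by
      have : Matrix.of A = 0 := Matrix.toLin'.injective (LinearMap.ext fun y => by
        rw [map_zero]; exact h0 y)
      exact this
    rw [hA0] at hAρ
    simp at hAρ
  obtain ⟨a, haT⟩ : ∃ a, T y₀ = a := ⟨_, rfl⟩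
  have han : herm1 a a = 0 := by rw [← haT]; exact hTT0 _ _
  rw [haT] at hy₀
  have hpar : ∀ y, ∃ k : ℂ, T y = k • a := fun y =>
    null_orth_parallel hy₀ han (hTT0 _ _) (by rw [← haT]; exact hTT0 _ _)
  -- `T` has rank one, so it is `y ↦ ⟨y, b⟩ a`
  have ha2 : a 2 ≠ 0 := null_two_ne hy₀ han
  obtain ⟨b, hb⟩ := exists_repr ((a 2)⁻¹ • (LinearMap.proj 2).comp T)
  have hTb : ∀ y, T y = herm1 y b • a := by
    intro y
    obtain ⟨k, hk⟩ := hpar y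
    rw [← hb y, hk]
    congr 1
    simp [hk, mul_comm k, ha2]
  have hb0 : b ≠ 0 := by
    rintro rfl
    apply hy₀
    rw [← haT, hTb, herm1_zero_right, zero_smul]
  have hρC : Tendsto (fun n => (r (φ n) : ℂ)) atTop (𝓝 (0 : ℂ)) := by
    have := (Complex.continuous_ofReal.tendsto 0).comp hρ
    rwa [Complex.ofReal_zero] at this
  -- the inverses contract to `z ↦ ⟨z, a⟩ b`, so `b` is null as well
  have hinv : ∀ z, Tendsto (fun n => (r (φ n) : ℂ) • ((g (φ n))⁻¹ *ᵥ z)) atTop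
      (𝓝 (herm1 z a • b)) := by
    intro z
    have key : ∀ y, Tendsto (fun n => herm1 ((r (φ n) : ℂ) • ((g (φ n))⁻¹ *ᵥ z)) y) atTop
        (𝓝 (herm1 (herm1 z a • b) y)) := by
      intro y
      have h1 := tendsto_herm1 (tendsto_const_nhds (x := z)) (hT y)
      rw [hTb, herm1_smul_right, herm1_conj] at h1
      rw [herm1_smul_left, mul_comm]
      refine h1.congr fun n => ?_
      rw [herm1_smul_left, herm1_smul_right, U21.adj (U21.inv_mem (hG (hg _))), Complex.conj_ofReal,
        Matrix.nonsing_inv_nonsing_inv _ (hG (hg _)).1]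
    rw [tendsto_pi_nhds]
    intro i
    fin_cases i
    · simpa [herm1] using key (Pi.single 0 1)
    · simpa [herm1] using key (Pi.single 1 1)
    · simpa [herm1] using (key (Pi.single 2 1)).neg
  have hbn : herm1 b b = 0 := by
    obtain ⟨z, hz⟩ : ∃ z, herm1 z a ≠ 0 := by
      by_contra! h0
      exact hy₀ (herm1_nondeg fun y => herm1_symm_zero (h0 y))
    have h1 := tendsto_herm1 (hinv z) (hinv z)
    have h2 : Tendsto (fun n => herm1 ((r (φ n) : ℂ) • ((g (φ n))⁻¹ *ᵥ z))
        ((r (φ n) : ℂ) • ((g (φ n))⁻¹ *ᵥ z))) atTop (𝓝 (0 * 0 * herm1 z z)) := by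
      refine ((hρC.mul hρC).mul_const (herm1 z z)).congr fun n => ?_
      rw [herm1_smul_left, herm1_smul_right, (U21.inv_mem (hG (hg _))).2, Complex.conj_ofReal]
      ring
    have h3 := tendsto_nhds_unique h1 h2
    rw [herm1_smul_left, herm1_smul_right] at h3
    simpa [hz] using h3
  have hv0b := neg_not_orth hv₀ hb0 hbn
  have hax : herm1 a x = 0 := by
    rw [hTb, herm1_smul_left] at hTx
    exact (mul_eq_zero.1 hTx).resolve_left hv0b
  obtain ⟨k, hk⟩ := null_orth_parallel hx hn han hax
  have hk0 : k ≠ 0 := by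
    rintro rfl
    exact hy₀ (by rw [hk, zero_smul])
  refine ⟨fun n => g (φ n), fun n => r (φ n), conj k • b, fun n => hg _,
    smul_ne_zero (by simpa using hk0) hb0, ?_, fun n => hr0 _, hρ, fun y => ?_⟩
  · rw [herm1_smul_left, herm1_smul_right, hbn, mul_zero, mul_zero]
  · have h1 := hT y
    rw [hTb, hk, smul_smul] at h1
    rw [herm1_smul_right, Complex.conj_conj, mul_comm]
    exact h1

/-- The rescaled traces converge to the trace `⟨x, b⟩` of the limiting rank one map. -/
lemma Contracts.trace {g : ℕ → Matrix (Fin 3) (Fin 3) ℂ} {r : ℕ → ℝ} {b x : C3}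
    (h : Contracts g r b x) (hbx : herm1 x b ≠ 0) : ∃ n, 3 < ‖(g n).trace‖ := by
  have ht : Tendsto (fun n => (r n : ℂ) * (g n).trace) atTop (𝓝 (herm1 x b)) := by
    have h0 := tendsto_pi_nhds.1 (h.2.2 (Pi.single 0 1)) 0
    have h1 := tendsto_pi_nhds.1 (h.2.2 (Pi.single 1 1)) 1
    have h2 := tendsto_pi_nhds.1 (h.2.2 (Pi.single 2 1)) 2
    have := (h0.add h1).add h2
    convert this using 2
    · simp [Matrix.trace, Fin.sum_univ_three]
      ring
    · simp [herm1]
      ring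
  by_contra! hcon
  have h0 : Tendsto (fun n => (r n : ℂ) * (g n).trace) atTop (𝓝 0) := by
    have : Tendsto (fun n => r n * 3) atTop (𝓝 0) := by simpa using h.2.1.mul_const 3
    refine squeeze_zero_norm (fun n => ?_) this
    rw [norm_mul, Complex.norm_real, Real.norm_of_nonneg (h.1 n).le]
    exact mul_le_mul_of_nonneg_left (hcon n) (h.1 n).le
  exact hbx (tendsto_nhds_unique ht h0)

lemma Contracts.left_mul {g : ℕ → Matrix (Fin 3) (Fin 3) ℂ} {r : ℕ → ℝ} {b x : C3}
    (h : Contracts g r b x) (k : Matrix (Fin 3) (Fin 3) ℂ) :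
    Contracts (fun n => k * g n) r b (k *ᵥ x) := by
  refine ⟨h.1, h.2.1, fun y => ?_⟩
  have hc : Continuous fun z : C3 => k *ᵥ z := Continuous.matrix_mulVec continuous_const continuous_id
  have := (hc.tendsto _).comp (h.2.2 y)
  rw [mulVec_smul] at this
  refine this.congr fun n => ?_
  simp [mulVec_smul, mulVec_mulVec]

/-- A group with two distinct limit points `[x]`, `[x']` contains elements of large trace: the
attracting and repelling points of a contracting sequence can be separated. -/
lemma exists_large_trace {G : Set (Matrix (Fin 3) (Fin 3) ℂ)} (hG : IsDiscreteSubgroup G) {v₀ : C3}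
    (hv₀ : (herm1 v₀ v₀).re < 0) {x x' : C3} (hx : x ≠ 0) (hn : herm1 x x = 0)
    (hx' : x' ≠ 0) (hn' : herm1 x' x' = 0) (hxx' : herm1 x x' ≠ 0)
    (hl : projOf x ∈ limitSet G v₀) (hl' : projOf x' ∈ limitSet G v₀) :
    ∃ g ∈ G, 3 < ‖g.trace‖ := by
  obtain ⟨g, r, b, hg, hb, hbn, hc⟩ := exists_contracts hG.subset hv₀ hx hn hl
  obtain ⟨g', r', b', hg', hb', hbn', hc'⟩ := exists_contracts hG.subset hv₀ hx' hn' hl'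
  by_cases h1 : herm1 x b = 0
  swap
  · obtain ⟨n, hn⟩ := hc.trace h1
    exact ⟨_, hg n, hn⟩
  obtain ⟨k, rfl⟩ := null_orth_parallel hx hn hbn (herm1_symm_zero h1)
  have hk : k ≠ 0 := by
    rintro rfl; simp at hb
  by_cases h2 : herm1 x b' = 0
  · -- here `b'` is proportional to `x`, so it is not orthogonal to `x'`
    obtain ⟨k', rfl⟩ := null_orth_parallel hx hn hbn' (herm1_symm_zero h2)
    have hk' : k' ≠ 0 := by
      rintro rfl; simp at hb'
    obtain ⟨n, hn⟩ := hc'.trace (by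
      rw [herm1_smul_right]
      exact mul_ne_zero (by simpa using hk') fun h => hxx' (herm1_symm_zero h))
    exact ⟨_, hg' n, hn⟩
  · -- some `g' m` moves `x`
    obtain ⟨m, hm⟩ : ∃ m, herm1 (g' m *ᵥ x) (k • x) ≠ 0 := by
      by_contra! h0
      have h3 := tendsto_herm1 (hc'.2.2 x) (tendsto_const_nhds (x := k • x))
      have h4 : herm1 (herm1 x b' • x') (k • x) = 0 := by
        refine tendsto_nhds_unique h3 (tendsto_const_nhds.congr fun n => ?_)
        rw [herm1_smul_left, h0, mul_zero]
      rw [herm1_smul_left, herm1_smul_right] at h4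
      simp only [mul_eq_zero, h2, false_or, map_eq_zero, hk] at h4
      exact hxx' (herm1_symm_zero h4)
    obtain ⟨n, hn⟩ := (hc.left_mul (g' m)).trace hm
    exact ⟨_, hG.mul_mem _ (hg' m) _ (hg n), hn⟩

/-! ### Loxodromic frames -/

/-- A basis `a, c, b` of ℂ³ adapted to a loxodromic `g`: `a` and `b` are null eigenvectors with
`⟨a, b⟩ = 1` (attracting and repelling fixed points), and `c` is a unit eigenvector
spanning the orthogonal complement of `a` and `b`. -/
structure LoxFrame (g : Matrix (Fin 3) (Fin 3) ℂ) (l m : ℂ) (a b c : C3) : Prop where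
  aa : herm1 a a = 0
  bb : herm1 b b = 0
  ab : herm1 a b = 1
  ca : herm1 c a = 0
  cb : herm1 c b = 0
  cc : herm1 c c = 1
  ga : g *ᵥ a = l • a
  gb : g *ᵥ b = (conj l)⁻¹ • b
  gc : g *ᵥ c = m • c
  hl : 1 < ‖l‖
  hm : ‖m‖ = 1

/-- The point with affine coordinates `(z, w)` in the chart centred at `a`. -/
def pt (a b c : C3) (z w : ℂ) : C3 := a + z • c + w • b

lemma frame_expand {a b c : C3} (aa : herm1 a a = 0) (bb : herm1 b b = 0) (ab : herm1 a b = 1)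
    (ca : herm1 c a = 0) (cb : herm1 c b = 0) (cc : herm1 c c = 1) (x : C3) :
    x = herm1 x b • a + herm1 x c • c + herm1 x a • b := by
  have ba : herm1 b a = 1 := by rw [← herm1_conj, ab, map_one]
  have ac := herm1_symm_zero ca
  have bc := herm1_symm_zero cb
  have hli : LinearIndependent ℂ ![a, c, b] := by
    rw [Fintype.linearIndependent_iff]
    intro f hf
    simp only [Fin.sum_univ_three, Matrix.cons_val] at hf
    have e0 := congrArg (fun y => herm1 y b) hf
    have e1 := congrArg (fun y => herm1 y c) hf
    have e2 := congrArg (fun y => herm1 y a) hf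
    simp [herm1_add_left, herm1_smul_left, aa, bb, ab, ca, cb, cc, ba, ac, bc, herm1_zero_left]
      at e0 e1 e2
    intro i
    fin_cases i <;> assumption
  have hsp := hli.span_eq_top_of_card_eq_finrank (by simp)
  have hx : x ∈ Submodule.span ℂ (Set.range ![a, c, b]) := by rw [hsp]; trivial
  obtain ⟨f, rfl⟩ := (Submodule.mem_span_range_iff_exists_fun ℂ).1 hx
  simp only [Fin.sum_univ_three, Matrix.cons_val]
  simp [herm1_add_left, herm1_smul_left, aa, bb, ab, ca, cb, cc, ba, ac, bc]

/-- For `c = J · conj (a × b)` one has `⟨c, c⟩ = |⟨a, b⟩|² - ⟨a, a⟩⟨b, b⟩`, as for a Lorentzian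
cross product. -/
lemma exists_orth_complement {a b : C3} (aa : herm1 a a = 0) (ab : herm1 a b = 1) :
    ∃ c, herm1 c a = 0 ∧ herm1 c b = 0 ∧ herm1 c c = 1 := by
  let c : C3 := ![conj (a 1 * b 2 - a 2 * b 1), conj (a 2 * b 0 - a 0 * b 2),
    -conj (a 0 * b 1 - a 1 * b 0)]
  refine ⟨c, ?_, ?_, ?_⟩
  · simp [c, herm1]; ring
  · simp [c, herm1]; ring
  · have : herm1 c c = herm1 a b * conj (herm1 a b) - herm1 a a * herm1 b b := by
      simp [c, herm1]; ring
    rw [this, aa, ab]; simp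

/-- Eigenvectors with eigenvalue off the unit circle are null. -/
lemma eigen_null {g : Matrix (Fin 3) (Fin 3) ℂ} (hg : g ∈ U21) {l : ℂ} {a : C3} (hl : 1 < ‖l‖)
    (ha : g *ᵥ a = l • a) : herm1 a a = 0 := by
  have h := hg.2 a a
  rw [ha, herm1_smul_left, herm1_smul_right, ← mul_assoc, mul_conj] at h
  have h2 : ((normSq l : ℂ) - 1) * herm1 a a = 0 := by rw [sub_mul, h]; ring
  refine (mul_eq_zero.1 h2).resolve_left fun h3 => ?_
  have h4 : normSq l = 1 := by exact_mod_cast sub_eq_zero.1 h3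
  rw [normSq_eq_norm_sq] at h4
  nlinarith

/-- An element of large trace has expanding eigenvectors for itself and for its inverse; these are
null, independent, and hence not orthogonal. -/
lemma exists_frame {g : Matrix (Fin 3) (Fin 3) ℂ} (hg : g ∈ U21) (ht : 3 < ‖g.trace‖) :
    ∃ l m a b c, LoxFrame g l m a b c := by
  obtain ⟨l, a, hl, ha0, ha⟩ := exists_expanding ht
  obtain ⟨κ, b, hκ, hb0, hb⟩ := exists_expanding (g := g⁻¹) (by
    rw [U21.trace_inv hg, RCLike.norm_conj]; exact ht)
  have han := eigen_null hg hl ha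
  have hbn := eigen_null (U21.inv_mem hg) hκ hb
  have hκ0 : κ ≠ 0 := by rintro rfl; simp at hκ; linarith
  have hl0 : l ≠ 0 := by rintro rfl; simp at hl; linarith
  have hgb : g *ᵥ b = κ⁻¹ • b := by
    have := congrArg (fun y => κ⁻¹ • (g *ᵥ y)) hb
    simp only [U21.mulVec_inv hg, mulVec_smul, smul_smul] at this
    rw [inv_mul_cancel₀ hκ0, one_smul] at this
    exact this.symm
  have hab : herm1 a b ≠ 0 := by
    intro h0
    obtain ⟨k, rfl⟩ := null_orth_parallel ha0 han hbn (herm1_symm_zero h0)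
    have hk : k ≠ 0 := by rintro rfl; simp at hb0
    rw [mulVec_smul, ha, smul_smul, smul_smul] at hgb
    have h1 := smul_left_injective ℂ ha0 hgb
    have h2 : l = κ⁻¹ := mul_left_cancel₀ hk (by rw [h1]; ring)
    rw [h2, norm_inv] at hl
    have := inv_lt_one_of_one_lt₀ hκ
    linarith
  have hlκ : l * conj κ⁻¹ = 1 := by
    have h := hg.2 a b
    rw [ha, hgb, herm1_smul_left, herm1_smul_right, ← mul_assoc] at h
    exact mul_right_cancel₀ hab (by rw [h, one_mul])
  have hκl : κ⁻¹ = (conj l)⁻¹ := by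
    have := congrArg conj hlκ
    simp only [map_mul, conj_conj, map_one] at this
    exact eq_inv_of_mul_eq_one_right this
  -- rescale `b`
  obtain ⟨b', hb', hgb', hb'n⟩ : ∃ b' : C3, herm1 a b' = 1 ∧ g *ᵥ b' = (conj l)⁻¹ • b' ∧
      herm1 b' b' = 0 := by
    refine ⟨(conj (herm1 a b))⁻¹ • b, ?_, ?_, ?_⟩
    · rw [herm1_smul_right, map_inv₀, conj_conj, inv_mul_cancel₀ hab]
    · rw [mulVec_smul, hgb, hκl, smul_comm]
    · rw [herm1_smul_left, herm1_smul_right, hbn, mul_zero, mul_zero]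
  obtain ⟨c, hca, hcb, hcc⟩ := exists_orth_complement han hb'
  have hgca : herm1 (g *ᵥ c) a = 0 := by
    have h := hg.2 c a
    rw [ha, herm1_smul_right, hca] at h
    simpa [hl0] using h
  have hgcb : herm1 (g *ᵥ c) b' = 0 := by
    have h := hg.2 c b'
    rw [hgb', herm1_smul_right, hcb] at h
    simpa [hl0] using h
  have hgc := frame_expand han hb'n hb' hca hcb hcc (g *ᵥ c)
  rw [hgca, hgcb, zero_smul, zero_smul, zero_add, add_zero] at hgc
  refine ⟨l, herm1 (g *ᵥ c) c, a, b', c, han, hb'n, hb', hca, hcb, hcc, ha, hgb', hgc, hl, ?_⟩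
  have h := hg.2 c c
  rw [hgc, herm1_smul_left, herm1_smul_right, hcc, mul_one, mul_conj,
    normSq_eq_norm_sq] at h
  have h2 : ‖herm1 (g *ᵥ c) c‖ ^ 2 = 1 := by exact_mod_cast h
  exact (pow_eq_one_iff_of_nonneg (norm_nonneg _) two_ne_zero).1 h2

namespace LoxFrame

variable {g : Matrix (Fin 3) (Fin 3) ℂ} {l m : ℂ} {a b c : C3}

lemma ba (F : LoxFrame g l m a b c) : herm1 b a = 1 := by rw [← herm1_conj, F.ab, map_one]

lemma ac (F : LoxFrame g l m a b c) : herm1 a c = 0 := herm1_symm_zero F.ca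

lemma bc (F : LoxFrame g l m a b c) : herm1 b c = 0 := herm1_symm_zero F.cb

lemma a_ne (F : LoxFrame g l m a b c) : a ≠ 0 := by
  rintro rfl
  simpa [herm1_zero_left] using F.ab

lemma b_ne (F : LoxFrame g l m a b c) : b ≠ 0 := by
  rintro rfl
  simpa [herm1_zero_right] using F.ab

lemma l_ne (F : LoxFrame g l m a b c) : l ≠ 0 := by
  rintro rfl
  have := F.hl
  simp at this
  linarith

lemma m_ne (F : LoxFrame g l m a b c) : m ≠ 0 := by
  rintro rfl
  simpa using F.hm

lemma expand (F : LoxFrame g l m a b c) (x : C3) :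
    x = herm1 x b • a + herm1 x c • c + herm1 x a • b :=
  frame_expand F.aa F.bb F.ab F.ca F.cb F.cc x

/-- The form in frame coordinates. -/
lemma herm_expand (F : LoxFrame g l m a b c) (x y : C3) :
    herm1 x y = herm1 x b * conj (herm1 y a) + herm1 x c * conj (herm1 y c) +
      herm1 x a * conj (herm1 y b) := by
  conv_lhs => rw [F.expand x]
  simp [herm1_add_left, herm1_smul_left, herm1_conj]

lemma inv (F : LoxFrame g l m a b c) (hg : g ∈ U21) : LoxFrame g⁻¹ (conj l) m⁻¹ b a c := by
  have hl := F.l_ne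
  have hm := F.m_ne
  have key : ∀ {x : C3} {k : ℂ}, k ≠ 0 → g *ᵥ x = k • x → g⁻¹ *ᵥ x = k⁻¹ • x := by
    intro x k hk h
    have := congrArg (fun y => k⁻¹ • (g⁻¹ *ᵥ y)) h
    simp only [U21.inv_mulVec hg, mulVec_smul, smul_smul, inv_mul_cancel₀ hk, one_smul] at this
    exact this.symm
  refine ⟨F.bb, F.aa, F.ba, F.cb, F.ca, F.cc, ?_, ?_, key hm F.gc, ?_, ?_⟩
  · rw [key (by simpa using hl) F.gb, inv_inv]
  · rw [key hl F.ga, conj_conj]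
  · rw [RCLike.norm_conj]; exact F.hl
  · rw [norm_inv, F.hm, inv_one]

lemma conjugate (F : LoxFrame g l m a b c) {h : Matrix (Fin 3) (Fin 3) ℂ} (hh : h ∈ U21) :
    LoxFrame (h * g * h⁻¹) l m (h *ᵥ a) (h *ᵥ b) (h *ᵥ c) := by
  have key : ∀ {x : C3} {k : ℂ}, g *ᵥ x = k • x → (h * g * h⁻¹) *ᵥ (h *ᵥ x) = k • (h *ᵥ x) := by
    intro x k hx
    rw [← mulVec_mulVec, U21.inv_mulVec hh, ← mulVec_mulVec, hx, mulVec_smul]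
  refine ⟨?_, ?_, ?_, ?_, ?_, ?_, key F.ga, key F.gb, key F.gc, F.hl, F.hm⟩ <;> rw [hh.2]
  exacts [F.aa, F.bb, F.ab, F.ca, F.cb, F.cc]

lemma rephase (F : LoxFrame g l m a b c) {e : ℂ} (he : ‖e‖ = 1) :
    LoxFrame g l m a b (e • c) := by
  refine ⟨F.aa, F.bb, F.ab, ?_, ?_, ?_, F.ga, F.gb, ?_, F.hl, F.hm⟩
  · rw [herm1_smul_left, F.ca, mul_zero]
  · rw [herm1_smul_left, F.cb, mul_zero]
  · rw [herm1_smul_left, herm1_smul_right, F.cc, mul_one, mul_conj, normSq_eq_norm_sq, he]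
    simp
  · rw [mulVec_smul, F.gc, smul_comm]

lemma pt_b (F : LoxFrame g l m a b c) (z w : ℂ) : herm1 (pt a b c z w) b = 1 := by
  simp [pt, herm1_add_left, herm1_smul_left, F.ab, F.cb, F.bb]

lemma pt_c (F : LoxFrame g l m a b c) (z w : ℂ) : herm1 (pt a b c z w) c = z := by
  simp [pt, herm1_add_left, herm1_smul_left, F.ac, F.cc, F.bc]

lemma pt_a (F : LoxFrame g l m a b c) (z w : ℂ) : herm1 (pt a b c z w) a = w := by
  simp [pt, herm1_add_left, herm1_smul_left, F.aa, F.ca, F.ba]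

lemma pt_herm (F : LoxFrame g l m a b c) (z w : ℂ) :
    herm1 (pt a b c z w) (pt a b c z w) = conj w + z * conj z + w := by
  rw [F.herm_expand, F.pt_a, F.pt_b, F.pt_c]
  simp

lemma pt_ne (F : LoxFrame g l m a b c) (z w : ℂ) : pt a b c z w ≠ 0 := by
  intro h
  have := F.pt_b z w
  rw [h, herm1_zero_left] at this
  exact zero_ne_one this

lemma pt_null (F : LoxFrame g l m a b c) {z w : ℂ} :
    herm1 (pt a b c z w) (pt a b c z w) = 0 ↔ 2 * w.re + normSq z = 0 := by
  rw [F.pt_herm, mul_conj]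
  constructor
  · intro h
    have := congrArg Complex.re h
    simp at this
    linarith
  · intro h
    apply Complex.ext
    · simp; linarith
    · simp

lemma eq_smul_pt (F : LoxFrame g l m a b c) {x : C3} (hx : herm1 x b ≠ 0) :
    x = herm1 x b • pt a b c (herm1 x c / herm1 x b) (herm1 x a / herm1 x b) := by
  conv_lhs => rw [F.expand x]
  rw [pt, smul_add, smul_add, smul_smul, smul_smul, mul_div_cancel₀ _ hx, mul_div_cancel₀ _ hx]

lemma map_pt (F : LoxFrame g l m a b c) (z w : ℂ) :
    g *ᵥ pt a b c z w = l • pt a b c (m / l * z) ((normSq l : ℂ)⁻¹ * w) := by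
  have hl := F.l_ne
  have e1 : l * (m / l * z) = z * m := by field_simp
  have e2 : l * ((normSq l : ℂ)⁻¹ * w) = w * (conj l)⁻¹ := by
    rw [← mul_conj, mul_inv, ← mul_assoc, ← mul_assoc, mul_inv_cancel₀ hl, one_mul, mul_comm]
  rw [pt, pt, mulVec_add, mulVec_add, mulVec_smul, mulVec_smul, F.ga, F.gb, F.gc, smul_add,
    smul_add, smul_smul, smul_smul, smul_smul, smul_smul, e1, e2]

end LoxFrame

/-! ### Local analysis at an attracting fixed point -/

/-- The quotient `⟨v(t), p⟩ / ⟨v(t), b⟩`: for `p = c` and `p = a` these are the affine coordinates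
`z` and `w` along the knot. -/
def quo (v : ℝ → C3) (p b : C3) (t : ℝ) : ℂ := herm1 (v t) p / herm1 (v t) b

section Local

variable {γ : ℝ → PC2} {v : ℝ → C3}

lemma contDiff_herm (hγ : IsRegularKnot 2 γ v) (p : C3) :
    ContDiff ℝ 2 fun t => herm1 (v t) p := by
  have h : ∀ i, ContDiff ℝ 2 fun t => v t i := fun i => contDiff_pi.1 hγ.smooth i
  unfold herm1
  exact (((h 0).mul contDiff_const).add ((h 1).mul contDiff_const)).sub
    ((h 2).mul contDiff_const)

lemma hasDerivAt_herm (hγ : IsRegularKnot 2 γ v) (p : C3) (t : ℝ) :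
    HasDerivAt (fun t => herm1 (v t) p) (herm1 (deriv v t) p) t := by
  have hv : HasDerivAt v (deriv v t) t :=
    ((hγ.smooth.differentiable (by norm_num)) t).hasDerivAt
  have h := hasDerivAt_pi.1 hv
  unfold herm1
  exact (((h 0).mul_const _).add ((h 1).mul_const _)).sub ((h 2).mul_const _)

lemma contDiffAt_quo (hγ : IsRegularKnot 2 γ v) (p : C3) {b : C3} {t : ℝ}
    (h : herm1 (v t) b ≠ 0) : ContDiffAt ℝ 2 (quo v p b) t := by
  have h1 := (contDiff_herm hγ p).contDiffAt.mul ((contDiff_herm hγ b).contDiffAt.inv h)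
  have h2 : (fun t => herm1 (v t) p * (herm1 (v t) b)⁻¹) = quo v p b := by
    funext t
    rw [quo, div_eq_mul_inv]
  rw [← h2]
  exact h1

lemma hasDerivAt_quo (hγ : IsRegularKnot 2 γ v) (p : C3) {b : C3} {t : ℝ}
    (h : herm1 (v t) b ≠ 0) :
    HasDerivAt (quo v p b) ((herm1 (deriv v t) p * herm1 (v t) b -
      herm1 (v t) p * herm1 (deriv v t) b) / herm1 (v t) b ^ 2) t :=
  (hasDerivAt_herm hγ p t).div (hasDerivAt_herm hγ b t) h

lemma v_mem_cone (hγ : IsRegularKnot 2 γ v) (t : ℝ) : v t ∈ cone (Set.range γ) :=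
  ⟨hγ.nonzero t, t, hγ.liftEq t⟩

lemma continuous_deriv_v (hγ : IsRegularKnot 2 γ v) : Continuous (deriv v) :=
  hγ.smooth.continuous_deriv (by norm_num)

/-- A function with nonzero strict derivative at a zero attains all small values. -/
lemma eventually_attained {f : ℝ → ℝ} {f' t₀ : ℝ} (hf : HasStrictDerivAt f f' t₀) (hf' : f' ≠ 0)
    (h0 : f t₀ = 0) {P : ℝ → Prop} (hP : ∀ᶠ t in 𝓝 t₀, P t) {y : ℕ → ℝ}
    (hy : Tendsto y atTop (𝓝 0)) : ∃ n t, P t ∧ f t = y n := by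
  have h := hf.map_nhds_eq hf'
  rw [h0] at h
  have h1 : f '' {t | P t} ∈ 𝓝 (0 : ℝ) := by
    rw [← h]; exact image_mem_map hP
  obtain ⟨n, t, ht, hn⟩ := (hy.eventually h1).exists
  exact ⟨n, t, ht, hn⟩

variable {g : Matrix (Fin 3) (Fin 3) ℂ} {l m : ℂ} {a b c : C3}

lemma pt_mem_of_v (F : LoxFrame g l m a b c) {x : C3}
    (hx : x ∈ cone (Set.range γ)) (h : herm1 x b ≠ 0) :
    pt a b c (herm1 x c / herm1 x b) (herm1 x a / herm1 x b) ∈ cone (Set.range γ) := by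
  have h1 := cone_smul hx (inv_ne_zero h)
  have h2 := congrArg (fun y => (herm1 x b)⁻¹ • y) (F.eq_smul_pt h)
  simp only [smul_smul, inv_mul_cancel₀ h, one_smul] at h2
  rwa [h2] at h1

lemma pt_quo_mem (hγ : IsRegularKnot 2 γ v) (F : LoxFrame g l m a b c) {t : ℝ}
    (h : herm1 (v t) b ≠ 0) :
    pt a b c (quo v c b t) (quo v a b t) ∈ cone (Set.range γ) :=
  pt_mem_of_v F (v_mem_cone hγ t) h

lemma pt_mem_null (hγ : IsRegularKnot 2 γ v) (F : LoxFrame g l m a b c) {z w : ℂ}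
    (h : pt a b c z w ∈ cone (Set.range γ)) : 2 * w.re + normSq z = 0 :=
  F.pt_null.1 ((mem_cone_iff hγ).1 h).2.1

lemma pt_iter (F : LoxFrame g l m a b c)
    (hg : ∀ x, g *ᵥ x ∈ cone (Set.range γ) ↔ x ∈ cone (Set.range γ)) (z w : ℂ) (n : ℕ) :
    pt a b c ((m / l) ^ n * z) (((normSq l : ℂ)⁻¹) ^ n * w) ∈ cone (Set.range γ) ↔
      pt a b c z w ∈ cone (Set.range γ) := by
  induction n with
  | zero => simp
  | succ n ih =>
    rw [← ih, ← hg (pt a b c ((m / l) ^ n * z) _), F.map_pt]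
    have e1 : (m / l) ^ (n + 1) * z = m / l * ((m / l) ^ n * z) := by ring
    have e2 : ((normSq l : ℂ)⁻¹) ^ (n + 1) * w = (normSq l : ℂ)⁻¹ * (((normSq l : ℂ)⁻¹) ^ n * w) := by
      ring
    rw [e1, e2]
    refine ⟨fun h => cone_smul h F.l_ne, fun h => ?_⟩
    have := cone_smul h (inv_ne_zero F.l_ne)
    rwa [smul_smul, inv_mul_cancel₀ F.l_ne, one_smul] at this

lemma norm_ratio (F : LoxFrame g l m a b c) : ‖m / l‖ = ‖l‖⁻¹ := by
  rw [norm_div, F.hm, one_div]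

lemma normSq_inv_lt (F : LoxFrame g l m a b c) : (normSq l)⁻¹ < 1 := by
  rw [normSq_eq_norm_sq]
  exact inv_lt_one_of_one_lt₀ (one_lt_pow₀ F.hl two_ne_zero)

lemma tendsto_qpow (F : LoxFrame g l m a b c) :
    Tendsto (fun n : ℕ => ((normSq l)⁻¹) ^ n) atTop (𝓝 0) :=
  tendsto_pow_atTop_nhds_zero_of_lt_one (inv_nonneg.2 (normSq_nonneg _)) (normSq_inv_lt F)

lemma tendsto_ratio_pow (F : LoxFrame g l m a b c) :
    Tendsto (fun n : ℕ => (m / l) ^ n) atTop (𝓝 0) := by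
  apply tendsto_pow_atTop_nhds_zero_of_norm_lt_one
  rw [norm_ratio F]
  exact inv_lt_one_of_one_lt₀ F.hl

lemma tendsto_pt_iter (F : LoxFrame g l m a b c) (z w : ℂ) :
    Tendsto (fun n : ℕ => pt a b c ((m / l) ^ n * z) (((normSq l : ℂ)⁻¹) ^ n * w)) atTop (𝓝 a) := by
  have h1 := tendsto_ratio_pow F
  have h2 : Tendsto (fun n : ℕ => ((normSq l : ℂ)⁻¹) ^ n) atTop (𝓝 0) := by
    have := (Complex.continuous_ofReal.tendsto 0).comp (tendsto_qpow F)
    rw [Complex.ofReal_zero] at this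
    refine this.congr fun n => ?_
    simp
  have := ((tendsto_const_nhds (x := a)).add ((h1.mul_const z).smul_const c)).add
    ((h2.mul_const w).smul_const b)
  simpa [pt] using this

/-- The attracting fixed point lies on the knot. -/
lemma attracting_mem (hγ : IsRegularKnot 2 γ v) (F : LoxFrame g l m a b c)
    (hg : ∀ x, g *ᵥ x ∈ cone (Set.range γ) ↔ x ∈ cone (Set.range γ)) : a ∈ cone (Set.range γ) := by
  obtain ⟨t, ht⟩ : ∃ t, herm1 (v t) b ≠ 0 := by
    by_contra! h
    -- otherwise the knot would be the single point `[b]`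
    have h0 := (mem_cone_iff hγ (x := v 0)).1 (v_mem_cone hγ 0)
    obtain ⟨k, hk⟩ := null_orth_parallel h0.1 h0.2.1 F.bb (herm1_symm_zero (h 0))
    have hk0 : k ≠ 0 := by
      rintro rfl
      exact F.b_ne (by rw [hk, zero_smul])
    have h1 := h (1 / 2)
    rw [hk, herm1_smul_right] at h1
    have h2 : herm1 (v (1 / 2)) (v 0) = 0 := by simpa [hk0] using h1
    have h3 := knot_inj hγ ((orth_v_iff hγ _ _).1 h2) (by norm_num [abs_of_pos])
    norm_num at h3
  have hm := pt_quo_mem hγ F ht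
  exact cone_closed hγ (fun n => (pt_iter F hg _ _ n).2 hm) F.a_ne (tendsto_pt_iter F _ _)

/-- The forward orbit of a point on the knot, read in the parameter `t` near the attracting fixed
point. -/
lemma local_orbit (hγ : IsRegularKnot 2 γ v) (F : LoxFrame g l m a b c)
    (hg : ∀ x, g *ᵥ x ∈ cone (Set.range γ) ↔ x ∈ cone (Set.range γ)) {t₀ : ℝ}
    (ht₀ : herm1 a (v t₀) = 0) {z w : ℂ} (h : pt a b c z w ∈ cone (Set.range γ)) :
    ∃ s : ℕ → ℝ, Tendsto s atTop (𝓝 t₀) ∧ (∀ n, quo v c b (s n) = (m / l) ^ n * z) ∧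
      ∀ n, quo v a b (s n) = ((normSq l : ℂ)⁻¹) ^ n * w := by
  obtain ⟨s, k, hs, hk, hsk⟩ := exists_param_tendsto hγ (fun n => (pt_iter F hg z w n).2 h) F.a_ne
    (tendsto_pt_iter F z w) ht₀
  have hb : ∀ n, k n * herm1 (v (s n)) b = 1 := fun n => by
    rw [← herm1_smul_left, ← hsk, F.pt_b]
  refine ⟨s, hs, fun n => ?_, fun n => ?_⟩
  · have h1 : k n * herm1 (v (s n)) c = (m / l) ^ n * z := by
      rw [← herm1_smul_left, ← hsk, F.pt_c]
    rw [quo, ← mul_div_mul_left _ _ (hk n), hb, div_one, h1]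
  · have h1 : k n * herm1 (v (s n)) a = ((normSq l : ℂ)⁻¹) ^ n * w := by
      rw [← herm1_smul_left, ← hsk, F.pt_a]
    rw [quo, ← mul_div_mul_left _ _ (hk n), hb, div_one, h1]

/-- Values and derivatives of the affine coordinates at the attracting fixed point. -/
lemma local_data (hγ : IsRegularKnot 2 γ v) (F : LoxFrame g l m a b c) {t₀ : ℝ}
    (ht₀ : herm1 a (v t₀) = 0) :
    herm1 (v t₀) b ≠ 0 ∧ quo v c b t₀ = 0 ∧ quo v a b t₀ = 0 ∧
    HasDerivAt (quo v c b) (herm1 (deriv v t₀) c / herm1 (v t₀) b) t₀ ∧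
    HasDerivAt (quo v a b) (herm1 (deriv v t₀) a / herm1 (v t₀) b) t₀ ∧
    (herm1 (deriv v t₀) (v t₀) = 0 ↔ herm1 (deriv v t₀) a = 0) ∧
    (herm1 (deriv v t₀) a = 0 → herm1 (deriv v t₀) c ≠ 0) := by
  obtain ⟨k, hk⟩ := null_orth_parallel F.a_ne F.aa (hγ.isNull t₀) (herm1_symm_zero ht₀)
  have hk0 : k ≠ 0 := by
    rintro rfl
    exact hγ.nonzero t₀ (by rw [hk, zero_smul])
  have hb : herm1 (v t₀) b = k := by rw [hk, herm1_smul_left, F.ab, mul_one]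
  have hc : herm1 (v t₀) c = 0 := by rw [hk, herm1_smul_left, F.ac, mul_zero]
  have ha : herm1 (v t₀) a = 0 := by rw [hk, herm1_smul_left, F.aa, mul_zero]
  have hb0 : herm1 (v t₀) b ≠ 0 := by rw [hb]; exact hk0
  refine ⟨hb0, by rw [quo, hc, zero_div], by rw [quo, ha, zero_div], ?_, ?_, ?_, ?_⟩
  · convert hasDerivAt_quo hγ c hb0 using 1
    rw [hc]; field_simp; ring
  · convert hasDerivAt_quo hγ a hb0 using 1
    rw [ha]; field_simp; ring
  · rw [hk, herm1_smul_right]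
    simp [hk0]
  · intro h1 h2
    have h3 := F.expand (deriv v t₀)
    rw [h1, h2, zero_smul, zero_smul, add_zero, add_zero] at h3
    have h4 := LinearIndependent.pair_iff.1 (hγ.regular t₀) (herm1 (deriv v t₀) b) (-k) (by
      conv_lhs => rw [h3, hk]
      rw [herm1_smul_left, F.ab, smul_smul, smul_smul, ← add_smul]
      ring_nf
      simp)
    exact hk0 (neg_eq_zero.1 h4.2)

end Local

/-! ### A transversal attracting fixed point: chains -/

section Transversal

variable {γ : ℝ → PC2} {v : ℝ → C3} {g : Matrix (Fin 3) (Fin 3) ℂ} {l m : ℂ} {a b c : C3} {t₀ : ℝ}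

lemma eventually_herm_ne (hγ : IsRegularKnot 2 γ v) (h : herm1 (v t₀) b ≠ 0) :
    ∀ᶠ t in 𝓝 t₀, herm1 (v t) b ≠ 0 :=
  (contDiff_herm hγ b).continuous.continuousAt.eventually_ne h

lemma sub_isBigO {f : ℝ → ℂ} {f' : ℂ} (h : HasDerivAt f f' t₀) (hf' : f' ≠ 0) :
    (fun t => t - t₀) =O[𝓝 t₀] fun t => f t - f t₀ := by
  have h1 := (HasDerivAtFilter.isTheta_sub h hf').isBigO_symm
  rwa [Filter.prod_pure, Asymptotics.isBigO_map] at h1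

/-- Along an orbit `z` decays like `‖l‖⁻ⁿ` and `w` like `‖l‖⁻²ⁿ`, whereas transversality gives
`z = O(t - t₀) = O(w)` on the knot. -/
lemma transversal_z_zero (hγ : IsRegularKnot 2 γ v) (F : LoxFrame g l m a b c)
    (hg : ∀ x, g *ᵥ x ∈ cone (Set.range γ) ↔ x ∈ cone (Set.range γ))
    (ht₀ : herm1 a (v t₀) = 0) (ht : herm1 (deriv v t₀) (v t₀) ≠ 0) {z w : ℂ}
    (h : pt a b c z w ∈ cone (Set.range γ)) : z = 0 := by
  obtain ⟨hb, hc0, ha0, hdc, hda, hiff, -⟩ := local_data hγ F ht₀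
  have hd : herm1 (deriv v t₀) a / herm1 (v t₀) b ≠ 0 := div_ne_zero (fun h0 => ht (hiff.2 h0)) hb
  have hO : quo v c b =O[𝓝 t₀] quo v a b := by
    have h1 := hdc.isBigO_sub.trans (sub_isBigO hda hd)
    simpa [hc0, ha0] using h1
  obtain ⟨s, hs, hsc, hsa⟩ := local_orbit hγ F hg ht₀ h
  obtain ⟨C, hC⟩ := (hO.comp_tendsto hs).bound
  have hl0 : 0 < ‖l‖ := lt_trans one_pos F.hl
  have hlim : Tendsto (fun n : ℕ => C * ((‖l‖⁻¹) ^ n * ‖w‖)) atTop (𝓝 0) := by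
    have := ((tendsto_pow_atTop_nhds_zero_of_lt_one (inv_nonneg.2 hl0.le)
      (inv_lt_one_of_one_lt₀ F.hl)).mul_const ‖w‖).const_mul C
    simpa using this
  have hle : ‖z‖ ≤ 0 := by
    refine ge_of_tendsto hlim (hC.mono fun n hn => ?_)
    simp only [Function.comp_apply, hsc, hsa, norm_mul, norm_pow, norm_ratio F, norm_inv,
      Complex.norm_real, normSq_eq_norm_sq, norm_norm] at hn
    have hp : 0 < (‖l‖⁻¹) ^ n := by positivity
    have e : ((‖l‖ ^ 2)⁻¹) ^ n = (‖l‖⁻¹) ^ n * (‖l‖⁻¹) ^ n := by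
      rw [← mul_pow, ← mul_inv, ← sq]
    rw [e] at hn
    refine le_of_mul_le_mul_left ?_ hp
    calc _ ≤ _ := hn
      _ = _ := by ring
  exact norm_le_zero_iff.1 hle

lemma strictDeriv_im {f : ℝ → ℂ} {f' : ℂ} {t : ℝ} (h : HasStrictDerivAt f f' t) :
    HasStrictDerivAt (fun t => (f t).im) f'.im t :=
  imCLM.hasStrictFDerivAt.comp_hasStrictDerivAt t h

lemma strictDeriv_re {f : ℝ → ℂ} {f' : ℂ} {t : ℝ} (h : HasStrictDerivAt f f' t) :
    HasStrictDerivAt (fun t => (f t).re) f'.re t :=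
  reCLM.hasStrictFDerivAt.comp_hasStrictDerivAt t h

lemma transversal_surj (hγ : IsRegularKnot 2 γ v) (F : LoxFrame g l m a b c)
    (hg : ∀ x, g *ᵥ x ∈ cone (Set.range γ) ↔ x ∈ cone (Set.range γ))
    (ht₀ : herm1 a (v t₀) = 0) (ht : herm1 (deriv v t₀) (v t₀) ≠ 0) (Y : ℝ) :
    pt a b c 0 (Y * I) ∈ cone (Set.range γ) := by
  obtain ⟨hb, hc0, ha0, hdc, hda, hiff, -⟩ := local_data hγ F ht₀
  have hd : herm1 (deriv v t₀) a / herm1 (v t₀) b ≠ 0 := div_ne_zero (fun h0 => ht (hiff.2 h0)) hb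
  have hst := (contDiffAt_quo hγ a hb).hasStrictDerivAt' hda (by norm_num)
  have hz : ∀ t, herm1 (v t) b ≠ 0 → quo v c b t = 0 := fun t h =>
    transversal_z_zero hγ F hg ht₀ ht (pt_quo_mem hγ F h)
  have hre : ∀ t, herm1 (v t) b ≠ 0 → (quo v a b t).re = 0 := fun t h => by
    have h1 := pt_mem_null hγ F (pt_quo_mem hγ F h)
    rw [hz t h, map_zero] at h1
    linarith
  have hev := eventually_herm_ne hγ hb
  have hdre : (herm1 (deriv v t₀) a / herm1 (v t₀) b).re = 0 := by
    refine (strictDeriv_re hst).hasDerivAt.unique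
      ((hasDerivAt_const t₀ (0 : ℝ)).congr_of_eventuallyEq (hev.mono fun t h => hre t h))
  have hdim : (herm1 (deriv v t₀) a / herm1 (v t₀) b).im ≠ 0 := fun h0 =>
    hd (Complex.ext hdre h0)
  obtain ⟨n, t, htb, htn⟩ := eventually_attained (strictDeriv_im hst) hdim
    (by rw [ha0, zero_im]) hev
    (y := fun n => ((normSq l)⁻¹) ^ n * Y) (by simpa using (tendsto_qpow F).mul_const Y)
  have hm := pt_quo_mem hγ F htb
  have e : quo v a b t = ((normSq l : ℂ)⁻¹) ^ n * (Y * I) := by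
    have e1 : ((normSq l : ℂ)⁻¹) ^ n * (Y * I) = (((normSq l)⁻¹ ^ n * Y : ℝ) : ℂ) * I := by
      push_cast; ring
    rw [e1]
    apply Complex.ext
    · rw [hre t htb, re_ofReal_mul, I_re, mul_zero]
    · rw [htn, im_ofReal_mul, I_im, mul_one]
  rw [hz t htb, e, ← mul_zero ((m / l) ^ n)] at hm
  exact (pt_iter F hg 0 (Y * I) n).1 hm

lemma transversal_chain (hγ : IsRegularKnot 2 γ v) (F : LoxFrame g l m a b c) (hgU : g ∈ U21)
    (hg : ∀ x, g *ᵥ x ∈ cone (Set.range γ) ↔ x ∈ cone (Set.range γ))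
    (hg' : ∀ x, g⁻¹ *ᵥ x ∈ cone (Set.range γ) ↔ x ∈ cone (Set.range γ))
    (ht₀ : herm1 a (v t₀) = 0) (ht : herm1 (deriv v t₀) (v t₀) ≠ 0) :
    IsChainSet (Set.range γ) := by
  refine ⟨c, by simp [F.cc], by simp [F.cc], Set.Subset.antisymm ?_ ?_⟩
  · rintro p ⟨t, rfl⟩
    refine ⟨v t, hγ.nonzero t, hγ.isNull t, ?_, hγ.liftEq t⟩
    by_cases hb : herm1 (v t) b = 0
    · obtain ⟨k, hk⟩ := null_orth_parallel F.b_ne F.bb (hγ.isNull t) hb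
      rw [hk, herm1_smul_left, F.bc, mul_zero]
    · have h1 := transversal_z_zero hγ F hg ht₀ ht (pt_quo_mem hγ F hb)
      exact (div_eq_zero_iff.1 h1).resolve_right hb
  · rintro p ⟨x, hx, hn, hxc, rfl⟩
    suffices h : x ∈ cone (Set.range γ) from h.2
    by_cases hb : herm1 x b = 0
    · obtain ⟨k, rfl⟩ := null_orth_parallel F.b_ne F.bb hn hb
      refine cone_smul (attracting_mem hγ (F.inv hgU) hg') ?_
      rintro rfl
      exact hx (zero_smul _ _)
    · have e := F.eq_smul_pt hb
      rw [hxc, zero_div] at e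
      rw [e]
      refine cone_smul ?_ hb
      have hn2 : 2 * (herm1 x a / herm1 x b).re + normSq 0 = 0 := by
        rw [← F.pt_null]
        rw [e, herm1_smul_left, herm1_smul_right] at hn
        simpa [hb] using hn
      have hw : herm1 x a / herm1 x b = ((herm1 x a / herm1 x b).im : ℂ) * I := by
        apply Complex.ext
        · rw [map_zero] at hn2
          simp only [mul_re, ofReal_re, I_re, ofReal_im, I_im]
          linarith
        · simp only [mul_im, ofReal_re, I_re, ofReal_im, I_im]; ring
      rw [hw]
      exact transversal_surj hγ F hg ht₀ ht _

end Transversal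

/-! ### Legendrian knots: ℝ-circles -/

/-- If the iterated rotations `eⁿ z` approach the real axis, then `z` is real. -/
lemma im_eq_zero_of_tendsto {e z : ℂ} (he : ‖e‖ = 1)
    (h : Tendsto (fun n : ℕ => (e ^ n * z).im) atTop (𝓝 0)) : z.im = 0 := by
  have hn : ∀ n : ℕ, normSq (e ^ n * z) = normSq z := fun n => by
    rw [map_mul, map_pow, normSq_eq_norm_sq e, he]; simp
  have he2 : normSq e = 1 := by rw [normSq_eq_norm_sq, he, one_pow]
  have hstep : ∀ n : ℕ, (e ^ (n + 1) * z).im = e.re * (e ^ n * z).im + e.im * (e ^ n * z).re := by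
    intro n
    rw [pow_succ', mul_assoc, mul_im]
  by_cases hei : e.im = 0
  · have hre : |e.re| = 1 := by
      rw [normSq_apply, hei] at he2
      rw [← sq_eq_sq₀ (abs_nonneg _) zero_le_one, sq_abs]
      linarith
    have hc : ∀ n : ℕ, |(e ^ n * z).im| = |z.im| := by
      intro n
      induction n with
      | zero => simp
      | succ n ih => rw [hstep, hei, zero_mul, add_zero, abs_mul, hre, one_mul, ih]
    have h1 : Tendsto (fun n : ℕ => |(e ^ n * z).im|) atTop (𝓝 |0|) := h.abs
    simp only [hc, abs_zero] at h1
    exact abs_eq_zero.1 (tendsto_nhds_unique tendsto_const_nhds h1)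
  · have h1 : Tendsto (fun n : ℕ => (e ^ n * z).re) atTop (𝓝 0) := by
      have h2 := (((h.comp (tendsto_add_atTop_nat 1)).sub (h.const_mul e.re)).const_mul (e.im)⁻¹)
      simp only [mul_zero, sub_zero] at h2
      refine h2.congr fun n => ?_
      simp only [Function.comp_apply, hstep]
      field_simp
      ring
    have h2 := (h1.mul h1).add (h.mul h)
    simp only [← normSq_apply, hn, mul_zero, add_zero] at h2
    have h3 := normSq_eq_zero.1 (tendsto_nhds_unique tendsto_const_nhds h2)
    rw [h3, zero_im]

section Legendrian

variable {γ : ℝ → PC2} {v : ℝ → C3} {g : Matrix (Fin 3) (Fin 3) ℂ} {l m : ℂ} {a b c : C3} {t₀ : ℝ}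

/-- On the knot `Im z = o(z)` near a non-transversal attracting fixed point, if the derivative
of `z` is real there. -/
lemma legendrian_z_real (hγ : IsRegularKnot 2 γ v) (F : LoxFrame g l m a b c)
    (hg : ∀ x, g *ᵥ x ∈ cone (Set.range γ) ↔ x ∈ cone (Set.range γ))
    (ht₀ : herm1 a (v t₀) = 0) (ht : herm1 (deriv v t₀) (v t₀) = 0)
    (hd : (herm1 (deriv v t₀) c / herm1 (v t₀) b).im = 0) {z w : ℂ}
    (h : pt a b c z w ∈ cone (Set.range γ)) : z.im = 0 := by
  obtain ⟨hb, hc0, -, hdc, -, hiff, hne⟩ := local_data hγ F ht₀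
  have hd0 : herm1 (deriv v t₀) c / herm1 (v t₀) b ≠ 0 := div_ne_zero (hne (hiff.1 ht)) hb
  have hst := (contDiffAt_quo hγ c hb).hasStrictDerivAt' hdc (by norm_num)
  have hi := (strictDeriv_im hst).hasDerivAt
  rw [hd, hasDerivAt_iff_isLittleO] at hi
  simp only [hc0, zero_im, sub_zero, smul_zero] at hi
  have hO := sub_isBigO hdc hd0
  simp only [hc0, sub_zero] at hO
  obtain ⟨s, hs, hsc, -⟩ := local_orbit hγ F hg ht₀ h
  have h1 := (hi.trans_isBigO hO).comp_tendsto hs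
  have hR : 0 < ‖m / l‖ := norm_pos_iff.2 (div_ne_zero F.m_ne F.l_ne)
  have h2 : (quo v c b ∘ s) =O[atTop] fun n : ℕ => ‖m / l‖ ^ n :=
    Asymptotics.IsBigO.of_bound ‖z‖ (Eventually.of_forall fun n => by
      rw [Function.comp_apply, hsc, norm_mul, norm_pow, norm_pow, norm_norm, mul_comm])
  have h3 := (h1.trans_isBigO h2).tendsto_div_nhds_zero
  refine im_eq_zero_of_tendsto (e := m / l / (‖m / l‖ : ℝ)) ?_ (h3.congr fun n => ?_)
  · rw [norm_div, Complex.norm_real, norm_norm, div_self hR.ne']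
  · have e1 : (m / l / (‖m / l‖ : ℝ)) ^ n * z = (m / l) ^ n * z / ((‖m / l‖ ^ n : ℝ) : ℂ) := by
      rw [div_pow, ofReal_pow, div_mul_eq_mul_div]
    rw [e1, div_ofReal_im, Function.comp_apply, hsc]

/-- On a Legendrian knot `w' = -z' conj z`, so that `Im w` is locally constant once `z` is
real. -/
lemma legendrian_w_real (hγ : IsRegularKnot 2 γ v) (F : LoxFrame g l m a b c)
    (hg : ∀ x, g *ᵥ x ∈ cone (Set.range γ) ↔ x ∈ cone (Set.range γ))
    (ht₀ : herm1 a (v t₀) = 0) (hleg : ∀ t, herm1 (deriv v t) (v t) = 0)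
    (hz : ∀ z w, pt a b c z w ∈ cone (Set.range γ) → z.im = 0) {z w : ℂ}
    (h : pt a b c z w ∈ cone (Set.range γ)) : w.im = 0 := by
  obtain ⟨hb, -, ha0, -, -, -, -⟩ := local_data hγ F ht₀
  have hzr : ∀ t, herm1 (v t) b ≠ 0 → (quo v c b t).im = 0 := fun t ht =>
    hz _ _ (pt_quo_mem hγ F ht)
  have hder : ∀ t, herm1 (v t) b ≠ 0 → HasDerivAt (fun t => (quo v a b t).im) 0 t := by
    intro t ht
    have hA := hasDerivAt_quo hγ a ht
    have hC := hasDerivAt_quo hγ c ht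
    have hA' := (strictDeriv_im ((contDiffAt_quo hγ a ht).hasStrictDerivAt' hA
      (by norm_num))).hasDerivAt
    have hC' := (strictDeriv_im ((contDiffAt_quo hγ c ht).hasStrictDerivAt' hC
      (by norm_num))).hasDerivAt
    have hzd := hC'.unique ((hasDerivAt_const t (0 : ℝ)).congr_of_eventuallyEq
      ((eventually_herm_ne hγ ht).mono fun s hs => hzr s hs))
    have e1 := hleg t
    have e2 := hγ.isNull t
    rw [F.herm_expand] at e1 e2
    have ht' : conj (herm1 (v t) b) ≠ 0 := by simpa using ht
    have key : (herm1 (deriv v t) a * herm1 (v t) b - herm1 (v t) a * herm1 (deriv v t) b) /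
        herm1 (v t) b ^ 2 = -((herm1 (deriv v t) c * herm1 (v t) b -
        herm1 (v t) c * herm1 (deriv v t) b) / herm1 (v t) b ^ 2 * conj (quo v c b t)) := by
      rw [quo, map_div₀]
      field_simp
      linear_combination herm1 (v t) b * e1 - herm1 (deriv v t) b * e2
    rw [key] at hA'
    have e3 : (-((herm1 (deriv v t) c * herm1 (v t) b -
        herm1 (v t) c * herm1 (deriv v t) b) / herm1 (v t) b ^ 2 * conj (quo v c b t))).im = 0 := by
      rw [neg_im, mul_im, hzd, conj_im, hzr t ht]
      ring
    rwa [e3] at hA'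
  obtain ⟨ε, hε, hball⟩ := Metric.eventually_nhds_iff_ball.1 (eventually_herm_ne hγ hb)
  have hconst : ∀ t ∈ Metric.ball t₀ ε, (quo v a b t).im = 0 := by
    intro t ht
    have h1 := Metric.isOpen_ball.is_const_of_deriv_eq_zero
      (convex_ball t₀ ε).isPreconnected
      (fun s hs => (hder s (hball s hs)).differentiableAt.differentiableWithinAt)
      (fun s hs => (hder s (hball s hs)).deriv) ht (Metric.mem_ball_self hε)
    simpa [ha0] using h1
  obtain ⟨s, hs, -, hsa⟩ := local_orbit hγ F hg ht₀ h
  obtain ⟨n, hn⟩ := (hs.eventually (Metric.ball_mem_nhds t₀ hε)).exists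
  have h2 := hconst _ hn
  have e : ((normSq l : ℂ)⁻¹) ^ n = (((normSq l)⁻¹ ^ n : ℝ) : ℂ) := by push_cast; rfl
  rw [hsa, e, im_ofReal_mul] at h2
  have hl : normSq l ≠ 0 := by simpa using F.l_ne
  exact (mul_eq_zero.1 h2).resolve_left (pow_ne_zero _ (inv_ne_zero hl))

lemma legendrian_surj (hγ : IsRegularKnot 2 γ v) (F : LoxFrame g l m a b c)
    (hg : ∀ x, g *ᵥ x ∈ cone (Set.range γ) ↔ x ∈ cone (Set.range γ))
    (ht₀ : herm1 a (v t₀) = 0) (ht : herm1 (deriv v t₀) (v t₀) = 0)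
    (hd : (herm1 (deriv v t₀) c / herm1 (v t₀) b).im = 0)
    (hp : ∀ z w, pt a b c z w ∈ cone (Set.range γ) → ∃ Y : ℝ, z = Y ∧ w = ((-(Y ^ 2 / 2) : ℝ) : ℂ))
    (Y : ℝ) : pt a b c Y ((-(Y ^ 2 / 2) : ℝ) : ℂ) ∈ cone (Set.range γ) := by
  obtain ⟨hb, hc0, -, hdc, -, hiff, hne⟩ := local_data hγ F ht₀
  have hd0 : (herm1 (deriv v t₀) c / herm1 (v t₀) b).re ≠ 0 := fun h0 =>
    div_ne_zero (hne (hiff.1 ht)) hb (Complex.ext h0 hd)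
  have hst := strictDeriv_re ((contDiffAt_quo hγ c hb).hasStrictDerivAt' hdc (by norm_num))
  have hev := eventually_herm_ne hγ hb
  -- some point of the knot has `z ≠ 0`; as its image also has real `z`, the ratio `m / l` is real
  obtain ⟨r, hr⟩ : ∃ r : ℝ, m / l = r := by
    obtain ⟨n, t, htb, htn⟩ := eventually_attained hst hd0 (by rw [hc0, zero_re]) hev
      tendsto_one_div_add_atTop_nhds_zero_nat
    have hm := pt_quo_mem hγ F htb
    have hm' := (pt_iter F hg _ _ 1).2 hm
    obtain ⟨y, hy, -⟩ := hp _ _ hm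
    obtain ⟨y', hy', -⟩ := hp _ _ hm'
    have hy0 : (y : ℂ) ≠ 0 := by
      rintro h0
      rw [hy, h0, zero_re] at htn
      have : (0 : ℝ) < 1 / ((n : ℝ) + 1) := by positivity
      linarith
    rw [hy, pow_one] at hy'
    refine ⟨y' / y, ?_⟩
    rw [ofReal_div, ← hy', mul_div_cancel_right₀ _ hy0]
  have hr2 : r ^ 2 = (normSq l)⁻¹ := by
    have h1 := norm_ratio F
    rw [hr, Complex.norm_real, Real.norm_eq_abs] at h1
    rw [← sq_abs, h1, normSq_eq_norm_sq, inv_pow]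
  obtain ⟨n, t, htb, htn⟩ := eventually_attained hst hd0 (by rw [hc0, zero_re]) hev
    (y := fun n => r ^ n * Y) (by
      have h1 := (Complex.continuous_re.tendsto 0).comp (tendsto_ratio_pow F)
      have h2 := h1.mul_const Y
      simp only [zero_re, zero_mul] at h2
      refine h2.congr fun n => ?_
      rw [Function.comp_apply, hr, ← ofReal_pow, ofReal_re])
  have hm := pt_quo_mem hγ F htb
  obtain ⟨y, hy, hy2⟩ := hp _ _ hm
  rw [hy, ofReal_re] at htn
  refine (pt_iter F hg _ _ n).1 ?_
  rw [hy, hy2, htn] at hm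
  have e1 : (m / l) ^ n * (Y : ℂ) = ((r ^ n * Y : ℝ) : ℂ) := by rw [hr]; push_cast; rfl
  have e2 : ((normSq l : ℂ)⁻¹) ^ n * ((-(Y ^ 2 / 2) : ℝ) : ℂ) =
      ((-((r ^ n * Y) ^ 2 / 2) : ℝ) : ℂ) := by
    rw [← ofReal_inv, ← hr2]; push_cast; ring
  rw [e1, e2]
  exact hm

/-- The matrix with columns `c`, `(a + b) / √2`, `(a - b) / √2`. -/
def frameMatrix (a b c : C3) : Matrix (Fin 3) (Fin 3) ℂ :=
  Matrix.of fun i j => ![c i, (((√2)⁻¹ : ℝ) : ℂ) * (a i + b i), (((√2)⁻¹ : ℝ) : ℂ) * (a i - b i)] j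

lemma frameMatrix_mulVec (x : C3) : frameMatrix a b c *ᵥ x =
    ((((√2)⁻¹ : ℝ) : ℂ) * (x 1 + x 2)) • a + x 0 • c + ((((√2)⁻¹ : ℝ) : ℂ) * (x 1 - x 2)) • b := by
  ext i
  simp only [frameMatrix, mulVec, dotProduct, Fin.sum_univ_three, of_apply, cons_val, Pi.add_apply,
    Pi.smul_apply, smul_eq_mul]
  ring

lemma frameMatrix_mem (F : LoxFrame g l m a b c) : frameMatrix a b c ∈ U21 := by
  refine mem_U21_of_herm fun x y => ?_
  have hs : (((√2)⁻¹ : ℝ) : ℂ) * (((√2)⁻¹ : ℝ) : ℂ) = 1 / 2 := by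
    rw [← ofReal_mul, ← mul_inv, Real.mul_self_sqrt (by norm_num)]
    norm_num
  rw [frameMatrix_mulVec, frameMatrix_mulVec]
  simp only [herm1_add_left, herm1_add_right, herm1_smul_left, herm1_smul_right, F.aa, F.bb, F.cc,
    F.ab, F.ba, F.ca, F.ac, F.cb, F.bc, map_mul, conj_ofReal, map_add, map_sub]
  simp only [herm1]
  linear_combination 2 * (x 1 * conj (y 1) - x 2 * conj (y 2)) * hs

lemma legendrian_rcircle_of_pt (hγ : IsRegularKnot 2 γ v) (F : LoxFrame g l m a b c)
    (hb : b ∈ cone (Set.range γ))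
    (hp : ∀ z w, pt a b c z w ∈ cone (Set.range γ) → ∃ Y : ℝ, z = Y ∧ w = ((-(Y ^ 2 / 2) : ℝ) : ℂ))
    (hs : ∀ Y : ℝ, pt a b c Y ((-(Y ^ 2 / 2) : ℝ) : ℂ) ∈ cone (Set.range γ)) :
    IsRCircleSet (Set.range γ) := by
  have h2 : (√2 : ℝ) ≠ 0 := by positivity
  have h2' : (√2 : ℝ) * √2 = 2 := Real.mul_self_sqrt (by norm_num)
  have hM := frameMatrix_mem F
  refine ⟨frameMatrix a b c, hM, Set.Subset.antisymm ?_ ?_⟩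
  · -- it suffices to exhibit a real null preimage of a multiple of `v t`
    have main : ∀ (t : ℝ) (x : Fin 3 → ℝ) (k : ℂ), k ≠ 0 →
        frameMatrix a b c *ᵥ (fun i => (x i : ℂ)) = k • v t →
        γ t ∈ mapSet (frameMatrix a b c) canonicalRCircle := by
      intro t x k hk hx
      have hx0 : (fun i => (x i : ℂ)) ≠ 0 := by
        intro h0
        rw [h0, mulVec_zero] at hx
        exact smul_ne_zero hk (hγ.nonzero t) hx.symm
      refine ⟨_, hx0, ⟨x, hx0, ?_, rfl⟩, ?_⟩
      · rw [← hM.2, hx, herm1_smul_left, herm1_smul_right, hγ.isNull, mul_zero, mul_zero]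
      · rw [hx, projOf_smul (hγ.nonzero t) hk, hγ.liftEq]
    rintro p ⟨t, rfl⟩
    by_cases htb : herm1 (v t) b = 0
    · obtain ⟨k, hk⟩ := null_orth_parallel F.b_ne F.bb (hγ.isNull t) htb
      have hk0 : k ≠ 0 := by
        rintro rfl
        exact hγ.nonzero t (by rw [hk, zero_smul])
      refine main t ![0, 1, -1] (√2 * k⁻¹) ?_ ?_
      · exact mul_ne_zero (by exact_mod_cast h2) (inv_ne_zero hk0)
      · rw [frameMatrix_mulVec, hk, smul_smul, mul_assoc, inv_mul_cancel₀ hk0]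
        have e : ((√2)⁻¹ : ℝ) * 2 = √2 := by field_simp; linarith
        have e' : (((√2)⁻¹ : ℝ) : ℂ) * 2 = (√2 : ℝ) := by exact_mod_cast e
        simp only [cons_val, ofReal_one, ofReal_neg, ofReal_zero]
        rw [add_neg_cancel, mul_zero, zero_smul, zero_smul, zero_add, zero_add, sub_neg_eq_add,
          one_add_one_eq_two, e', mul_one]
    · obtain ⟨Y, hY, hY2⟩ := hp _ _ (pt_quo_mem hγ F htb)
      refine main t ![√2 * Y, 1 - Y ^ 2 / 2, 1 + Y ^ 2 / 2] (√2 * (herm1 (v t) b)⁻¹) ?_ ?_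
      · exact mul_ne_zero (by exact_mod_cast h2) (inv_ne_zero htb)
      · have e0 := F.eq_smul_pt htb
        rw [quo] at hY hY2
        rw [hY, hY2] at e0
        have e : ((√2)⁻¹ : ℝ) * 2 = √2 := by field_simp; linarith
        have e' : (((√2)⁻¹ : ℝ) : ℂ) * 2 = (√2 : ℝ) := by exact_mod_cast e
        have f1 : (√2 * (herm1 (v t) b)⁻¹ : ℂ) • v t =
            (√2 : ℂ) • pt a b c Y ((-(Y ^ 2 / 2) : ℝ) : ℂ) := by
          rw [mul_smul, inv_smul_eq_iff₀ htb |>.2 e0]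
        rw [frameMatrix_mulVec, f1, pt, smul_add, smul_add, smul_smul, smul_smul]
        simp only [cons_val]
        have e3 : (((√2)⁻¹ : ℝ) : ℂ) * (((1 - Y ^ 2 / 2 : ℝ) : ℂ) + ((1 + Y ^ 2 / 2 : ℝ) : ℂ)) =
            (√2 : ℝ) := by
          rw [← e']; push_cast; ring
        have e4 : (((√2)⁻¹ : ℝ) : ℂ) * (((1 - Y ^ 2 / 2 : ℝ) : ℂ) - ((1 + Y ^ 2 / 2 : ℝ) : ℂ)) =
            (√2 : ℝ) * ((-(Y ^ 2 / 2) : ℝ) : ℂ) := by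
          rw [← e']; push_cast; ring
        rw [e3, e4, ofReal_mul]
  · rintro p ⟨z, hz, ⟨x, hx, hxn, hzx⟩, rfl⟩
    obtain ⟨k, rfl⟩ := (projOf_eq_iff hz hx).1 hzx
    have hk : k ≠ 0 := by
      rintro rfl
      exact hz (zero_smul _ _)
    suffices h : frameMatrix a b c *ᵥ (fun i => (x i : ℂ)) ∈ cone (Set.range γ) by
      rw [mulVec_smul]
      exact (cone_smul h hk).2
    have hxr : x 0 ^ 2 + x 1 ^ 2 - x 2 ^ 2 = 0 := by
      have h1 : ((x 0 ^ 2 + x 1 ^ 2 - x 2 ^ 2 : ℝ) : ℂ) = 0 := by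
        rw [← hxn, herm1]; push_cast; simp only [conj_ofReal]; ring
      exact_mod_cast h1
    rw [frameMatrix_mulVec]
    by_cases hα : x 1 + x 2 = 0
    · have hx2 : x 2 = -x 1 := by linarith
      have hx0 : x 0 = 0 := by
        rw [hx2] at hxr
        exact pow_eq_zero_iff two_ne_zero |>.1 (by linarith)
      have hx1 : x 1 ≠ 0 := by
        intro h0
        refine hx (funext fun i => ?_)
        fin_cases i <;> simp [hx0, hx2, h0]
      have e : (x 1 : ℂ) - x 2 = ((2 * x 1 : ℝ) : ℂ) := by rw [hx2]; push_cast; ring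
      rw [e, ← ofReal_add, hα, hx0, ofReal_zero, mul_zero, zero_smul, zero_smul, zero_add, zero_add]
      refine cone_smul hb (mul_ne_zero ?_ ?_)
      · exact_mod_cast inv_ne_zero h2
      · exact_mod_cast mul_ne_zero two_ne_zero hx1
    · have hk0 : (((√2)⁻¹ : ℝ) : ℂ) * (x 1 + x 2) ≠ 0 :=
        mul_ne_zero (by exact_mod_cast inv_ne_zero h2) (by exact_mod_cast hα)
      have h3 := cone_smul (hs (√2 * x 0 / (x 1 + x 2))) hk0
      rw [pt, smul_add, smul_add, smul_smul, smul_smul] at h3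
      have e1 : (√2)⁻¹ * (x 1 + x 2) * (√2 * x 0 / (x 1 + x 2)) = x 0 := by field_simp
      have e2 : (√2)⁻¹ * (x 1 + x 2) * -((√2 * x 0 / (x 1 + x 2)) ^ 2 / 2) =
          (√2)⁻¹ * (x 1 - x 2) := by
        have : (√2 : ℝ) ^ 2 = 2 := by rw [sq, h2']
        field_simp
        rw [this]
        linarith
      have e1' : (((√2)⁻¹ : ℝ) : ℂ) * (x 1 + x 2) * ((√2 * x 0 / (x 1 + x 2) : ℝ) : ℂ) = x 0 := by
        exact_mod_cast e1
      have e2' : (((√2)⁻¹ : ℝ) : ℂ) * (x 1 + x 2) *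
          ((-((√2 * x 0 / (x 1 + x 2)) ^ 2 / 2) : ℝ) : ℂ) =
          (((√2)⁻¹ : ℝ) : ℂ) * (x 1 - x 2) := by
        rw [← ofReal_add, ← ofReal_sub, ← ofReal_mul, ← ofReal_mul, ← ofReal_mul, e2]
      rwa [e1', e2'] at h3

lemma legendrian_rcircle (hγ : IsRegularKnot 2 γ v) (F : LoxFrame g l m a b c) (hgU : g ∈ U21)
    (hg : ∀ x, g *ᵥ x ∈ cone (Set.range γ) ↔ x ∈ cone (Set.range γ))
    (hg' : ∀ x, g⁻¹ *ᵥ x ∈ cone (Set.range γ) ↔ x ∈ cone (Set.range γ))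
    (hleg : ∀ t, herm1 (deriv v t) (v t) = 0) : IsRCircleSet (Set.range γ) := by
  obtain ⟨-, -, t₀, ht₀⟩ := (mem_cone_iff hγ).1 (attracting_mem hγ F hg)
  obtain ⟨hb, -, -, -, -, hiff, hne⟩ := local_data hγ F ht₀
  -- rephase `c` so that the derivative `d` of `z` at the fixed point becomes real
  obtain ⟨e, he, hd⟩ : ∃ e : ℂ, ‖e‖ = 1 ∧
      (herm1 (deriv v t₀) (e • c) / herm1 (v t₀) b).im = 0 := by
    set d := herm1 (deriv v t₀) c / herm1 (v t₀) b with hd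
    have hd0 : ‖d‖ ≠ 0 := norm_ne_zero_iff.2 (div_ne_zero (hne (hiff.1 (hleg t₀))) hb)
    refine ⟨d / (‖d‖ : ℝ), ?_, ?_⟩
    · rw [norm_div, Complex.norm_real, norm_norm, div_self hd0]
    · rw [herm1_smul_right, mul_div_assoc, ← hd, map_div₀, conj_ofReal, div_mul_eq_mul_div,
        mul_comm, mul_conj, ← ofReal_div, ofReal_im]
  have F' := F.rephase he
  have hz : ∀ z w, pt a b (e • c) z w ∈ cone (Set.range γ) → z.im = 0 := fun z w h =>
    legendrian_z_real hγ F' hg ht₀ (hleg t₀) hd h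
  have hp : ∀ z w, pt a b (e • c) z w ∈ cone (Set.range γ) →
      ∃ Y : ℝ, z = Y ∧ w = ((-(Y ^ 2 / 2) : ℝ) : ℂ) := by
    intro z w h
    have h1 := hz z w h
    have h2 := legendrian_w_real hγ F' hg ht₀ hleg hz h
    have h3 := pt_mem_null hγ F' h
    rw [normSq_apply, h1] at h3
    refine ⟨z.re, Complex.ext rfl h1, Complex.ext ?_ h2⟩
    rw [ofReal_re]
    linarith
  exact legendrian_rcircle_of_pt hγ F' (attracting_mem hγ (F.inv hgU) hg') hp
    (legendrian_surj hγ F' hg ht₀ (hleg t₀) hd hp)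

end Legendrian

/-! ### Density of the attracting fixed points -/

/-- Conjugates of a single loxodromic element have attracting fixed points dense in the limit
set, so non-transversality at these points propagates to the whole knot. -/
lemma legendrian_of_nontransversal {G : Set (Matrix (Fin 3) (Fin 3) ℂ)} (hG : IsDiscreteSubgroup G)
    {v₀ : C3} (hv₀ : (herm1 v₀ v₀).re < 0) {γ : ℝ → PC2} {v : ℝ → C3} (hγ : IsRegularKnot 2 γ v)
    (hL : limitSet G v₀ = Set.range γ)
    (hG' : ∀ h ∈ G, ∀ x, h *ᵥ x ∈ cone (Set.range γ) ↔ x ∈ cone (Set.range γ))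
    {g : Matrix (Fin 3) (Fin 3) ℂ} {l m : ℂ} {a b c : C3} (hg : g ∈ G) (F : LoxFrame g l m a b c)
    (hnt : ∀ g ∈ G, ∀ l m a b c, LoxFrame g l m a b c → ∀ t, herm1 a (v t) = 0 →
      herm1 (deriv v t) (v t) = 0) (t : ℝ) : herm1 (deriv v t) (v t) = 0 := by
  have hvt := v_mem_cone hγ t
  obtain ⟨h, r, b', hh, hb', hbn, hr, -, hlim⟩ := exists_contracts hG.subset hv₀ (hγ.nonzero t)
    (hγ.isNull t) (by rw [hL]; exact hvt.2)
  -- one of the two fixed points is not the repelling point of the contracting sequence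
  obtain ⟨f, hf, l', m', p, q, c', F', hpb⟩ : ∃ f ∈ G, ∃ l m p q c, LoxFrame f l m p q c ∧
      herm1 p b' ≠ 0 := by
    by_cases hab : herm1 a b' = 0
    · refine ⟨g⁻¹, hG.inv_mem g hg, _, _, _, _, _, F.inv (hG.subset hg), fun hbb => ?_⟩
      obtain ⟨k, hk⟩ := null_orth_parallel hb' hbn F.aa hab
      have h1 := F.ab
      rw [hk, herm1_smul_left, herm1_symm_zero hbb, mul_zero] at h1
      exact zero_ne_one h1
    · exact ⟨g, hg, l, m, a, b, c, F, hab⟩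
  have hp := attracting_mem hγ F' (hG' f hf)
  have hr0 : ∀ n, (r n : ℂ) ≠ 0 := fun n => ofReal_ne_zero.2 (hr n).ne'
  obtain ⟨s, k, hs, hk, hsk⟩ := exists_param_tendsto hγ (t₀ := t)
    (fun n => cone_smul ((hG' (h n) (hh n) p).2 hp) (hr0 n))
    (smul_ne_zero hpb (hγ.nonzero t)) (hlim p) (by rw [herm1_smul_left, hγ.isNull, mul_zero])
  have hz : ∀ n, herm1 (deriv v (s n)) (v (s n)) = 0 := by
    intro n
    refine hnt _ (hG.mul_mem _ (hG.mul_mem _ (hh n) _ hf) _ (hG.inv_mem _ (hh n))) _ _ _ _ _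
      (F'.conjugate (hG.subset (hh n))) (s n) ?_
    have h1 := congrArg (fun y => herm1 y (v (s n))) (hsk n)
    simp only [herm1_smul_left, hγ.isNull, mul_zero] at h1
    exact (mul_eq_zero.1 h1).resolve_left (hr0 n)
  have h1 := tendsto_herm1 (((continuous_deriv_v hγ).tendsto t).comp hs)
    (((continuous_v hγ).tendsto t).comp hs)
  exact tendsto_nhds_unique h1 (tendsto_const_nhds.congr fun n => (hz n).symm)

lemma cone_invariant {G : Set (Matrix (Fin 3) (Fin 3) ℂ)} (hG : IsDiscreteSubgroup G)
    {v₀ : C3} (hv : v₀ ≠ 0) {h : Matrix (Fin 3) (Fin 3) ℂ} (hh : h ∈ G) (x : C3) :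
    h *ᵥ x ∈ cone (limitSet G v₀) ↔ x ∈ cone (limitSet G v₀) := by
  have key : ∀ h ∈ G, ∀ x, x ∈ cone (limitSet G v₀) → h *ᵥ x ∈ cone (limitSet G v₀) :=
    fun h hh x hx => ⟨U21.ne_zero (hG.subset hh) hx.1, limitSet_invariant hG hv hh hx.1 hx.2⟩
  refine ⟨fun hx => ?_, key h hh x⟩
  have := key h⁻¹ (hG.inv_mem h hh) _ hx
  rwa [U21.inv_mulVec (hG.subset hh)] at this

theorem main {G : Set (Matrix (Fin 3) (Fin 3) ℂ)} (hG : IsDiscreteSubgroup G)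
    {v₀ : C3} (hv₀ : (herm1 v₀ v₀).re < 0) {γ : ℝ → PC2} {v : ℝ → C3} (hγ : IsRegularKnot 2 γ v)
    (hL : limitSet G v₀ = Set.range γ) :
    IsChainSet (Set.range γ) ∨ IsRCircleSet (Set.range γ) := by
  have hv : v₀ ≠ 0 := by
    rintro rfl
    simp [herm1_zero_left] at hv₀
  have hG' : ∀ h ∈ G, ∀ x, h *ᵥ x ∈ cone (Set.range γ) ↔ x ∈ cone (Set.range γ) := by
    rw [← hL]
    exact fun h hh x => cone_invariant hG hv hh x
  have hne : herm1 (v 0) (v (1 / 2)) ≠ 0 := fun h0 => by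
    have h1 := knot_inj hγ ((orth_v_iff hγ _ _).1 h0) (by norm_num [abs_of_pos])
    norm_num at h1
  have hl : ∀ t, projOf (v t) ∈ limitSet G v₀ := fun t => by
    rw [hL]; exact (v_mem_cone hγ t).2
  obtain ⟨g, hg, htr⟩ := exists_large_trace hG hv₀ (hγ.nonzero 0) (hγ.isNull 0)
    (hγ.nonzero (1 / 2)) (hγ.isNull (1 / 2)) hne (hl 0) (hl (1 / 2))
  obtain ⟨l, m, a, b, c, F⟩ := exists_frame (hG.subset hg) htr
  by_cases H : ∀ g ∈ G, ∀ l m a b c, LoxFrame g l m a b c → ∀ t, herm1 a (v t) = 0 →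
      herm1 (deriv v t) (v t) = 0
  · exact Or.inr (legendrian_rcircle hγ F (hG.subset hg) (hG' g hg) (hG' g⁻¹ (hG.inv_mem g hg))
      (legendrian_of_nontransversal hG hv₀ hγ hL hG' hg F H))
  · push Not at H
    obtain ⟨g, hg, l, m, a, b, c, F, t, ht₀, ht⟩ := H
    exact Or.inl (transversal_chain hγ F (hG.subset hg) (hG' g hg) (hG' g⁻¹ (hG.inv_mem g hg))
      ht₀ ht)

end KnotLimit

/-- If `G` is a discrete subgroup of `U(2,1)` whose limit set
equals the image of a `C²` regular knot `γ` in `∂H²_ℂ`, then the image of `γ`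
is a chain or an ℝ-circle. -/
theorem limitSet_knot_isChain_or_isRCircle
    (G : Set (Matrix (Fin 3) (Fin 3) ℂ)) (hG : IsDiscreteSubgroup G)
    (v₀ : C3) (hv₀re : (herm1 v₀ v₀).re < 0) (hv₀im : (herm1 v₀ v₀).im = 0)
    (γ : ℝ → PC2) (v : ℝ → C3) (hγ : IsRegularKnot 2 γ v)
    (hL : limitSet G v₀ = Set.range γ) :
    IsChainSet (Set.range γ) ∨ IsRCircleSet (Set.range γ) := by
  exact KnotLimit.main hG hv₀re hγ hL
end
end

section
/- Let G be a discrete subgroup of U(2,1) whose limit set L(G) equals the image of a C² regular knot in ∂H²_ℂ. Then either there exists w ∈ ℂ³ with ⟨w,w⟩₁ > 0 such that the chain {[z] ∈ ∂H²_ℂ : ⟨z,w⟩₁ = 0} is invariant under the projective action of every element of G, or there exists h ∈ U(2,1) such that for every g ∈ G the projective transformation induced by h⁻¹gh maps the canonical ℝ-circle ℙ²_ℝ ∩ ∂H²_ℂ onto itself. -/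
/-!
Since the limit set has two distinct points, `exists_eigenvector_one_lt` together with `exists_lox`
produces a loxodromic element `g ∈ G`. Its attracting
and repelling fixed points `[e]`, `[f]` lie on the knot (`InvKnot.attract`); let `w` be the unit
vector polar to the axis. In the coordinates `e + b w + c f`, the element `g` multiplies `b` by
`κ = n / l` and `c` by `|κ|²`, and it pushes the knot into the germ of the knot at `[e]`, which is a
regular `C²` curve. Comparing the rates of contraction with the Taylor expansion of the knot at
`[e]` determines the knot globally.

* If the knot is transverse to the contact plane at `[e]`, then `c` is of first order while `b`
  contracts more slowly; hence `b = 0` on the whole knot (`InvKnot.transverse`), which therefore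
  lies in the chain polar to `w`, and `G` preserves this chain.
* If the knot is tangent to the contact plane at `[e]`, then `b` is of first order and `c` of second
  order, and the knot is a parabola `b = x`, `c = (-1/2 + τ i) x²` with real parameter `x`, after
  rotating `w` (`InvKnot.tangent_normal`).

Suppose the second case holds for all loxodromic elements of `G`. If `τ = 0`, the parabola is an
ℝ-circle, and elements of `G`, which send three of its points to real points, are complex multiples
of real matrices in suitable coordinates (`mapSet_RCircle_subset`, `InvKnot.real_case`). If `τ ≠ 0`,
the parabola is tangent to the contact planes only at `[e]` and `[f]` (`InvKnot.tangent_point`). The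
images `[k e]`, `[k f]` for `k ∈ G` are attracting fixed points of conjugates of `g` and `g⁻¹`, hence
points of tangency, hence among `[e]`, `[f]`; so `G` preserves the chain polar to `w`
(`chain_invariant`).
-/

open Complex Matrix ComplexConjugate

noncomputable section

open Filter Topology

/-! ### Hermitian algebra of null vectors -/

lemma herm1_add_left (x y z : C3) : herm1 (x + y) z = herm1 x z + herm1 y z := by
  simp [herm1]; ring

lemma herm1_sub_left (x y z : C3) : herm1 (x - y) z = herm1 x z - herm1 y z := by
  simp [herm1]; ring

lemma herm1_smul_left (a : ℂ) (x z : C3) : herm1 (a • x) z = a * herm1 x z := by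
  simp [herm1]; ring

lemma herm1_add_right (x y z : C3) : herm1 x (y + z) = herm1 x y + herm1 x z := by
  simp [herm1]; ring

lemma herm1_sub_right (x y z : C3) : herm1 x (y - z) = herm1 x y - herm1 x z := by
  simp [herm1]; ring

lemma herm1_smul_right (a : ℂ) (x z : C3) : herm1 x (a • z) = conj a * herm1 x z := by
  simp [herm1]; ring

lemma herm1_conj (x y : C3) : conj (herm1 x y) = herm1 y x := by
  simp [herm1]; ring

lemma herm1_zero_left (z : C3) : herm1 0 z = 0 := by simp [herm1]

lemma herm1_eq_zero_symm {x y : C3} (h : herm1 x y = 0) : herm1 y x = 0 := by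
  rw [← herm1_conj, h, map_zero]

lemma herm1_self_im (z : C3) : (herm1 z z).im = 0 := by
  rw [← Complex.conj_eq_iff_im, herm1_conj]

/-- A null vector whose last coordinate vanishes is zero. -/
lemma null_eq_zero {y : C3} (hy : herm1 y y = 0) (h2 : y 2 = 0) : y = 0 := by
  have h : (normSq (y 0) + normSq (y 1) : ℝ) = 0 := by
    have := congrArg Complex.re hy
    simp only [herm1, h2, mul_conj] at this
    simpa using this
  have h0 : normSq (y 0) = 0 := by linarith [normSq_nonneg (y 0), normSq_nonneg (y 1)]
  have h1 : normSq (y 1) = 0 := by linarith [normSq_nonneg (y 0), normSq_nonneg (y 1)]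
  ext i
  fin_cases i
  · simpa using h0
  · simpa using h1
  · simpa using h2

/-- The form has no totally isotropic plane: orthogonal null vectors are proportional.
The combination `e₂ z - z₂ e` is null with vanishing last coordinate. -/
lemma null_orth_prop {z e : C3} (hz : herm1 z z = 0) (he : herm1 e e = 0) (he0 : e ≠ 0)
    (h : herm1 z e = 0) : z = (z 2 / e 2) • e := by
  have he2 : e 2 ≠ 0 := fun h2 => he0 (null_eq_zero he h2)
  have h' := herm1_eq_zero_symm h
  have key : e 2 • z - z 2 • e = 0 := by
    apply null_eq_zero
    · simp only [herm1_sub_left, herm1_sub_right, herm1_smul_left, herm1_smul_right, hz, he, h, h']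
      ring
    · simp [mul_comm]
  ext i
  have := congrFun key i
  simp only [Pi.sub_apply, Pi.smul_apply, smul_eq_mul, Pi.zero_apply] at this ⊢
  field_simp
  linear_combination this

lemma null_orth_prop_ne {z e : C3} (hz : herm1 z z = 0) (he : herm1 e e = 0) (hz0 : z ≠ 0)
    (he0 : e ≠ 0) (h : herm1 z e = 0) : ∃ c : ℂ, c ≠ 0 ∧ z = c • e := by
  refine ⟨z 2 / e 2, ?_, null_orth_prop hz he he0 h⟩
  intro hc
  apply hz0
  rw [null_orth_prop hz he he0 h, hc, zero_smul]

lemma projOf_eq_iff {z y : C3} (hz : z ≠ 0) (hy : y ≠ 0) :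
    projOf z = projOf y ↔ ∃ c : ℂ, c ≠ 0 ∧ z = c • y := by
  rw [projOf, projOf, dif_neg hz, dif_neg hy, Projectivization.mk_eq_mk_iff']
  constructor
  · rintro ⟨a, rfl⟩
    exact ⟨a, fun h => hz (by rw [h, zero_smul]), rfl⟩
  · rintro ⟨a, -, rfl⟩
    exact ⟨a, rfl⟩

lemma projOf_smul {c : ℂ} (hc : c ≠ 0) (z : C3) : projOf (c • z) = projOf z := by
  by_cases hz : z = 0
  · rw [hz, smul_zero]
  · exact (projOf_eq_iff (smul_ne_zero hc hz) hz).2 ⟨c, hc, rfl⟩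

lemma U21_mulVec_ne {g : Matrix (Fin 3) (Fin 3) ℂ} (hg : IsUnit g.det) {z : C3} (hz : z ≠ 0) :
    g.mulVec z ≠ 0 := by
  intro h
  apply hz
  have : g⁻¹.mulVec (g.mulVec z) = z := by
    rw [mulVec_mulVec, nonsing_inv_mul _ hg, one_mulVec]
  rw [← this, h, mulVec_zero]

lemma U21_inv {g : Matrix (Fin 3) (Fin 3) ℂ} (hg : g ∈ U21) : g⁻¹ ∈ U21 := by
  refine ⟨(isUnit_nonsing_inv_det_iff).2 hg.1, fun z w => ?_⟩
  rw [← hg.2, mulVec_mulVec, mulVec_mulVec, mul_nonsing_inv _ hg.1, one_mulVec, one_mulVec]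

lemma U21_mul {g h : Matrix (Fin 3) (Fin 3) ℂ} (hg : g ∈ U21) (hh : h ∈ U21) : g * h ∈ U21 := by
  refine ⟨by rw [det_mul]; exact hg.1.mul hh.1, fun z w => ?_⟩
  rw [← mulVec_mulVec, ← mulVec_mulVec, hg.2, hh.2]

/-- Two mutually inverse matrices which both map `S` into itself map `S` onto itself. -/
lemma mapSet_eq_of_subset {M N : Matrix (Fin 3) (Fin 3) ℂ} {S : Set PC2}
    (hS : ∀ p ∈ S, ∃ z : C3, z ≠ 0 ∧ p = projOf z) (hMN : M * N = 1)
    (hM : mapSet M S ⊆ S) (hN : mapSet N S ⊆ S) : mapSet M S = S := by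
  refine hM.antisymm fun p hp => ?_
  obtain ⟨z, hz, rfl⟩ := hS p hp
  have e : M.mulVec (N.mulVec z) = z := by rw [mulVec_mulVec, hMN, one_mulVec]
  refine ⟨N.mulVec z, ?_, hN ⟨z, hz, hp, rfl⟩, by rw [e]⟩
  intro h
  rw [h, mulVec_zero] at e
  exact hz e.symm

/-- Gram data of a frame with two null vectors `e`, `f` and a unit positive vector `w`
orthogonal to both. -/
structure NullFrame (e f w : C3) : Prop where
  ee : herm1 e e = 0
  ff : herm1 f f = 0
  ef : herm1 e f = 1
  ww : herm1 w w = 1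
  ew : herm1 e w = 0
  fw : herm1 f w = 0

namespace NullFrame
variable {e f w : C3}

lemma fe (h : NullFrame e f w) : herm1 f e = 1 := by rw [← herm1_conj, h.ef, map_one]
lemma we (h : NullFrame e f w) : herm1 w e = 0 := herm1_eq_zero_symm h.ew
lemma wf (h : NullFrame e f w) : herm1 w f = 0 := herm1_eq_zero_symm h.fw

lemma swap (h : NullFrame e f w) : NullFrame f e w := ⟨h.ff, h.ee, h.fe, h.ww, h.fw, h.ew⟩

lemma e_ne (h : NullFrame e f w) : e ≠ 0 := by
  rintro rfl
  have := h.ef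
  simp [herm1] at this

lemma map (h : NullFrame e f w) {g : Matrix (Fin 3) (Fin 3) ℂ} (hg : g ∈ U21) :
    NullFrame (g.mulVec e) (g.mulVec f) (g.mulVec w) := by
  constructor <;> rw [hg.2]
  exacts [h.ee, h.ff, h.ef, h.ww, h.ew, h.fw]

end NullFrame

/-! ### Null frames and loxodromic elements -/

lemma herm1_nondeg {x : C3} (h : ∀ y, herm1 x y = 0) : x = 0 := by
  ext i
  have := h (Pi.single i 1)
  fin_cases i <;> simpa [herm1, Pi.single_apply] using this

namespace NullFrame
variable {e f w : C3}

/-- The matrix with columns `w`, `(e + f) / √2`, `(e - f) / √2`. -/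
def frameMat (e f w : C3) : Matrix (Fin 3) (Fin 3) ℂ :=
  Matrix.of fun i j => ![w i, ((√2)⁻¹ : ℝ) * (e i + f i), ((√2)⁻¹ : ℝ) * (e i - f i)] j

lemma frameMat_mulVec (e f w x : C3) : (frameMat e f w).mulVec x =
    x 0 • w + (((√2)⁻¹ : ℝ) * (x 1 + x 2) : ℂ) • e + (((√2)⁻¹ : ℝ) * (x 1 - x 2) : ℂ) • f := by
  ext i
  simp only [frameMat, mulVec, dotProduct, Fin.sum_univ_three, of_apply, cons_val, Pi.add_apply,
    Pi.smul_apply, smul_eq_mul]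
  ring

lemma inv_sqrt_two_sq : (((√2)⁻¹ : ℝ) : ℂ) * (((√2)⁻¹ : ℝ) : ℂ) = 1 / 2 := by
  rw [← Complex.ofReal_mul, ← mul_inv, Real.mul_self_sqrt (by norm_num)]
  norm_num

lemma frameMat_mem (h : NullFrame e f w) : frameMat e f w ∈ U21 := by
  have key : ∀ z y : C3, herm1 ((frameMat e f w).mulVec z) ((frameMat e f w).mulVec y)
      = herm1 z y := by
    intro z y
    simp only [frameMat_mulVec, herm1_add_left, herm1_add_right, herm1_smul_left,
      herm1_smul_right, h.ee, h.ff, h.ef, h.ww, h.ew, h.fw, h.fe, h.we, h.wf, map_mul, map_add,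
      map_sub, conj_ofReal]
    simp only [herm1]
    linear_combination (2 * (z 1 * conj (y 1) - z 2 * conj (y 2))) * inv_sqrt_two_sq
  refine ⟨?_, key⟩
  rw [isUnit_iff_ne_zero]
  intro hd
  obtain ⟨x, hx, hx0⟩ := exists_mulVec_eq_zero_iff.2 hd
  refine hx (herm1_nondeg fun y => ?_)
  rw [← key, hx0, herm1_zero_left]

/-- Coordinates in a null frame are read off by pairing with the dual frame. -/
lemma expand (h : NullFrame e f w) (z : C3) :
    z = herm1 z f • e + herm1 z w • w + herm1 z e • f := by
  have hz : z = (frameMat e f w).mulVec ((frameMat e f w)⁻¹.mulVec z) := by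
    rw [mulVec_mulVec, mul_nonsing_inv _ h.frameMat_mem.1, one_mulVec]
  set x := (frameMat e f w)⁻¹.mulVec z
  rw [frameMat_mulVec] at hz
  rw [hz]
  simp only [herm1_add_left, herm1_smul_left, h.ee, h.ff, h.ef, h.ww, h.ew, h.fw, h.fe, h.we, h.wf]
  ext i
  simp only [Pi.add_apply, Pi.smul_apply, smul_eq_mul]
  ring

lemma ext_coord (h : NullFrame e f w) {z y : C3} (h1 : herm1 z e = herm1 y e)
    (h2 : herm1 z f = herm1 y f) (h3 : herm1 z w = herm1 y w) : z = y := by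
  rw [h.expand z, h.expand y, h1, h2, h3]

lemma herm_coord (h : NullFrame e f w) (z y : C3) :
    herm1 z y = herm1 z f * conj (herm1 y e) + herm1 z e * conj (herm1 y f)
      + herm1 z w * conj (herm1 y w) := by
  conv_lhs => rw [h.expand y]
  simp only [herm1_add_right, herm1_smul_right]
  ring

/-- Real combinations of a null frame lie in the image of `ℝ³` under the frame matrix. -/
lemma real_comb (e f w : C3) (x y z : ℝ) : ∃ u : Fin 3 → ℝ,
    (x : ℂ) • e + (y : ℂ) • w + (z : ℂ) • f
      = (frameMat e f w).mulVec (fun i => (u i : ℂ)) := by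
  refine ⟨![y, (√2)⁻¹ * (x + z), (√2)⁻¹ * (x - z)], ?_⟩
  rw [frameMat_mulVec]
  ext i
  simp only [Pi.add_apply, Pi.smul_apply, smul_eq_mul, cons_val, ofReal_mul, ofReal_add, ofReal_sub]
  linear_combination (-2 * (x * e i + z * f i)) * inv_sqrt_two_sq

end NullFrame

/-- Any two null vectors with `⟨e, f⟩ = 1` complete to a null frame; the third vector is the
`J`-conjugate of their cross product. -/
lemma exists_nullFrame {e f : C3} (he : herm1 e e = 0) (hf : herm1 f f = 0)
    (hef : herm1 e f = 1) : ∃ w, NullFrame e f w := by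
  have hfe : herm1 f e = 1 := by rw [← herm1_conj, hef, map_one]
  refine ⟨![conj (e 1 * f 2 - e 2 * f 1), conj (e 2 * f 0 - e 0 * f 2),
    -conj (e 0 * f 1 - e 1 * f 0)], he, hf, hef, ?_, ?_, ?_⟩
  · have : herm1 e f * herm1 f e - herm1 e e * herm1 f f = 1 := by rw [he, hef, hfe]; ring
    rw [← this]
    simp [herm1]
    ring
  · simp [herm1]; ring
  · simp [herm1]; ring

/-- `g ∈ U(2,1)` is loxodromic, with eigenvectors `e`, `f`, `w` and eigenvalues `l`, `m`, `n`:
`e` spans the attracting fixed point, `f` the repelling one, and `w` is polar to the axis. -/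
structure Lox (g : Matrix (Fin 3) (Fin 3) ℂ) (e f w : C3) (l m n : ℂ) : Prop where
  frame : NullFrame e f w
  mem : g ∈ U21
  ge : g.mulVec e = l • e
  gf : g.mulVec f = m • f
  gw : g.mulVec w = n • w
  lm : m * conj l = 1
  nn : n * conj n = 1
  one_lt : 1 < ‖l‖

namespace Lox
variable {g : Matrix (Fin 3) (Fin 3) ℂ} {e f w : C3} {l m n : ℂ}

lemma l_ne (h : Lox g e f w l m n) : l ≠ 0 := by
  have := h.one_lt
  intro h0
  rw [h0, norm_zero] at this
  linarith

lemma conj_l_ne (h : Lox g e f w l m n) : conj l ≠ 0 := by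
  simpa using h.l_ne

lemma m_ne (h : Lox g e f w l m n) : m ≠ 0 := left_ne_zero_of_mul_eq_one h.lm
lemma n_ne (h : Lox g e f w l m n) : n ≠ 0 := left_ne_zero_of_mul_eq_one h.nn

lemma inv (h : Lox g e f w l m n) : Lox g⁻¹ f e w m⁻¹ l⁻¹ n⁻¹ := by
  have aux : ∀ (x : C3) (a : ℂ), a ≠ 0 → g.mulVec x = a • x → g⁻¹.mulVec x = a⁻¹ • x := by
    intro x a ha hx
    have : x = a⁻¹ • g.mulVec x := by rw [hx, smul_smul, inv_mul_cancel₀ ha, one_smul]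
    conv_lhs => rw [this]
    rw [mulVec_smul, mulVec_mulVec, nonsing_inv_mul _ h.mem.1, one_mulVec]
  have hm : m = (conj l)⁻¹ := eq_inv_of_mul_eq_one_left h.lm
  refine ⟨h.frame.swap, U21_inv h.mem, aux _ _ h.m_ne h.gf, aux _ _ h.l_ne h.ge,
    aux _ _ h.n_ne h.gw, ?_, ?_, ?_⟩
  · rw [hm]
    simp [h.l_ne]
  · rw [map_inv₀, ← mul_inv, h.nn, inv_one]
  · rw [hm, inv_inv, RCLike.norm_conj]
    exact h.one_lt

lemma conjugate (h : Lox g e f w l m n) {k : Matrix (Fin 3) (Fin 3) ℂ} (hk : k ∈ U21) :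
    Lox (k * g * k⁻¹) (k.mulVec e) (k.mulVec f) (k.mulVec w) l m n := by
  have aux : ∀ (x : C3) (a : ℂ), g.mulVec x = a • x →
      (k * g * k⁻¹).mulVec (k.mulVec x) = a • k.mulVec x := by
    intro x a hx
    rw [mulVec_mulVec, Matrix.mul_assoc, nonsing_inv_mul _ hk.1, Matrix.mul_one, ← mulVec_mulVec,
      hx, mulVec_smul]
  exact ⟨h.frame.map hk, U21_mul (U21_mul hk h.mem) (U21_inv hk), aux _ _ h.ge, aux _ _ h.gf,
    aux _ _ h.gw, h.lm, h.nn, h.one_lt⟩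

lemma pow_mulVec (h : Lox g e f w l m n) (N : ℕ) (z : C3) :
    (g ^ N).mulVec z = (l ^ N * herm1 z f) • e + (n ^ N * herm1 z w) • w
      + (m ^ N * herm1 z e) • f := by
  induction N with
  | zero => simpa using h.frame.expand z
  | succ N ih =>
    rw [pow_succ', ← mulVec_mulVec, ih]
    simp only [mulVec_add, mulVec_smul, h.ge, h.gf, h.gw, pow_succ]
    ext i
    simp only [Pi.add_apply, Pi.smul_apply, smul_eq_mul]
    ring

end Lox

/-- An eigenvalue off the unit circle makes an element of `U(2,1)` loxodromic. -/
lemma exists_lox {g : Matrix (Fin 3) (Fin 3) ℂ} (hg : g ∈ U21) {l : ℂ} (hl : 1 < ‖l‖)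
    {e : C3} (he0 : e ≠ 0) (hge : g.mulVec e = l • e) :
    ∃ e f w m n, Lox g e f w l m n := by
  have hl0 : l ≠ 0 := by
    intro h0
    rw [h0, norm_zero] at hl
    linarith
  have hcl0 : conj l ≠ 0 := by simpa using hl0
  set m : ℂ := (conj l)⁻¹ with hm
  have hmn : ‖m‖ < 1 := by
    rw [hm, norm_inv, RCLike.norm_conj]
    exact inv_lt_one_of_one_lt₀ hl
  -- eigenvectors whose eigenvalue is off the unit circle are null
  have null : ∀ (x : C3) (a : ℂ), ‖a‖ ≠ 1 → g.mulVec x = a • x → herm1 x x = 0 := by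
    intro x a ha hx
    have h1 := hg.2 x x
    rw [hx, herm1_smul_left, herm1_smul_right, ← mul_assoc, mul_conj, normSq_eq_norm_sq] at h1
    have h2 : (((‖a‖ ^ 2 : ℝ) : ℂ) - 1) * herm1 x x = 0 := by linear_combination h1
    rcases mul_eq_zero.1 h2 with h3 | h3
    · exfalso
      have : ‖a‖ ^ 2 = 1 := by
        have := sub_eq_zero.1 h3
        exact_mod_cast this
      rw [pow_eq_one_iff_of_nonneg (norm_nonneg a) two_ne_zero] at this
      exact ha this
    · exact h3
  have hee := null e l hl.ne' hge
  -- `1 / conj l` is an eigenvalue, since `g - 1 / conj l` maps into the hyperplane `e^⊥`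
  have hdet : (g - m • (1 : Matrix (Fin 3) (Fin 3) ℂ)).det = 0 := by
    rw [← det_transpose, ← exists_mulVec_eq_zero_iff]
    refine ⟨![conj (e 0), conj (e 1), -conj (e 2)], ?_, ?_⟩
    · intro h
      apply he0
      ext i
      fin_cases i
      · simpa using congrFun h 0
      · simpa using congrFun h 1
      · simpa using congrFun h 2
    · have key : ∀ z : C3, herm1 ((g - m • (1 : Matrix (Fin 3) (Fin 3) ℂ)).mulVec z) e = 0 := by
        intro z
        have := hg.2 z e
        rw [hge, herm1_smul_right] at this
        rw [sub_mulVec, smul_mulVec, one_mulVec, herm1_sub_left, herm1_smul_left, ← this, hm]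
        field_simp
        ring
      ext i
      have := key (Pi.single i 1)
      simp only [herm1, mulVec_single_one, col_apply] at this
      simp only [mulVec, dotProduct, Fin.sum_univ_three, transpose_apply, cons_val, Pi.zero_apply]
      linear_combination this
  obtain ⟨f, hf0, hf⟩ := exists_mulVec_eq_zero_iff.2 hdet
  have hgf : g.mulVec f = m • f := by
    rw [sub_mulVec, smul_mulVec, one_mulVec, sub_eq_zero] at hf
    exact hf
  have hff := null f m hmn.ne hgf
  have hef : herm1 e f ≠ 0 := by
    intro h
    obtain ⟨c, hc, hec⟩ := null_orth_prop_ne hee hff he0 hf0 h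
    have h1 : (l - m) • e = 0 := by
      rw [sub_smul, ← hge, hec, mulVec_smul, hgf, smul_comm, sub_self]
    rcases smul_eq_zero.1 h1 with h2 | h2
    · rw [sub_eq_zero.1 h2] at hl
      linarith
    · exact he0 h2
  have he'f : herm1 ((herm1 e f)⁻¹ • e) f = 1 := by
    rw [herm1_smul_left, inv_mul_cancel₀ hef]
  obtain ⟨w, hw⟩ := exists_nullFrame (e := (herm1 e f)⁻¹ • e) (f := f)
    (by rw [herm1_smul_left, herm1_smul_right, hee]; ring) hff he'f
  have hge' : g.mulVec ((herm1 e f)⁻¹ • e) = l • ((herm1 e f)⁻¹ • e) := by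
    rw [mulVec_smul, hge, smul_comm]
  set e' := (herm1 e f)⁻¹ • e
  have hm0 : m ≠ 0 := inv_ne_zero hcl0
  have h1 : herm1 (g.mulVec w) e' = 0 := by
    have := hg.2 w e'
    rw [hge', herm1_smul_right, hw.we] at this
    exact (mul_eq_zero.1 this).resolve_left hcl0
  have h2 : herm1 (g.mulVec w) f = 0 := by
    have := hg.2 w f
    rw [hgf, herm1_smul_right, hw.wf] at this
    exact (mul_eq_zero.1 this).resolve_left (by simpa using hm0)
  have hgw : g.mulVec w = herm1 (g.mulVec w) w • w := by
    conv_lhs => rw [hw.expand (g.mulVec w), h1, h2]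
    simp
  refine ⟨e', f, w, m, herm1 (g.mulVec w) w, hw, hg, hge', hgf, hgw, inv_mul_cancel₀ hcl0, ?_, hl⟩
  have := hg.2 w w
  rw [hgw, herm1_smul_left, herm1_smul_right, hw.ww] at this
  simpa [hw.ww, herm1_smul_left] using this

/-! ### The limit set -/

lemma projOf_of_ne {z : C3} (hz : z ≠ 0) : projOf z = Projectivization.mk ℂ z hz := dif_neg hz

/-- A closed condition on vectors that is invariant under scaling passes from the orbit to the
limit set. -/
lemma limitSet_closed_condition {G : Set (Matrix (Fin 3) (Fin 3) ℂ)} (hG : G ⊆ U21) {v₀ : C3}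
    (hv₀ : v₀ ≠ 0) {P : Set C3} (hP : IsClosed P)
    (hPs : ∀ (c : ℂ) (z : C3), c ≠ 0 → z ∈ P → c • z ∈ P)
    (horb : ∀ g ∈ G, g.mulVec v₀ ∈ P) {z : C3} (hz : z ≠ 0)
    (hzL : projOf z ∈ limitSet G v₀) : z ∈ P := by
  set C : Set PC2 := {p | ∃ z : C3, z ≠ 0 ∧ z ∈ P ∧ p = projOf z} with hC
  have mem : ∀ y : C3, y ≠ 0 → (projOf y ∈ C ↔ y ∈ P) := by
    intro y hy
    constructor
    · rintro ⟨x, hx, hxP, hyx⟩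
      obtain ⟨c, hc, rfl⟩ := (projOf_eq_iff hy hx).1 hyx
      exact hPs c x hc hxP
    · intro h
      exact ⟨y, hy, h, rfl⟩
  have hclosed : IsClosed C := by
    have hq : IsQuotientMap (Projectivization.mk' ℂ : {v : C3 // v ≠ 0} → PC2) :=
      isQuotientMap_quotient_mk'
    refine hq.isClosed_preimage.1 ?_
    have : (Projectivization.mk' ℂ : {v : C3 // v ≠ 0} → PC2) ⁻¹' C = Subtype.val ⁻¹' P := by
      ext ⟨y, hy⟩
      rw [Set.mem_preimage, Set.mem_preimage, ← mem y hy, projOf_of_ne hy]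
      rfl
    rw [this]
    exact hP.preimage continuous_subtype_val
  rw [← mem z hz]
  have h1 : projOf z ∈ closure (projOrbit G v₀) :=
    mem_closure_iff_clusterPt.2 (AccPt.clusterPt hzL)
  refine closure_minimal ?_ hclosed h1
  rintro p ⟨g, hg, rfl⟩
  exact (mem _ (U21_mulVec_ne (hG hg).1 hv₀)).2 (horb g hg)

/-- The limit set is invariant under the group. -/
lemma limitSet_invariant {G : Set (Matrix (Fin 3) (Fin 3) ℂ)} (hG : IsDiscreteSubgroup G) {v₀ : C3}
    (hv₀ : v₀ ≠ 0) {z : C3} (hz : z ≠ 0) (hzL : projOf z ∈ limitSet G v₀)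
    {g : Matrix (Fin 3) (Fin 3) ℂ} (hg : g ∈ G) : projOf (g.mulVec z) ∈ limitSet G v₀ := by
  have hdet := (hG.subset hg).1
  have hinj : Function.Injective (Matrix.mulVecLin g) := by
    rw [← LinearMap.ker_eq_bot, LinearMap.ker_eq_bot']
    intro m hm
    by_contra h0
    exact U21_mulVec_ne hdet h0 hm
  set F : PC2 → PC2 := Projectivization.map (Matrix.mulVecLin g) hinj with hF
  have hFmk : ∀ y : C3, y ≠ 0 → F (projOf y) = projOf (g.mulVec y) := by
    intro y hy
    rw [projOf_of_ne hy, projOf_of_ne (U21_mulVec_ne hdet hy)]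
    rfl
  have hcont : Continuous F := by
    refine Continuous.quotient_map' ?_ _
    refine Continuous.subtype_mk ?_ _
    exact (LinearMap.continuous_of_finiteDimensional _).comp continuous_subtype_val
  have h1 := AccPt.map hzL hcont.continuousAt (Projectivization.map_injective _ hinj)
  rw [hFmk z hz, map_principal] at h1
  refine h1.mono (principal_mono.2 ?_)
  rintro _ ⟨p, ⟨k, hk, rfl⟩, rfl⟩
  rw [hFmk _ (U21_mulVec_ne (hG.subset hk).1 hv₀)]
  exact ⟨g * k, hG.mul_mem g hg k hk, by rw [mulVec_mulVec]⟩

/-- If the limit set consists of null points, the orbit of `v₀` in `ℂ³` is unbounded. -/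
lemma orbit_unbounded {G : Set (Matrix (Fin 3) (Fin 3) ℂ)} (hG : G ⊆ U21) {v₀ : C3}
    (hv₀ : (herm1 v₀ v₀).re < 0) {z : C3} (hz : z ≠ 0) (hnull : herm1 z z = 0)
    (hzL : projOf z ∈ limitSet G v₀) (M : ℝ) : ∃ g ∈ G, M < ‖g.mulVec v₀‖ := by
  by_contra! h
  have hv0 : v₀ ≠ 0 := by
    rintro rfl
    simp [herm1] at hv₀
  have := limitSet_closed_condition hG hv0
    (P := {y | M ^ 2 * (herm1 y y).re ≤ (herm1 v₀ v₀).re * ‖y‖ ^ 2}) ?_ ?_ ?_ hz hzL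
  · simp only [Set.mem_ofPred_eq, hnull, Complex.zero_re, mul_zero] at this
    have : 0 < ‖z‖ ^ 2 := by positivity
    nlinarith
  · apply isClosed_le
    · simp only [herm1]
      fun_prop
    · fun_prop
  · intro c y hc hy
    simp only [Set.mem_ofPred_eq, herm1_smul_left, herm1_smul_right, norm_smul, mul_pow] at hy ⊢
    rw [← mul_assoc, mul_comm (conj c), mul_conj, normSq_eq_norm_sq, re_ofReal_mul]
    nlinarith [mul_le_mul_of_nonneg_left hy (sq_nonneg ‖c‖)]
  · intro g hg
    simp only [Set.mem_ofPred_eq]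
    rw [(hG hg).2]
    have := h g hg
    have : ‖g.mulVec v₀‖ ^ 2 ≤ M ^ 2 := by gcongr
    nlinarith

/-- If every element of the group fixes the null point `[x]` with unimodular multiplier, the limit
set is contained in `{[x]}`: horospheres at `[x]` are preserved. -/
lemma limitSet_subset_of_parabolic {G : Set (Matrix (Fin 3) (Fin 3) ℂ)} (hG : G ⊆ U21) {v₀ : C3}
    (hv₀ : (herm1 v₀ v₀).re < 0) {x : C3}
    (hfix : ∀ g ∈ G, ∃ c : ℂ, ‖c‖ = 1 ∧ g.mulVec x = c • x) {z : C3} (hz : z ≠ 0)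
    (hnull : herm1 z z = 0) (hzL : projOf z ∈ limitSet G v₀) : herm1 z x = 0 := by
  have hv0 : v₀ ≠ 0 := by
    rintro rfl
    simp [herm1] at hv₀
  have := limitSet_closed_condition hG hv0
    (P := {y | ‖herm1 v₀ x‖ ^ 2 * (herm1 y y).re = (herm1 v₀ v₀).re * ‖herm1 y x‖ ^ 2})
      ?_ ?_ ?_ hz hzL
  · simp only [Set.mem_ofPred_eq, hnull, Complex.zero_re, mul_zero] at this
    rcases mul_eq_zero.1 this.symm with h | h
    · linarith
    · simpa using h
  · apply isClosed_eq
    · simp only [herm1]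
      fun_prop
    · simp only [herm1]
      fun_prop
  · intro c y hc hy
    simp only [Set.mem_ofPred_eq, herm1_smul_left, herm1_smul_right, norm_mul, mul_pow] at hy ⊢
    rw [← mul_assoc, mul_comm (conj c), mul_conj, normSq_eq_norm_sq, re_ofReal_mul]
    linear_combination ‖c‖ ^ 2 * hy
  · intro g hg
    obtain ⟨c, hc, hgx⟩ := hfix g hg
    simp only [Set.mem_ofPred_eq]
    have h1 := (hG hg).2 v₀ x
    rw [hgx, herm1_smul_right] at h1
    rw [(hG hg).2, ← h1, norm_mul, RCLike.norm_conj, hc]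
    ring

/-- The trace is a sum of three eigenvalues, so one of them has modulus at least `‖tr g‖ / 3`. -/
lemma exists_eigenvector_of_trace {g : Matrix (Fin 3) (Fin 3) ℂ} (h : 3 < ‖g.trace‖) :
    ∃ l : ℂ, 1 < ‖l‖ ∧ ∃ e : C3, e ≠ 0 ∧ g.mulVec e = l • e := by
  by_contra! hcon
  have hroots : ∀ l ∈ g.charpoly.roots, ‖l‖ ≤ 1 := by
    intro l hl
    by_contra! hl1
    have hr := (Polynomial.mem_roots'.1 hl).2
    rw [Polynomial.IsRoot.def, eval_charpoly] at hr
    obtain ⟨e, he, hge⟩ := exists_mulVec_eq_zero_iff.2 hr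
    refine hcon l hl1 e he ?_
    rw [sub_mulVec, sub_eq_zero] at hge
    rw [← hge]
    simp [scalar_apply, ← smul_one_eq_diagonal, smul_mulVec]
  have hcard : Multiset.card g.charpoly.roots ≤ 3 := by
    have := g.charpoly.card_roots'
    rwa [charpoly_natDegree_eq_dim, Fintype.card_fin] at this
  have h1 : ‖g.trace‖ ≤ (g.charpoly.roots.map (fun x => ‖x‖)).sum := by
    rw [trace_eq_sum_roots_charpoly]
    exact norm_multiset_sum_le _
  have h2 : (g.charpoly.roots.map (fun x => ‖x‖)).sum
      ≤ Multiset.card (g.charpoly.roots.map (fun x => ‖x‖)) • (1 : ℝ) := by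
    apply Multiset.sum_le_card_nsmul
    intro x hx
    obtain ⟨l, hl, rfl⟩ := Multiset.mem_map.1 hx
    exact hroots l hl
  rw [Multiset.card_map, nsmul_eq_mul, mul_one] at h2
  have : (Multiset.card g.charpoly.roots : ℝ) ≤ 3 := by exact_mod_cast hcard
  linarith

/-! ### Existence of loxodromic elements -/

/-- The adjoint `J Mᴴ J` of `M` with respect to the Hermitian form. -/
def adjJ (M : Matrix (Fin 3) (Fin 3) ℂ) : Matrix (Fin 3) (Fin 3) ℂ :=
  diagonal ![1, 1, -1] * Mᴴ * diagonal ![1, 1, -1]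

lemma herm1_adjJ (M : Matrix (Fin 3) (Fin 3) ℂ) (z y : C3) :
    herm1 z ((adjJ M).mulVec y) = herm1 (M.mulVec z) y := by
  simp only [herm1, adjJ, mulVec, dotProduct, Fin.sum_univ_three, diagonal_mul, mul_diagonal,
    conjTranspose_apply, cons_val, map_add, map_mul, RCLike.star_def, conj_conj, map_neg, map_one]
  ring

lemma adjJ_smul (c : ℂ) (M : Matrix (Fin 3) (Fin 3) ℂ) : adjJ (c • M) = conj c • adjJ M := by
  simp [adjJ, conjTranspose_smul]

lemma continuous_adjJ : Continuous adjJ := by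
  exact (continuous_const.matrix_mul continuous_id.matrix_conjTranspose).matrix_mul continuous_const

lemma adjJ_mulVec {g : Matrix (Fin 3) (Fin 3) ℂ} (hg : g ∈ U21) (y : C3) :
    (adjJ g).mulVec y = g⁻¹.mulVec y := by
  rw [← sub_eq_zero]
  refine herm1_nondeg fun z => herm1_eq_zero_symm ?_
  rw [herm1_sub_right, herm1_adjJ, ← hg.2 z, mulVec_mulVec, mul_nonsing_inv _ hg.1, one_mulVec,
    sub_self]

lemma continuous_herm1_mulVec (z y : C3) :
    Continuous fun M : Matrix (Fin 3) (Fin 3) ℂ => herm1 (M.mulVec z) (M.mulVec y) := by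
  simp only [herm1]
  fun_prop

/-- Rescaled limits of an unbounded sequence in `U(2,1)` are isotropic. -/
lemma isotropic_of_tendsto {g : ℕ → Matrix (Fin 3) (Fin 3) ℂ} {r : ℕ → ℂ}
    {A : Matrix (Fin 3) (Fin 3) ℂ} (hg : ∀ k z y, herm1 ((g k).mulVec z) ((g k).mulVec y) = herm1 z y)
    (hr : Tendsto r atTop (𝓝 0)) (hA : Tendsto (fun k => r k • g k) atTop (𝓝 A)) (z y : C3) :
    herm1 (A.mulVec z) (A.mulVec y) = 0 := by
  have h1 := ((continuous_herm1_mulVec z y).tendsto A).comp hA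
  have h2 : Tendsto (fun k => r k * (conj (r k) * herm1 z y)) atTop (𝓝 (0 * (conj 0 * herm1 z y))) :=
    hr.mul (((continuous_conj.tendsto 0).comp hr).mul_const _)
  rw [zero_mul] at h2
  refine tendsto_nhds_unique h1 (h2.congr fun k => ?_)
  simp only [Function.comp, smul_mulVec, herm1_smul_left, herm1_smul_right, hg]
  ring

open scoped Matrix.Norms.Elementwise in
/-- A normalized sequence of group elements of unbounded norm subconverges. -/
lemma exists_limit_matrix {S : Set (Matrix (Fin 3) (Fin 3) ℂ)} {v₀ : C3}
    (hS : ∀ M : ℝ, ∃ g ∈ S, M < ‖g.mulVec v₀‖) :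
    ∃ (g : ℕ → Matrix (Fin 3) (Fin 3) ℂ) (r : ℕ → ℂ) (A : Matrix (Fin 3) (Fin 3) ℂ),
      (∀ k, g k ∈ S) ∧ Tendsto r atTop (𝓝 0) ∧ Tendsto (fun k => r k • g k) atTop (𝓝 A) ∧
      A ≠ 0 := by
  choose g hgS hg using fun k : ℕ => hS (k * (3 * ‖v₀‖ + 1))
  have hbound : ∀ M : Matrix (Fin 3) (Fin 3) ℂ, ‖M.mulVec v₀‖ ≤ 3 * (‖M‖ * ‖v₀‖) := by
    intro M
    rw [pi_norm_le_iff_of_nonneg (by positivity)]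
    intro i
    calc ‖M.mulVec v₀ i‖ ≤ ∑ j, ‖M i j * v₀ j‖ := by
          simp only [mulVec, dotProduct]
          exact norm_sum_le _ _
      _ ≤ ∑ j : Fin 3, ‖M‖ * ‖v₀‖ := by
          refine Finset.sum_le_sum fun j _ => ?_
          rw [norm_mul]
          gcongr
          · exact norm_entry_le_entrywise_sup_norm M
          · exact norm_le_pi_norm v₀ j
      _ = _ := by simp
  have hnorm : ∀ k : ℕ, (k : ℝ) ≤ ‖g k‖ := by
    intro k
    by_contra! hlt
    have h1 := hg k
    have h2 := hbound (g k)
    have h3 : ‖g k‖ * ‖v₀‖ ≤ k * ‖v₀‖ := by gcongr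
    nlinarith [norm_nonneg (g k), norm_nonneg v₀]
  have hpos : ∀ k : ℕ, 0 < ‖g k‖ := by
    intro k
    rw [norm_pos_iff]
    intro h0
    have h1 := hg k
    rw [h0, zero_mulVec, norm_zero] at h1
    have : 0 ≤ (k : ℝ) * (3 * ‖v₀‖ + 1) := by positivity
    linarith
  have hlim : Tendsto (fun k => ‖g k‖) atTop atTop :=
    tendsto_atTop_mono hnorm tendsto_natCast_atTop_atTop
  have hr : Tendsto (fun k => ((‖g k‖⁻¹ : ℝ) : ℂ)) atTop (𝓝 0) := by
    have := (continuous_ofReal.tendsto 0).comp hlim.inv_tendsto_atTop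
    simpa [Function.comp_def] using this
  have hone : ∀ k, ‖((‖g k‖⁻¹ : ℝ) : ℂ) • g k‖ = 1 := by
    intro k
    rw [norm_smul, Complex.norm_real, norm_inv, norm_norm, inv_mul_cancel₀ (hpos k).ne']
  obtain ⟨A, -, φ, hφ, hA⟩ := tendsto_subseq_of_bounded
    (Metric.isBounded_closedBall (x := (0 : Matrix (Fin 3) (Fin 3) ℂ)) (r := 1))
    (x := fun k => ((‖g k‖⁻¹ : ℝ) : ℂ) • g k) (fun k => by rw [mem_closedBall_zero_iff, hone k])
  refine ⟨g ∘ φ, (fun k => ((‖g k‖⁻¹ : ℝ) : ℂ)) ∘ φ, A, fun k => hgS _,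
    hr.comp hφ.tendsto_atTop, hA, ?_⟩
  have h1 : ‖A‖ = 1 := by
    refine tendsto_nhds_unique hA.norm ?_
    simp only [Function.comp_def, hone]
    exact tendsto_const_nhds
  intro h0
  rw [h0, norm_zero] at h1
  exact zero_ne_one h1

/-- A group whose limit set contains two distinct null points has an element with an eigenvalue
of modulus greater than one. Otherwise all traces of elements of `G` are bounded by `3`, and a
rescaled limit `A` of an unbounded sequence in `G` satisfies `tr (h A) = 0` for all `h ∈ G`. Since
`A` has rank one with null image and null coimage, this says that `G` fixes the image of `A` in
`ℙ²`, with unimodular multipliers, and then the limit set is a single point. -/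
lemma exists_eigenvector_one_lt {G : Set (Matrix (Fin 3) (Fin 3) ℂ)} (hG : IsDiscreteSubgroup G)
    {v₀ : C3} (hv₀ : (herm1 v₀ v₀).re < 0) {z₁ z₂ : C3} (hz₁ : z₁ ≠ 0) (hz₂ : z₂ ≠ 0)
    (hn₁ : herm1 z₁ z₁ = 0) (hn₂ : herm1 z₂ z₂ = 0) (hz : herm1 z₁ z₂ ≠ 0)
    (hL₁ : projOf z₁ ∈ limitSet G v₀) (hL₂ : projOf z₂ ∈ limitSet G v₀) :
    ∃ g ∈ G, ∃ l : ℂ, 1 < ‖l‖ ∧ ∃ e : C3, e ≠ 0 ∧ g.mulVec e = l • e := by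
  by_contra! hno
  have htr : ∀ g ∈ G, ‖g.trace‖ ≤ 3 := by
    intro g hg
    by_contra! h3
    obtain ⟨l, hl, e, he, hge⟩ := exists_eigenvector_of_trace h3
    exact hno g hg l hl e he hge
  obtain ⟨g, r, A, hgG, hr, hA, hA0⟩ :=
    exists_limit_matrix (orbit_unbounded hG.subset hv₀ hz₁ hn₁ hL₁)
  have hiso := isotropic_of_tendsto (fun k => (hG.subset (hgG k)).2) hr hA
  have hiso' : ∀ z y, herm1 ((adjJ A).mulVec z) ((adjJ A).mulVec y) = 0 := by
    refine isotropic_of_tendsto (g := fun k => adjJ (g k)) (r := fun k => conj (r k)) ?_ ?_ ?_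
    · intro k z y
      rw [adjJ_mulVec (hG.subset (hgG k)), adjJ_mulVec (hG.subset (hgG k))]
      exact (U21_inv (hG.subset (hgG k))).2 z y
    · simpa [Function.comp_def] using (continuous_conj.tendsto 0).comp hr
    · refine ((continuous_adjJ.tendsto A).comp hA).congr fun k => ?_
      exact adjJ_smul _ _
  have htrA : ∀ h ∈ G, (h * A).trace = 0 := by
    intro h hh
    have hc : Continuous fun M : Matrix (Fin 3) (Fin 3) ℂ => (h * M).trace := by fun_prop
    have h1 := ((hc.tendsto A).comp hA)
    refine tendsto_nhds_unique h1 ?_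
    have h2 : Tendsto (fun k => ‖r k‖ * 3) atTop (𝓝 0) := by
      simpa using hr.norm.mul_const 3
    refine squeeze_zero_norm (fun k => ?_) h2
    simp only [Function.comp, Matrix.mul_smul, trace_smul, norm_smul]
    gcongr
    exact htr _ (hG.mul_mem h hh _ (hgG k))
  -- the limit matrix has rank one: `A z = ⟨ξ, u⟩⁻¹ ⟨z, η⟩ ξ`
  obtain ⟨z₀, hξ0⟩ : ∃ z₀, A.mulVec z₀ ≠ 0 := by
    by_contra! h0
    exact hA0 (ext_of_mulVec_single fun i => by rw [h0, zero_mulVec])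
  obtain ⟨u, hη0⟩ : ∃ u, (adjJ A).mulVec u ≠ 0 := by
    by_contra! h0
    refine hξ0 (herm1_nondeg fun y => ?_)
    rw [← herm1_adjJ, h0]
    simp [herm1]
  set ξ := A.mulVec z₀ with hξ
  set η := (adjJ A).mulVec u with hη
  have hξξ : herm1 ξ ξ = 0 := hiso _ _
  have hηη : herm1 η η = 0 := hiso' _ _
  have hprop : ∀ z, A.mulVec z = ((A.mulVec z) 2 / ξ 2) • ξ := fun z =>
    null_orth_prop (hiso z z) hξξ hξ0 (hiso z z₀)
  have hηz : ∀ z, herm1 z η = (A.mulVec z) 2 / ξ 2 * herm1 ξ u := by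
    intro z
    rw [hη, herm1_adjJ, hprop z, herm1_smul_left, ← hprop z]
  have hκ : herm1 ξ u ≠ 0 := by
    intro h0
    refine hη0 (herm1_nondeg fun z => herm1_eq_zero_symm ?_)
    rw [hηz, h0, mul_zero]
  have horth : ∀ h ∈ G, herm1 (h.mulVec ξ) η = 0 := by
    intro h hh
    have h1 : ∀ z, (h * A).mulVec z = (herm1 z η / herm1 ξ u) • h.mulVec ξ := by
      intro z
      rw [← mulVec_mulVec, hprop z, mulVec_smul, hηz, mul_div_cancel_right₀ _ hκ]
    have h2 : ∀ i, (h * A) i i = (herm1 (Pi.single i 1) η / herm1 ξ u) * (h.mulVec ξ) i := by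
      intro i
      have := congrFun (h1 (Pi.single i 1)) i
      simpa using this
    have h3 := htrA h hh
    rw [trace_fin_three, h2, h2, h2] at h3
    have h4 : herm1 (h.mulVec ξ) η / herm1 ξ u = 0 := by
      rw [← h3]
      simp only [herm1, Pi.single_apply]
      simp
      ring
    exact (div_eq_zero_iff.1 h4).resolve_right hκ
  have hdetG : ∀ h ∈ G, IsUnit h.det := fun h hh => (hG.subset hh).1
  obtain ⟨a, ha, hξη⟩ := null_orth_prop_ne hξξ hηη hξ0 hη0
    (by simpa using horth 1 hG.one_mem)
  have hfix : ∀ h ∈ G, ∃ c : ℂ, c ≠ 0 ∧ h.mulVec ξ = c • ξ := by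
    intro h hh
    obtain ⟨b, hb, hhξ⟩ := null_orth_prop_ne (by rw [(hG.subset hh).2, hξξ]) hηη
      (U21_mulVec_ne (hdetG h hh) hξ0) hη0 (horth h hh)
    refine ⟨b / a, div_ne_zero hb ha, ?_⟩
    conv_rhs => rw [hξη]
    rw [hhξ, smul_smul, div_mul_cancel₀ _ ha]
  have hfix1 : ∀ h ∈ G, ∃ c : ℂ, ‖c‖ = 1 ∧ h.mulVec ξ = c • ξ := by
    intro h hh
    obtain ⟨c, hc, hhξ⟩ := hfix h hh
    refine ⟨c, le_antisymm ?_ ?_, hhξ⟩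
    · by_contra! h1
      exact hno h hh c h1 ξ hξ0 hhξ
    · by_contra! h1
      refine hno h⁻¹ (hG.inv_mem h hh) c⁻¹ ?_ ξ hξ0 ?_
      · rw [norm_inv]
        exact (one_lt_inv₀ (norm_pos_iff.2 hc)).2 h1
      · have : ξ = c⁻¹ • h.mulVec ξ := by rw [hhξ, smul_smul, inv_mul_cancel₀ hc, one_smul]
        conv_lhs => rw [this]
        rw [mulVec_smul, mulVec_mulVec, nonsing_inv_mul _ (hdetG h hh), one_mulVec]
  have hp₁ := limitSet_subset_of_parabolic hG.subset hv₀ hfix1 hz₁ hn₁ hL₁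
  have hp₂ := limitSet_subset_of_parabolic hG.subset hv₀ hfix1 hz₂ hn₂ hL₂
  apply hz
  rw [null_orth_prop hn₂ hξξ hξ0 hp₂, herm1_smul_right, hp₁, mul_zero]

/-! ### Comparison of scales and orbits on the knot -/

/-- Comparison of scales, transverse case: `q^k` decays strictly faster than `κ^k`, so a curve
with non-zero `q`-velocity cannot have a `κ`-component. -/
lemma scale_transverse {κ q β₀ χ₀ β₁ χ₁ : ℂ} {d : ℕ → ℝ} (hκ : κ ≠ 0) (hq : ‖q / κ‖ < 1)
    (hX : Tendsto (fun k => κ ^ k * β₀ / d k) atTop (𝓝 β₁))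
    (hY : Tendsto (fun k => q ^ k * χ₀ / d k) atTop (𝓝 χ₁)) (hχ₁ : χ₁ ≠ 0) : β₀ = 0 := by
  have h1 : Tendsto (fun k => χ₀ * ((q / κ) ^ k * (κ ^ k * β₀ / d k))) atTop
      (𝓝 (χ₀ * (0 * β₁))) :=
    ((tendsto_pow_atTop_nhds_zero_of_norm_lt_one hq).mul hX).const_mul _
  have h2 := hY.const_mul β₀
  have h3 : χ₀ * (0 * β₁) = β₀ * χ₁ := by
    refine tendsto_nhds_unique (h1.congr fun k => ?_) h2
    rw [div_pow]
    field_simp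
  rw [zero_mul, mul_zero] at h3
  exact (mul_eq_zero.1 h3.symm).resolve_right hχ₁

/-- Comparison of scales, tangent case: `q = |κ|²`, and the real parameter `d k` has first-order
limit `β₁` in the `κ`-direction and second-order limit `K` in the `q`-direction. The phase of
`κ ^ k` must converge, so `κ` is real, and the starting point lies on the parabola
`x ↦ (x β₁, x² K)`. -/
lemma scale_tangent {κ β₀ χ₀ β₁ K : ℂ} {d : ℕ → ℝ} (hκ : κ ≠ 0) (hd : ∀ k, d k ≠ 0)
    (hX : Tendsto (fun k => κ ^ k * β₀ / d k) atTop (𝓝 β₁)) (hβ₁ : β₁ ≠ 0)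
    (hZ : Tendsto (fun k => (κ * conj κ) ^ k * χ₀ / (d k : ℂ) ^ 2) atTop (𝓝 K)) :
    ∃ x : ℝ, β₀ = x * β₁ ∧ χ₀ = K * (x : ℂ) ^ 2 := by
  have hβ₀ : β₀ ≠ 0 := by
    rintro rfl
    simp only [mul_zero, zero_div] at hX
    exact hβ₁ (tendsto_nhds_unique hX tendsto_const_nhds)
  have hdc : ∀ k, (d k : ℂ) ≠ 0 := fun k => ofReal_ne_zero.2 (hd k)
  have hcκ : conj κ ≠ 0 := by simpa using hκ
  have hcβ₀ : conj β₀ ≠ 0 := by simpa using hβ₀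
  have hcβ₁ : conj β₁ ≠ 0 := by simpa using hβ₁
  have hXc := (continuous_conj.tendsto β₁).comp hX
  have hratio := hX.div hXc hcβ₁
  have hu : Tendsto (fun k => (κ / conj κ) ^ k) atTop (𝓝 (conj β₀ / β₀ * (β₁ / conj β₁))) := by
    refine (hratio.const_mul (conj β₀ / β₀)).congr fun k => ?_
    have := hdc k
    simp only [Function.comp, Pi.div_apply, map_div₀, map_mul, map_pow, conj_ofReal, div_pow]
    field_simp
  have hu1 : κ / conj κ = 1 := by
    have h1 := hu.const_mul (κ / conj κ)
    have h2 := hu.comp (tendsto_add_atTop_nat 1)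
    have h3 := tendsto_nhds_unique (h1.congr fun k => (pow_succ' _ _).symm) h2
    exact (mul_eq_right₀ (by positivity)).1 h3
  have hphase : β₀ * conj β₁ = β₁ * conj β₀ := by
    rw [hu1] at hu
    simp only [one_pow] at hu
    have := tendsto_nhds_unique hu tendsto_const_nhds
    field_simp at this
    rw [mul_comm β₁, this]
  have hx : conj (β₀ / β₁) = β₀ / β₁ := by
    rw [map_div₀]
    field_simp
    linear_combination -hphase
  obtain ⟨x, hx'⟩ := Complex.conj_eq_iff_real.1 hx
  have hβx : β₀ = x * β₁ := by rw [← hx', div_mul_cancel₀ _ hβ₁]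
  refine ⟨x, hβx, ?_⟩
  have h4 : χ₀ * (β₁ * conj β₁) = β₀ * conj β₀ * K := by
    refine tendsto_nhds_unique ((hX.mul hXc).const_mul χ₀)
      ((hZ.const_mul (β₀ * conj β₀)).congr fun k => ?_)
    have := hdc k
    simp only [Function.comp, map_div₀, map_mul, map_pow, conj_ofReal, mul_pow]
    field_simp
  rw [hβx, map_mul, conj_ofReal] at h4
  have h5 : (β₁ * conj β₁) ≠ 0 := mul_ne_zero hβ₁ hcβ₁
  apply mul_right_cancel₀ h5
  linear_combination h4

/-- Second-order Taylor limit at a point where a `C²` curve vanishes to first order. -/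
lemma tendsto_div_sq {c : ℝ → ℂ} (hc : ContDiff ℝ 2 c) {σ : ℝ} (h0 : c σ = 0)
    (h1 : deriv c σ = 0) : ∃ K : ℂ,
    Tendsto (fun s => c s / ((s - σ : ℝ) : ℂ) ^ 2) (𝓝[≠] σ) (𝓝 K) := by
  have ht := taylor_tendsto (n := 2) convex_univ (Set.mem_univ σ) (contDiffOn_univ.2 hc)
  rw [nhdsWithin_univ] at ht
  refine ⟨(2⁻¹ : ℝ) • iteratedDerivWithin 2 c Set.univ σ, ?_⟩
  have ht' := (ht.mono_left (nhdsWithin_le_nhds (s := {σ}ᶜ))).add_const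
    ((2⁻¹ : ℝ) • iteratedDerivWithin 2 c Set.univ σ)
  rw [zero_add] at ht'
  refine ht'.congr' ?_
  filter_upwards [self_mem_nhdsWithin] with s hs
  have hs' : s - σ ≠ 0 := sub_ne_zero.2 hs
  have hsc : ((s - σ : ℝ) : ℂ) ≠ 0 := ofReal_ne_zero.2 hs'
  have e1 : iteratedDerivWithin 1 c Set.univ σ = 0 := by
    rw [iteratedDerivWithin_univ, iteratedDeriv_one, h1]
  rw [taylorWithinEval_succ, taylorWithinEval_succ, taylor_within_zero_eval, h0, zero_add]
  norm_num [e1]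
  push_cast at hsc
  field_simp
  ring

/-- The properties of the lift of an invariant knot used below: `v` is a regular `C²` curve of
null vectors, injective in `ℙ²` modulo the period `1`, whose image is invariant under `G`.
Equality of null points in `ℙ²` is expressed by orthogonality in `inj`; by periodicity the
parameter of an image point in `inv` can be chosen in any window of length `1`. -/
structure InvKnot (G : Set (Matrix (Fin 3) (Fin 3) ℂ)) (v : ℝ → C3) : Prop where
  one_mem : (1 : Matrix (Fin 3) (Fin 3) ℂ) ∈ G
  mul_mem : ∀ g ∈ G, ∀ h ∈ G, g * h ∈ G
  smooth : ContDiff ℝ 2 v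
  ne : ∀ t, v t ≠ 0
  null : ∀ t, herm1 (v t) (v t) = 0
  regular : ∀ t, LinearIndependent ℂ ![v t, deriv v t]
  inj : ∀ s t, |s - t| < 1 → herm1 (v s) (v t) = 0 → s = t
  inv : ∀ g ∈ G, ∀ t x, ∃ s ∈ Set.Icc x (x + 1), ∃ c : ℂ, c ≠ 0 ∧ g.mulVec (v t) = c • v s

namespace InvKnot
variable {G : Set (Matrix (Fin 3) (Fin 3) ℂ)} {v : ℝ → C3}

lemma pow_mem (hK : InvKnot G v) {g : Matrix (Fin 3) (Fin 3) ℂ} (hg : g ∈ G) (k : ℕ) :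
    g ^ k ∈ G := by
  induction k with
  | zero => simpa using hK.one_mem
  | succ k ih => exact pow_succ g k ▸ hK.mul_mem _ ih _ hg

lemma contDiff_coord (hK : InvKnot G v) (y : C3) : ContDiff ℝ 2 fun s => herm1 (v s) y := by
  have h := contDiff_pi.1 hK.smooth
  have h0 := h 0
  have h1 := h 1
  have h2 := h 2
  simp only [herm1]
  fun_prop

lemma deriv_coord (hK : InvKnot G v) (y : C3) (t : ℝ) :
    HasDerivAt (fun s => herm1 (v s) y) (herm1 (deriv v t) y) t := by
  have h := hasDerivAt_pi.1 (hK.smooth.differentiable (by norm_num) t).hasDerivAt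
  exact (((h 0).mul_const _).add ((h 1).mul_const _)).sub ((h 2).mul_const _)

lemma continuous_coord (hK : InvKnot G v) (y : C3) : Continuous fun s => herm1 (v s) y :=
  (hK.contDiff_coord y).continuous

section
variable {g : Matrix (Fin 3) (Fin 3) ℂ} {e f w : C3} {l m n : ℂ}

lemma norm_m_lt (h : Lox g e f w l m n) : ‖m‖ < 1 := by
  have h1 : ‖m‖ * ‖l‖ = 1 := by
    have := congrArg norm h.lm
    rwa [norm_mul, RCLike.norm_conj, norm_one] at this
  nlinarith [h.one_lt, norm_nonneg m]

lemma norm_n (h : Lox g e f w l m n) : ‖n‖ = 1 := by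
  have h1 : ‖n‖ * ‖n‖ = 1 := by
    have := congrArg norm h.nn
    rwa [norm_mul, RCLike.norm_conj, norm_one] at this
  nlinarith [norm_nonneg n]

/-- The orbit of a point of the knot under powers of a loxodromic element, in affine
coordinates at the attracting fixed point. -/
lemma exists_seq (hK : InvKnot G v) (hg : g ∈ G) (h : Lox g e f w l m n) {t : ℝ}
    (ht : herm1 (v t) f ≠ 0) (x : ℝ) : ∃ s : ℕ → ℝ, ∀ k, s k ∈ Set.Icc x (x + 1) ∧
      herm1 (v (s k)) f ≠ 0 ∧
      herm1 (v (s k)) w = (n / l) ^ k * (herm1 (v t) w / herm1 (v t) f) * herm1 (v (s k)) f ∧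
      herm1 (v (s k)) e = (m / l) ^ k * (herm1 (v t) e / herm1 (v t) f) * herm1 (v (s k)) f := by
  choose s hs ρ hρ hv using fun k : ℕ => hK.inv (g ^ k) (hK.pow_mem hg k) t x
  refine ⟨s, fun k => ?_⟩
  have hF := h.frame
  have hk := hv k
  rw [h.pow_mulVec] at hk
  have h1 := congrArg (fun z => herm1 z f) hk
  have h2 := congrArg (fun z => herm1 z w) hk
  have h3 := congrArg (fun z => herm1 z e) hk
  simp only [herm1_add_left, herm1_smul_left, hF.ee, hF.ff, hF.ef, hF.ww, hF.ew, hF.fw, hF.fe,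
    hF.we, hF.wf, mul_zero, mul_one, add_zero, zero_add] at h1 h2 h3
  have hlk : l ^ k ≠ 0 := pow_ne_zero _ h.l_ne
  have hρk := hρ k
  refine ⟨hs k, ?_, ?_, ?_⟩
  · intro h0
    rw [h0, mul_zero] at h1
    exact mul_ne_zero hlk ht h1
  · apply mul_left_cancel₀ hρk
    rw [← h2, div_pow]
    field_simp
    linear_combination (n ^ k * herm1 (v t) w) * h1
  · apply mul_left_cancel₀ hρk
    rw [← h3, div_pow]
    field_simp
    linear_combination (m ^ k * herm1 (v t) e) * h1

/-- The orbit of `exists_seq` converges to the attracting fixed point: its `e`-pairing tends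
to `0`. -/
lemma seq_tendsto (hK : InvKnot G v) (h : Lox g e f w l m n) {t x : ℝ} {s : ℕ → ℝ}
    (hs : ∀ k, s k ∈ Set.Icc x (x + 1))
    (hse : ∀ k, herm1 (v (s k)) e
      = (m / l) ^ k * (herm1 (v t) e / herm1 (v t) f) * herm1 (v (s k)) f) :
    Tendsto (fun k => herm1 (v (s k)) e) atTop (𝓝 0) := by
  obtain ⟨C, hC⟩ := isCompact_Icc.exists_bound_of_continuousOn
    (hK.continuous_coord f).continuousOn (s := Set.Icc x (x + 1))
  have hq : ‖m / l‖ < 1 := by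
    rw [norm_div, div_lt_one (by linarith [h.one_lt])]
    linarith [h.one_lt, norm_m_lt h]
  have h1 : Tendsto (fun k => ‖m / l‖ ^ k * ‖herm1 (v t) e / herm1 (v t) f‖ * C) atTop (𝓝 0) := by
    simpa using ((tendsto_pow_atTop_nhds_zero_of_lt_one (norm_nonneg _) hq).mul_const
      ‖herm1 (v t) e / herm1 (v t) f‖).mul_const C
  refine squeeze_zero_norm (fun k => ?_) h1
  rw [hse, norm_mul, norm_mul, norm_pow]
  gcongr
  exact hC _ (hs k)

lemma cluster_zero (hK : InvKnot G v) {s : ℕ → ℝ} {y : ℝ}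
    (hs : Tendsto (fun k => herm1 (v (s k)) e) atTop (𝓝 0)) (hy : MapClusterPt y atTop s) :
    herm1 (v y) e = 0 := by
  have h1 := MapClusterPt.continuousAt_comp (hK.continuous_coord e).continuousAt hy
  have h2 : ClusterPt (herm1 (v y) e) (𝓝 0) := ClusterPt.mono h1 hs
  exact eq_of_nhds_neBot h2

end
end InvKnot

/-! ### The knot near an attracting fixed point -/

namespace InvKnot
variable {G : Set (Matrix (Fin 3) (Fin 3) ℂ)} {v : ℝ → C3}
variable {g : Matrix (Fin 3) (Fin 3) ℂ} {e f w : C3} {l m n : ℂ}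

lemma prop_of_zero (hK : InvKnot G v) (h : NullFrame e f w) {s : ℝ} (hs : herm1 (v s) e = 0) :
    ∃ c : ℂ, c ≠ 0 ∧ v s = c • e :=
  null_orth_prop_ne (hK.null s) h.ee (hK.ne s) h.e_ne hs

lemma eq_of_zero (hK : InvKnot G v) (h : NullFrame e f w) {s t : ℝ} (hs : herm1 (v s) e = 0)
    (ht : herm1 (v t) e = 0) (hst : |s - t| < 1) : s = t := by
  obtain ⟨c, -, hc⟩ := hK.prop_of_zero h hs
  refine hK.inj s t hst ?_
  rw [hc, herm1_smul_left, herm1_eq_zero_symm ht, mul_zero]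

/-- The attracting fixed point of a loxodromic element of `G` lies on the knot. -/
lemma attract (hK : InvKnot G v) (hg : g ∈ G) (h : Lox g e f w l m n) :
    ∃ σ, herm1 (v σ) e = 0 := by
  obtain ⟨t, ht⟩ : ∃ t, herm1 (v t) f ≠ 0 := by
    by_contra! H
    have := hK.eq_of_zero h.frame.swap (H 0) (H (1 / 2)) (by norm_num [abs_lt])
    norm_num at this
  obtain ⟨s, hs⟩ := hK.exists_seq hg h ht 0
  have hlim := hK.seq_tendsto h (fun k => (hs k).1) (fun k => (hs k).2.2.2)
  obtain ⟨y, -, φ, hφ, hy⟩ := isCompact_Icc.tendsto_subseq (fun k => (hs k).1)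
  exact ⟨y, hK.cluster_zero hlim (hy.mapClusterPt.of_comp hφ.tendsto_atTop)⟩

lemma frame_at (hK : InvKnot G v) (h : NullFrame e f w) {σ : ℝ} (hσ : herm1 (v σ) e = 0) :
    herm1 (v σ) f ≠ 0 ∧ herm1 (v σ) w = 0 := by
  obtain ⟨c, hc, hv⟩ := hK.prop_of_zero h hσ
  rw [hv, herm1_smul_left, herm1_smul_left, h.ef, h.ew, mul_zero, mul_one]
  exact ⟨hc, rfl⟩

/-- Parameters of an orbit on the knot which converges to the attracting fixed point `v σ`
without reaching it. -/
lemma exists_orbit (hK : InvKnot G v) (hg : g ∈ G) (h : Lox g e f w l m n) {σ t : ℝ}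
    (hσ : herm1 (v σ) e = 0) (ha : herm1 (v t) f ≠ 0) (hc : herm1 (v t) e ≠ 0) :
    ∃ s : ℕ → ℝ, Tendsto s atTop (𝓝[≠] σ) ∧ (∀ k, s k - σ ≠ 0) ∧ ∀ k,
      (n / l) ^ k * (herm1 (v t) w / herm1 (v t) f) = herm1 (v (s k)) w / herm1 (v (s k)) f ∧
      (m / l) ^ k * (herm1 (v t) e / herm1 (v t) f) = herm1 (v (s k)) e / herm1 (v (s k)) f := by
  obtain ⟨s, hs⟩ := hK.exists_seq hg h ha (σ - 1 / 2)
  have hlim := hK.seq_tendsto h (fun k => (hs k).1) (fun k => (hs k).2.2.2)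
  have hne : ∀ k, s k ≠ σ := by
    intro k hk
    have h1 := (hs k).2.2.2
    rw [hk, hσ, eq_comm, ← hk] at h1
    exact mul_ne_zero (mul_ne_zero (pow_ne_zero _ (div_ne_zero h.m_ne h.l_ne))
      (div_ne_zero hc ha)) (hs k).2.1 h1
  have hsσ : Tendsto s atTop (𝓝 σ) := by
    refine isCompact_Icc.tendsto_nhds_of_unique_mapClusterPt
      (Eventually.of_forall fun k => (hs k).1) fun y hy hcl => ?_
    refine hK.eq_of_zero h.frame (hK.cluster_zero hlim hcl) hσ ?_
    rw [abs_lt]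
    constructor <;> linarith [hy.1, hy.2]
  refine ⟨s, tendsto_nhdsWithin_iff.2 ⟨hsσ, Eventually.of_forall hne⟩,
    fun k => sub_ne_zero.2 (hne k), fun k => ⟨?_, ?_⟩⟩
  · rw [eq_div_iff (hs k).2.1, (hs k).2.2.1]
  · rw [eq_div_iff (hs k).2.1, (hs k).2.2.2]

lemma tendsto_slope_coord (hK : InvKnot G v) {σ : ℝ} {y : C3} (hf : herm1 (v σ) f ≠ 0)
    (hy : herm1 (v σ) y = 0) {s : ℕ → ℝ} (hs : Tendsto s atTop (𝓝[≠] σ)) :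
    Tendsto (fun k => herm1 (v (s k)) y / herm1 (v (s k)) f / ((s k - σ : ℝ) : ℂ)) atTop
      (𝓝 (herm1 (deriv v σ) y / herm1 (v σ) f)) := by
  have h1 := (hasDerivAt_iff_tendsto_slope.1 (hK.deriv_coord y σ)).comp hs
  have h2 := (((hK.continuous_coord f).tendsto σ).mono_left nhdsWithin_le_nhds).comp hs
  refine (h1.div h2 hf).congr fun k => ?_
  simp only [Function.comp, Pi.div_apply, slope, vsub_eq_sub, hy, sub_zero, real_smul, ofReal_inv]
  rw [div_right_comm]
  congr 1
  rw [div_eq_inv_mul]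

/-- If the knot is transverse to the contact plane at the attracting fixed point of a
loxodromic element of `G`, then it is contained in the chain polar to `w`. -/
lemma transverse (hK : InvKnot G v) (hg : g ∈ G) (h : Lox g e f w l m n) {σ : ℝ}
    (hσ : herm1 (v σ) e = 0) (hd : herm1 (deriv v σ) e ≠ 0) (t : ℝ) : herm1 (v t) w = 0 := by
  by_cases ha : herm1 (v t) f = 0
  · exact (hK.frame_at h.frame.swap ha).2
  by_cases hc : herm1 (v t) e = 0
  · exact (hK.frame_at h.frame hc).2
  obtain ⟨s, hs, -, hk⟩ := hK.exists_orbit hg h hσ ha hc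
  obtain ⟨hf, hw⟩ := hK.frame_at h.frame hσ
  have hX := hK.tendsto_slope_coord hf hw hs
  have hY := hK.tendsto_slope_coord hf hσ hs
  have hq : ‖m / l / (n / l)‖ < 1 := by
    rw [div_div_div_cancel_right₀ h.l_ne, norm_div, norm_n h, div_one]
    exact norm_m_lt h
  have := scale_transverse (d := fun k => s k - σ) (div_ne_zero h.n_ne h.l_ne) hq
    (hX.congr fun k => by rw [(hk k).1]) (hY.congr fun k => by rw [(hk k).2])
    (div_ne_zero hd hf)
  exact (div_eq_zero_iff.1 this).resolve_right ha

/-- If the knot is tangent to the contact plane at the attracting fixed point, then it is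
contained in the closure of a parabola `x ↦ e + x β₁ w + K x² f`, which adds the point `[f]`. -/
lemma tangent (hK : InvKnot G v) (hg : g ∈ G) (h : Lox g e f w l m n) {σ : ℝ}
    (hσ : herm1 (v σ) e = 0) (hd : herm1 (deriv v σ) e = 0) :
    ∃ β₁ K : ℂ, β₁ ≠ 0 ∧ ∀ t, herm1 (v t) f ≠ 0 → ∃ x : ℝ,
      herm1 (v t) w = x * β₁ * herm1 (v t) f ∧ herm1 (v t) e = K * (x : ℂ) ^ 2 * herm1 (v t) f := by
  obtain ⟨hf, hw⟩ := hK.frame_at h.frame hσ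
  obtain ⟨K, hKl⟩ := tendsto_div_sq (hK.contDiff_coord e) hσ
    ((hK.deriv_coord e σ).deriv.trans hd)
  have hβ : herm1 (deriv v σ) w ≠ 0 := by
    intro h0
    have h1 := h.frame.expand (deriv v σ)
    have h2 := h.frame.expand (v σ)
    rw [h0, hd, zero_smul, zero_smul, add_zero, add_zero] at h1
    rw [hw, hσ, zero_smul, zero_smul, add_zero, add_zero] at h2
    have h3 := LinearIndependent.pair_iff.1 (hK.regular σ) (herm1 (deriv v σ) f)
      (-herm1 (v σ) f) (by
        rw [h1, h2]
        simp only [herm1_smul_left, h.frame.ef, mul_one, smul_smul]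
        rw [neg_mul, neg_smul, mul_comm, add_neg_cancel])
    exact hf (neg_eq_zero.1 h3.2)
  refine ⟨herm1 (deriv v σ) w / herm1 (v σ) f, K / herm1 (v σ) f, div_ne_zero hβ hf,
    fun t ha => ?_⟩
  by_cases hc : herm1 (v t) e = 0
  · exact ⟨0, by rw [(hK.frame_at h.frame hc).2]; simp, by rw [hc]; simp⟩
  obtain ⟨s, hs, hsne, hk⟩ := hK.exists_orbit hg h hσ ha hc
  have hX := hK.tendsto_slope_coord hf hw hs
  have h2 := (((hK.continuous_coord f).tendsto σ).mono_left nhdsWithin_le_nhds).comp hs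
  have hZ := (hKl.comp hs).div h2 hf
  have hq : n / l * conj (n / l) = m / l := by
    have hl := h.l_ne
    have hcl := h.conj_l_ne
    rw [map_div₀]
    field_simp
    rw [h.nn, mul_comm, h.lm]
  obtain ⟨x, hx1, hx2⟩ := scale_tangent (d := fun k => s k - σ) (div_ne_zero h.n_ne h.l_ne) hsne
    (hX.congr fun k => by rw [(hk k).1]) (div_ne_zero hβ hf)
    (hZ.congr fun k => by
      rw [hq, (hk k).2]
      simp only [Function.comp, Pi.div_apply]
      rw [div_right_comm])
  refine ⟨x, ?_, ?_⟩
  · rw [← hx1, div_mul_cancel₀ _ ha]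
  · rw [← hx2, div_mul_cancel₀ _ ha]

end InvKnot

/-! ### Invariant chains and points of tangency -/

/-- If `G` moves the two ends of a frame within `w^⊥`, then it preserves the chain polar
to `w`, because `w^⊥` is spanned by these two ends. -/
lemma chain_invariant {G : Set (Matrix (Fin 3) (Fin 3) ℂ)} (hG : IsDiscreteSubgroup G)
    {e f w : C3} (h : NullFrame e f w)
    (H : ∀ k ∈ G, herm1 (k.mulVec e) w = 0 ∧ herm1 (k.mulVec f) w = 0) :
    ∀ g ∈ G, mapSet g (chainOf w) = chainOf w := by
  have sub : ∀ g ∈ G, mapSet g (chainOf w) ⊆ chainOf w := by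
    rintro g hg p ⟨z, hz, ⟨y, hy, hyy, hyw, hzy⟩, rfl⟩
    obtain ⟨c, hc, rfl⟩ := (projOf_eq_iff hz hy).1 hzy
    have hgU := hG.subset hg
    refine ⟨g.mulVec y, U21_mulVec_ne hgU.1 hy, by rw [hgU.2, hyy], ?_, ?_⟩
    · rw [h.expand y, hyw, zero_smul, add_zero, mulVec_add, mulVec_smul, mulVec_smul,
        herm1_add_left, herm1_smul_left, herm1_smul_left, (H g hg).1, (H g hg).2]
      ring
    · rw [mulVec_smul, projOf_smul hc]
  intro g hg
  refine mapSet_eq_of_subset ?_ (mul_nonsing_inv g (hG.subset hg).1) (sub g hg)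
    (sub _ (hG.inv_mem g hg))
  rintro p ⟨z, hz, -, -, rfl⟩
  exact ⟨z, hz, rfl⟩

namespace InvKnot
variable {G : Set (Matrix (Fin 3) (Fin 3) ℂ)} {v : ℝ → C3}
variable {g k : Matrix (Fin 3) (Fin 3) ℂ} {e f w : C3} {l m n : ℂ}

/-- If the knot lies in `w^⊥` and passes through `[e]`, then all images of `e` under `G` lie
in `w^⊥`. -/
lemma image_zero (hK : InvKnot G v) (h : NullFrame e f w) (H : ∀ t, herm1 (v t) w = 0)
    (he : ∃ σ, herm1 (v σ) e = 0) (hk : k ∈ G) : herm1 (k.mulVec e) w = 0 := by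
  obtain ⟨σ, hσ⟩ := he
  obtain ⟨c, hc, hv⟩ := hK.prop_of_zero h hσ
  obtain ⟨s, -, d, -, hs⟩ := hK.inv k hk σ 0
  rw [hv, mulVec_smul] at hs
  have := congrArg (fun z => herm1 z w) hs
  simp only [herm1_smul_left, H, mul_zero] at this
  exact (mul_eq_zero.1 this).resolve_left hc

/-- Some knot point differs from both ends of the frame, because `v 0`, `v (1/4)` and `v (1/2)`
are pairwise distinct in `ℙ²`. -/
lemma exists_generic (hK : InvKnot G v) (h : NullFrame e f w) :
    ∃ t, herm1 (v t) f ≠ 0 ∧ herm1 (v t) e ≠ 0 := by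
  by_contra! H
  have key : ∀ s t : ℝ, s < t → t - s < 1 →
      ¬(herm1 (v s) f = 0 ∧ herm1 (v t) f = 0) ∧ ¬(herm1 (v s) e = 0 ∧ herm1 (v t) e = 0) := by
    intro s t hst h1
    have ha : |s - t| < 1 := abs_lt.2 ⟨by linarith, by linarith⟩
    exact ⟨fun hh => hst.ne (hK.eq_of_zero h.swap hh.1 hh.2 ha),
      fun hh => hst.ne (hK.eq_of_zero h hh.1 hh.2 ha)⟩
  have k1 := key 0 (1 / 4) (by norm_num) (by norm_num)
  have k2 := key 0 (1 / 2) (by norm_num) (by norm_num)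
  have k3 := key (1 / 4) (1 / 2) (by norm_num) (by norm_num)
  have H0 := H 0
  have H1 := H (1 / 4)
  have H2 := H (1 / 2)
  tauto

/-- Normal form of the tangent case: after rotating `w`, the knot is contained in the closure of
the parabola `x ↦ e + x w + (-1/2 + τ i) x² f`; the real part is forced by nullity. -/
lemma tangent_normal (hK : InvKnot G v) (hg : g ∈ G) (h : Lox g e f w l m n) {σ : ℝ}
    (hσ : herm1 (v σ) e = 0) (hd : herm1 (deriv v σ) e = 0) :
    ∃ (w' : C3) (τ : ℝ), NullFrame e f w' ∧ ∀ t, herm1 (v t) f ≠ 0 → ∃ x : ℝ,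
      herm1 (v t) w' = x * herm1 (v t) f ∧
      herm1 (v t) e = (-1 / 2 + τ * I) * (x : ℂ) ^ 2 * herm1 (v t) f := by
  obtain ⟨β, K, hβ, H⟩ := hK.tangent hg h hσ hd
  have hF := h.frame
  have hre : 2 * K.re + ‖β‖ ^ 2 = 0 := by
    obtain ⟨t, ha, hc⟩ := hK.exists_generic hF
    obtain ⟨x, hx1, hx2⟩ := H t ha
    have hx : (x : ℂ) ≠ 0 := by
      intro h0
      rw [h0] at hx2
      exact hc (by rw [hx2]; ring)
    have h1 := hF.herm_coord (v t) (v t)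
    rw [hK.null, hx1, hx2] at h1
    simp only [map_mul, map_pow, conj_ofReal] at h1
    have h2 : (x : ℂ) ^ 2 * (herm1 (v t) f * conj (herm1 (v t) f)) *
        ((K + conj K) + β * conj β) = 0 := by linear_combination -h1
    have h3 := (mul_eq_zero.1 h2).resolve_left
      (mul_ne_zero (pow_ne_zero _ hx) (mul_ne_zero ha (by simpa using ha)))
    rw [add_conj, mul_conj, normSq_eq_norm_sq] at h3
    exact_mod_cast h3
  have hn : (‖β‖ : ℂ) ≠ 0 := by simpa using hβ
  have hnR : ‖β‖ ≠ 0 := by simpa using hβ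
  have hββ : conj β * β = (‖β‖ : ℂ) ^ 2 := by
    rw [mul_comm, mul_conj, normSq_eq_norm_sq, ofReal_pow]
  refine ⟨(β / ‖β‖) • w, K.im / ‖β‖ ^ 2, ⟨hF.ee, hF.ff, hF.ef, ?_, ?_, ?_⟩, fun t ha => ?_⟩
  · rw [herm1_smul_left, herm1_smul_right, hF.ww, map_div₀, conj_ofReal]
    field_simp
    linear_combination hββ
  · rw [herm1_smul_right, hF.ew, mul_zero]
  · rw [herm1_smul_right, hF.fw, mul_zero]
  · obtain ⟨x, hx1, hx2⟩ := H t ha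
    refine ⟨x * ‖β‖, ?_, ?_⟩
    · rw [herm1_smul_right, hx1, map_div₀, conj_ofReal, ofReal_mul]
      field_simp
      linear_combination (x : ℂ) * hββ
    · have hKe : K = (-1 / 2 + (K.im / ‖β‖ ^ 2 : ℝ) * I) * (‖β‖ : ℂ) ^ 2 := by
        apply Complex.ext
        · have : K.re = -(1 / 2) * ‖β‖ ^ 2 := by linarith
          rw [this]
          simp [← ofReal_pow]
          ring_nf
        · simp [← ofReal_pow]
          field_simp
      rw [hx2]
      conv_lhs => rw [hKe]
      push_cast
      ring

/-- On a parabola with `τ ≠ 0`, the contact plane is tangent only at the two ends. -/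
lemma tangent_point (hK : InvKnot G v) (h : NullFrame e f w) {τ : ℝ} (hτ : τ ≠ 0)
    (H : ∀ t, herm1 (v t) f ≠ 0 → ∃ x : ℝ,
      herm1 (v t) w = x * herm1 (v t) f ∧
      herm1 (v t) e = (-1 / 2 + τ * I) * (x : ℂ) ^ 2 * herm1 (v t) f)
    {s : ℝ} (hs : herm1 (deriv v s) (v s) = 0) : herm1 (v s) w = 0 := by
  by_cases ha : herm1 (v s) f = 0
  · exact (hK.frame_at h.swap ha).2
  obtain ⟨x, hx1, hx2⟩ := H s ha
  by_cases hx : (x : ℂ) = 0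
  · rw [hx1, hx, zero_mul]
  exfalso
  set κ : ℂ := -1 / 2 + τ * I with hκ
  have hcκ : conj κ = -1 - κ := by
    rw [hκ]
    simp only [map_add, map_mul, map_div₀, map_neg, map_one, map_ofNat, conj_ofReal, conj_I]
    ring
  have dA := hK.deriv_coord f s
  have dB := hK.deriv_coord w s
  have dC := hK.deriv_coord e s
  -- differentiate the equation `C A = κ B²` of the parabola
  have heq : (fun t => herm1 (v t) e * herm1 (v t) f) =ᶠ[𝓝 s]
      fun t => κ * (herm1 (v t) w * herm1 (v t) w) := by
    filter_upwards [(hK.continuous_coord f).continuousAt.eventually_ne ha] with t ht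
    obtain ⟨y, hy1, hy2⟩ := H t ht
    rw [hy1, hy2]
    ring
  have h1 := (dC.mul dA).unique (((dB.mul dB).const_mul κ).congr_of_eventuallyEq heq)
  have h2 := h.herm_coord (deriv v s) (v s)
  rw [hs, hx1, hx2] at h2
  rw [hx1, hx2] at h1
  simp only [map_mul, map_pow, conj_ofReal, hcκ] at h2
  set A := herm1 (v s) f
  set A' := herm1 (deriv v s) f with hA'
  set B' := herm1 (deriv v s) w with hB'
  set C' := herm1 (deriv v s) e with hC'
  have hcA : conj A ≠ 0 := by simpa using ha
  have h3 : C' = 2 * κ * x * B' - κ * x ^ 2 * A' := by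
    apply mul_right_cancel₀ ha
    linear_combination h1
  have h4 : conj A * x * (2 * κ + 1) * (B' - x * A') = 0 := by
    rw [h3] at h2
    linear_combination -h2
  have h5 : (2 * κ + 1) ≠ 0 := by
    rw [hκ]
    ring_nf
    simpa using hτ
  have h6 : B' = x * A' := sub_eq_zero.1
    ((mul_eq_zero.1 h4).resolve_left (mul_ne_zero (mul_ne_zero hcA hx) h5))
  have h7 : A • deriv v s = A' • v s := by
    apply h.ext_coord
    · rw [herm1_smul_left, herm1_smul_left, ← hC', hx2, h3, h6]
      ring
    · rw [herm1_smul_left, herm1_smul_left, ← hA', mul_comm]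
    · rw [herm1_smul_left, herm1_smul_left, ← hB', hx1, h6]
      ring
  have h8 := LinearIndependent.pair_iff.1 (hK.regular s) A' (-A) (by
    rw [neg_smul, h7, add_neg_cancel])
  exact ha (neg_eq_zero.1 h8.2)

end InvKnot

/-! ### Real coordinates and the ℝ-circle -/

/-- The inclusion of `ℝ³` in `ℂ³`. -/
def toC (x : Fin 3 → ℝ) : C3 := fun i => (x i : ℂ)

lemma toC_add (x y : Fin 3 → ℝ) : toC (x + y) = toC x + toC y := by
  ext i; simp [toC]

lemma toC_smul (r : ℝ) (x : Fin 3 → ℝ) : toC (r • x) = (r : ℂ) • toC x := by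
  ext i; simp [toC]

lemma herm1_toC (x y : Fin 3 → ℝ) : conj (herm1 (toC x) (toC y)) = herm1 (toC x) (toC y) := by
  simp [herm1, toC]

/-- Three pairwise non-orthogonal null vectors of `ℝ³` span it. -/
lemma span_null {x : Fin 3 → Fin 3 → ℝ} (hnull : ∀ i, herm1 (toC (x i)) (toC (x i)) = 0)
    (hne : ∀ i j, i ≠ j → herm1 (toC (x i)) (toC (x j)) ≠ 0) :
    Submodule.span ℝ (Set.range x) = ⊤ := by
  refine LinearIndependent.span_eq_top_of_card_eq_finrank' ?_ (by simp)
  rw [Fintype.linearIndependent_iff]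
  intro a ha
  have h1 : toC (∑ i, a i • x i) = 0 := by
    rw [ha]; ext i; simp [toC]
  rw [Fin.sum_univ_three, toC_add, toC_add, toC_smul, toC_smul, toC_smul] at h1
  have h2 := fun j => congrArg (fun z => herm1 z (toC (x j))) h1
  simp only [herm1_add_left, herm1_smul_left, herm1_zero_left] at h2
  have e0 := h2 0
  have e1 := h2 1
  have e2 := h2 2
  have s10 : herm1 (toC (x 1)) (toC (x 0)) = herm1 (toC (x 0)) (toC (x 1)) := by
    rw [← herm1_conj, herm1_toC]
  have s20 : herm1 (toC (x 2)) (toC (x 0)) = herm1 (toC (x 0)) (toC (x 2)) := by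
    rw [← herm1_conj, herm1_toC]
  have s21 : herm1 (toC (x 2)) (toC (x 1)) = herm1 (toC (x 1)) (toC (x 2)) := by
    rw [← herm1_conj, herm1_toC]
  rw [hnull, s10, s20] at e0
  rw [hnull, s21] at e1
  rw [hnull] at e2
  have p := hne 0 1 (by decide)
  have q := hne 0 2 (by decide)
  have r := hne 1 2 (by decide)
  set P := herm1 (toC (x 0)) (toC (x 1))
  set Q := herm1 (toC (x 0)) (toC (x 2))
  set R := herm1 (toC (x 1)) (toC (x 2))
  have a0 : (a 0 : ℂ) = 0 := by
    have : (a 0 : ℂ) * (2 * P * Q) = 0 := by linear_combination Q * e1 + P * e2 - R * e0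
    exact (mul_eq_zero.1 this).resolve_right (by simp [p, q])
  rw [a0] at e1 e2
  have a2 : (a 2 : ℂ) = 0 := by
    have : (a 2 : ℂ) * R = 0 := by linear_combination e1
    exact (mul_eq_zero.1 this).resolve_right r
  have a1 : (a 1 : ℂ) = 0 := by
    have : (a 1 : ℂ) * R = 0 := by linear_combination e2
    exact (mul_eq_zero.1 this).resolve_right r
  intro i
  fin_cases i
  · exact_mod_cast a0
  · exact_mod_cast a1
  · exact_mod_cast a2

/-- An element of `U(2,1)` which sends three points of the canonical ℝ-circle to points of the
canonical ℝ-circle is a complex multiple of a real matrix. The multipliers `c i` have a common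
phase because all the products `⟨x i, x j⟩` are real and preserved. -/
lemma mapSet_RCircle_subset {M : Matrix (Fin 3) (Fin 3) ℂ} (hM : M ∈ U21)
    {x y : Fin 3 → Fin 3 → ℝ} {c : Fin 3 → ℂ} (hc : ∀ i, c i ≠ 0)
    (hnull : ∀ i, herm1 (toC (x i)) (toC (x i)) = 0)
    (hne : ∀ i j, i ≠ j → herm1 (toC (x i)) (toC (x j)) ≠ 0)
    (hxy : ∀ i, M.mulVec (toC (x i)) = c i • toC (y i)) :
    mapSet M canonicalRCircle ⊆ canonicalRCircle := by
  have hreal : ∀ i, ∃ r : ℝ, c i = r * c 0 := by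
    intro i
    rcases eq_or_ne i 0 with rfl | hi
    · exact ⟨1, by simp⟩
    have h1 := hM.2 (toC (x i)) (toC (x 0))
    rw [hxy, hxy, herm1_smul_left, herm1_smul_right] at h1
    have h2 := hne i 0 hi
    have hY : herm1 (toC (y i)) (toC (y 0)) ≠ 0 := by
      intro h0
      rw [h0] at h1
      exact h2 (by rw [← h1]; ring)
    have h3 := congrArg conj h1
    rw [herm1_toC, ← h1] at h3
    simp only [map_mul, conj_conj, herm1_toC] at h3
    have h4 : conj (c i) * c 0 = c i * conj (c 0) := by
      apply mul_right_cancel₀ hY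
      linear_combination h3
    have hc0 := hc 0
    have hcc0 : conj (c 0) ≠ 0 := by simpa using hc0
    obtain ⟨r, hr⟩ := Complex.conj_eq_iff_real.1 (show conj (c i / c 0) = c i / c 0 by
      rw [map_div₀]
      field_simp
      linear_combination h4)
    exact ⟨r, by rw [← hr, div_mul_cancel₀ _ hc0]⟩
  have hall : ∀ u : Fin 3 → ℝ, ∃ u' : Fin 3 → ℝ, M.mulVec (toC u) = c 0 • toC u' := by
    intro u
    have hu : u ∈ Submodule.span ℝ (Set.range x) := by
      rw [span_null hnull hne]
      trivial
    induction hu using Submodule.span_induction with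
    | mem u hu =>
      obtain ⟨i, rfl⟩ := hu
      obtain ⟨r, hr⟩ := hreal i
      exact ⟨r • y i, by rw [hxy, hr, toC_smul, smul_smul, mul_comm]⟩
    | zero =>
      have : toC 0 = 0 := by ext i; simp [toC]
      exact ⟨0, by rw [this, mulVec_zero, smul_zero]⟩
    | add a b _ _ ha hb =>
      obtain ⟨a', ha⟩ := ha
      obtain ⟨b', hb⟩ := hb
      exact ⟨a' + b', by rw [toC_add, toC_add, mulVec_add, ha, hb, smul_add]⟩
    | smul r a _ ha =>
      obtain ⟨a', ha⟩ := ha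
      exact ⟨r • a', by rw [toC_smul, toC_smul, mulVec_smul, ha, smul_comm]⟩
  rintro p ⟨z, hz, ⟨u, hu0, hu, hzu⟩, rfl⟩
  obtain ⟨d, hd, rfl⟩ := (projOf_eq_iff hz hu0).1 hzu
  obtain ⟨u', hu'⟩ := hall u
  have hne' := U21_mulVec_ne hM.1 hu0
  change M.mulVec (toC u) ≠ 0 at hne'
  have hn' := hM.2 (toC u) (toC u)
  rw [hu', herm1_smul_left, herm1_smul_right] at hn'
  rw [hu'] at hne'
  refine ⟨u', right_ne_zero_of_smul hne', ?_, ?_⟩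
  · have h1 : c 0 * (conj (c 0) * herm1 (toC u') (toC u')) = 0 := by rw [hn']; exact hu
    have h2 := (mul_eq_zero.1 h1).resolve_left (hc 0)
    exact (mul_eq_zero.1 h2).resolve_left (by simpa using hc 0)
  · change projOf (M.mulVec (d • toC u)) = projOf (toC u')
    rw [mulVec_smul, hu', projOf_smul hd, projOf_smul (hc 0)]

/-- If all points of an invariant knot are real in the coordinates given by `h`, then `G` is
conjugate by `h` into the stabilizer of the canonical ℝ-circle. -/
lemma InvKnot.real_case {G : Set (Matrix (Fin 3) (Fin 3) ℂ)} (hG : IsDiscreteSubgroup G)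
    {v : ℝ → C3} (hK : InvKnot G v) {h : Matrix (Fin 3) (Fin 3) ℂ} (hh : h ∈ U21)
    (H : ∀ t, ∃ (ζ : ℂ) (u : Fin 3 → ℝ), v t = ζ • h.mulVec (toC u)) :
    ∀ g ∈ G, mapSet (h⁻¹ * g * h) canonicalRCircle = canonicalRCircle := by
  choose ζ u hv using H
  have hζ : ∀ t, ζ t ≠ 0 := by
    intro t h0
    apply hK.ne t
    rw [hv, h0, zero_smul]
  have hform : ∀ s t, herm1 (v s) (v t) = ζ s * (conj (ζ t) * herm1 (toC (u s)) (toC (u t))) := by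
    intro s t
    rw [hv s, hv t, herm1_smul_left, herm1_smul_right, hh.2]
  set p : Fin 3 → ℝ := ![0, 1 / 4, 1 / 2] with hp
  have sub : ∀ g ∈ G, mapSet (h⁻¹ * g * h) canonicalRCircle ⊆ canonicalRCircle := by
    intro g hg
    choose s _ d hd hs using fun t => hK.inv g hg t 0
    refine mapSet_RCircle_subset (x := fun i => u (p i)) (y := fun i => u (s (p i)))
      (c := fun i => (ζ (p i))⁻¹ * (d (p i) * ζ (s (p i))))
      (U21_mul (U21_mul (U21_inv hh) (hG.subset hg)) hh) ?_ ?_ ?_ ?_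
    · exact fun i => mul_ne_zero (inv_ne_zero (hζ _)) (mul_ne_zero (hd _) (hζ _))
    · intro i
      have h1 := hK.null (p i)
      rw [hform] at h1
      have h2 := (mul_eq_zero.1 h1).resolve_left (hζ _)
      exact (mul_eq_zero.1 h2).resolve_left (by simpa using hζ _)
    · intro i j hij h0
      have h1 : p i = p j := by
        apply hK.inj
        · fin_cases i <;> fin_cases j <;> norm_num [hp, abs_lt]
        · rw [hform]
          rw [h0, mul_zero, mul_zero]
      apply hij
      revert h1
      fin_cases i <;> fin_cases j <;> norm_num [hp]
    · intro i
      have h1 : toC (u (p i)) = (ζ (p i))⁻¹ • h⁻¹.mulVec (v (p i)) := by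
        rw [hv (p i), mulVec_smul, mulVec_mulVec, nonsing_inv_mul _ hh.1, one_mulVec, smul_smul,
          inv_mul_cancel₀ (hζ _), one_smul]
      have h2 : h.mulVec (toC (u (p i))) = (ζ (p i))⁻¹ • v (p i) := by
        rw [hv (p i), smul_smul, inv_mul_cancel₀ (hζ _), one_smul]
      rw [← mulVec_mulVec, ← mulVec_mulVec, h2, mulVec_smul, mulVec_smul, hs, mulVec_smul,
        hv (s (p i)), mulVec_smul, mulVec_mulVec, nonsing_inv_mul _ hh.1, one_mulVec, smul_smul,
        smul_smul, mul_assoc]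
  intro g hg
  refine mapSet_eq_of_subset ?_ (N := h⁻¹ * g⁻¹ * h) ?_ (sub g hg) (sub _ (hG.inv_mem g hg))
  · rintro p ⟨x, hx, -, rfl⟩
    exact ⟨_, hx, rfl⟩
  · calc h⁻¹ * g * h * (h⁻¹ * g⁻¹ * h) = h⁻¹ * (g * (h * h⁻¹) * g⁻¹) * h := by
          simp only [Matrix.mul_assoc]
      _ = 1 := by
          rw [mul_nonsing_inv _ hh.1, Matrix.mul_one, mul_nonsing_inv _ (hG.subset hg).1,
            Matrix.mul_one, nonsing_inv_mul _ hh.1]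

/-- The lift of a knot whose image is the limit set of `G` is an invariant knot. -/
lemma invKnot_of_regular {G : Set (Matrix (Fin 3) (Fin 3) ℂ)} (hG : IsDiscreteSubgroup G)
    {v₀ : C3} (hv₀ : v₀ ≠ 0) {γ : ℝ → PC2} {v : ℝ → C3} (hγ : IsRegularKnot 2 γ v)
    (hL : limitSet G v₀ = Set.range γ) : InvKnot G v := by
  refine ⟨hG.one_mem, hG.mul_mem, hγ.smooth, hγ.nonzero, hγ.isNull, hγ.regular, ?_, ?_⟩
  · intro s t hst h0
    obtain ⟨c, hc, hv⟩ := null_orth_prop_ne (hγ.isNull s) (hγ.isNull t) (hγ.nonzero s)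
      (hγ.nonzero t) h0
    have h1 : γ s = γ t := by rw [hγ.liftEq, hγ.liftEq, hv, projOf_smul hc]
    have hp : Function.Periodic γ 1 := hγ.periodic
    have hfr : ∀ x, γ (Int.fract x) = γ x := fun x => by
      have := hp.sub_int_mul_eq (x := x) ⌊x⌋
      rwa [mul_one] at this
    have h2 : Int.fract s = Int.fract t :=
      hγ.injOn _ _ (Int.fract_nonneg s) (Int.fract_lt_one s) (Int.fract_nonneg t)
        (Int.fract_lt_one t) (by rw [hfr, hfr, h1])
    obtain ⟨z, hz⟩ := Int.fract_eq_fract.1 h2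
    rw [hz] at hst
    have hz0 : z = 0 := by
      have : |z| < 1 := by exact_mod_cast hst
      exact Int.abs_lt_one_iff.1 this
    rw [hz0] at hz
    simpa [sub_eq_zero] using hz
  · intro g hg t x
    have h1 : projOf (v t) ∈ limitSet G v₀ := by
      rw [hL, ← hγ.liftEq]
      exact ⟨t, rfl⟩
    have h2 := limitSet_invariant hG hv₀ (hγ.nonzero t) h1 hg
    rw [hL] at h2
    obtain ⟨r, hr⟩ := h2
    have hp : Function.Periodic γ 1 := hγ.periodic
    obtain ⟨s, hs, hrs⟩ := hp.exists_mem_Ico one_pos r x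
    refine ⟨s, ⟨hs.1, hs.2.le⟩, ?_⟩
    rw [← projOf_eq_iff (U21_mulVec_ne (hG.subset hg).1 (hγ.nonzero t)) (hγ.nonzero s), ← hr, hrs,
      hγ.liftEq]

/-- The alternative for an invariant knot, once the group contains a loxodromic element. -/
lemma InvKnot.main {G : Set (Matrix (Fin 3) (Fin 3) ℂ)} (hG : IsDiscreteSubgroup G)
    {v : ℝ → C3} (hK : InvKnot G v) {g : Matrix (Fin 3) (Fin 3) ℂ} {e f w : C3} {l m n : ℂ}
    (hg : g ∈ G) (hLox : Lox g e f w l m n) :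
    (∃ w : C3, 0 < (herm1 w w).re ∧ (herm1 w w).im = 0 ∧
        ∀ g ∈ G, mapSet g (chainOf w) = chainOf w) ∨
    (∃ h ∈ U21, ∀ g ∈ G,
        mapSet (h⁻¹ * g * h) canonicalRCircle = canonicalRCircle) := by
  by_cases hT : ∀ g ∈ G, ∀ e f w l m n, Lox g e f w l m n → ∀ σ, herm1 (v σ) e = 0 →
      herm1 (deriv v σ) e = 0
  · obtain ⟨σ, hσ⟩ := hK.attract hg hLox
    obtain ⟨w', τ, hF, H⟩ := hK.tangent_normal hg hLox hσ (hT g hg _ _ _ _ _ _ hLox σ hσ)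
    by_cases hτ : τ = 0
    · right
      refine ⟨NullFrame.frameMat e f w', hF.frameMat_mem, hK.real_case hG hF.frameMat_mem ?_⟩
      intro t
      by_cases ha : herm1 (v t) f = 0
      · obtain ⟨c, -, hc⟩ := hK.prop_of_zero hF.swap ha
        obtain ⟨u, hu⟩ := NullFrame.real_comb e f w' 0 0 1
        refine ⟨c, u, ?_⟩
        change _ = c • (NullFrame.frameMat e f w').mulVec (fun i => (u i : ℂ))
        rw [← hu, hc]
        simp
      · obtain ⟨x, hx1, hx2⟩ := H t ha
        obtain ⟨u, hu⟩ := NullFrame.real_comb e f w' 1 x (-1 / 2 * x ^ 2)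
        refine ⟨herm1 (v t) f, u, ?_⟩
        change _ = herm1 (v t) f • (NullFrame.frameMat e f w').mulVec (fun i => (u i : ℂ))
        rw [← hu]
        conv_lhs => rw [hF.expand (v t), hx1, hx2, hτ]
        ext i
        simp only [Pi.add_apply, Pi.smul_apply, smul_eq_mul]
        push_cast
        ring
    · left
      refine ⟨w', by rw [hF.ww]; simp, herm1_self_im w', chain_invariant hG hF ?_⟩
      -- attracting fixed points are points of tangency
      have key : ∀ g ∈ G, ∀ e f w l m n, Lox g e f w l m n → herm1 e w' = 0 := by
        intro g₁ hg₁ e₁ f₁ w₁ l₁ m₁ n₁ h₁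
        obtain ⟨s, hs⟩ := hK.attract hg₁ h₁
        have hd := hT g₁ hg₁ _ _ _ _ _ _ h₁ s hs
        obtain ⟨c, hc, hv⟩ := hK.prop_of_zero h₁.frame hs
        have h2 := hK.tangent_point hF hτ H (s := s) (by
          rw [hv, herm1_smul_right, hd, mul_zero])
        rw [hv, herm1_smul_left] at h2
        exact (mul_eq_zero.1 h2).resolve_left hc
      intro k hk
      have hkU := hG.subset hk
      have hki := hG.inv_mem k hk
      exact ⟨key _ (hG.mul_mem _ (hG.mul_mem _ hk _ hg) _ hki) _ _ _ _ _ _ (hLox.conjugate hkU),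
        key _ (hG.mul_mem _ (hG.mul_mem _ hk _ (hG.inv_mem g hg)) _ hki) _ _ _ _ _ _
          (hLox.inv.conjugate hkU)⟩
  · left
    push Not at hT
    obtain ⟨g₁, hg₁, e₁, f₁, w₁, l₁, m₁, n₁, h₁, σ, hσ, hd⟩ := hT
    have hw := hK.transverse hg₁ h₁ hσ hd
    have hF := h₁.frame
    refine ⟨w₁, by rw [hF.ww]; simp, herm1_self_im w₁, chain_invariant hG hF fun k hk => ?_⟩
    exact ⟨hK.image_zero hF hw ⟨σ, hσ⟩ hk,
      hK.image_zero hF.swap hw (hK.attract (hG.inv_mem _ hg₁) h₁.inv) hk⟩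

/-- If `G` is a discrete subgroup of `U(2,1)` whose limit set
equals the image of a `C²` regular knot in `∂H²_ℂ`, then either some chain is
invariant under the projective action of every element of `G`, or `G` is
conjugate (within `U(2,1)`) to a group whose elements all map the canonical
ℝ-circle onto itself. -/
theorem limitSet_knot_invariant_chain_or_conjugate_RCircle
    (G : Set (Matrix (Fin 3) (Fin 3) ℂ)) (hG : IsDiscreteSubgroup G)
    (v₀ : C3) (hv₀re : (herm1 v₀ v₀).re < 0) (hv₀im : (herm1 v₀ v₀).im = 0)
    (γ : ℝ → PC2) (v : ℝ → C3) (hγ : IsRegularKnot 2 γ v)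
    (hL : limitSet G v₀ = Set.range γ) :
    (∃ w : C3, 0 < (herm1 w w).re ∧ (herm1 w w).im = 0 ∧
        ∀ g ∈ G, mapSet g (chainOf w) = chainOf w) ∨
    (∃ h ∈ U21, ∀ g ∈ G,
        mapSet (h⁻¹ * g * h) canonicalRCircle = canonicalRCircle) := by
  have hv₀ : v₀ ≠ 0 := by
    rintro rfl
    simp [herm1] at hv₀re
  have hK := invKnot_of_regular hG hv₀ hγ hL
  have hmem : ∀ t, projOf (v t) ∈ limitSet G v₀ := fun t => by
    rw [hL, ← hγ.liftEq]
    exact ⟨t, rfl⟩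
  have hne : herm1 (v 0) (v (1 / 2)) ≠ 0 := by
    intro h0
    have := hK.inj 0 (1 / 2) (by norm_num [abs_lt]) h0
    norm_num at this
  obtain ⟨g, hg, l, hl, e, he0, he⟩ := exists_eigenvector_one_lt hG hv₀re (hK.ne _) (hK.ne _)
    (hK.null _) (hK.null _) hne (hmem _) (hmem _)
  obtain ⟨e, f, w, m, n, hLox⟩ := exists_lox (hG.subset hg) hl he0 he
  exact hK.main hG hg hLox
end
end
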